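/- arXiv:2005.10032 — 5 statements merged into one kernel-verified Lean document; each statement's English description precedes it below -/
import Mathlib

section
/- Let p ∈ [1,∞] and let f(z) = Σ_α a_α z^α + Σ_α conj(b_α) conj(z)^α be a pluriharmonic function from 𝔹_{ℓ_pⁿ} into the unit disk 𝔻. Then for every multi-index α with |α| ≥ 1, |a_α| + |b_α| ≤ (4/π) · ( |α|^{|α|} / α^α )^{1/p} (with the convention that the exponent 1/p equals 0 when p = ∞). -/
open scoped BigOperators ENNReal

open scoped Classical in
/-- The `p`-norm on `ℂ^n` for `p ∈ [1,∞]` (`ℝ≥0∞`-valued exponent):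
the sup norm if `p = ∞`, and `(∑ ‖z j‖^p)^(1/p)` otherwise. -/
noncomputable def pnormE {n : ℕ} (p : ℝ≥0∞) (z : Fin n → ℂ) : ℝ :=
  if p = ∞ then ⨆ j, ‖z j‖ else (∑ j, ‖z j‖ ^ p.toReal) ^ (1 / p.toReal)

open MeasureTheory

/-- The character `x ↦ ∑ γ i • x i`. -/
noncomputable def torusHom {n : ℕ} (γ : Fin n → ℤ) : (Fin n → UnitAddCircle) →+ UnitAddCircle :=
  ∑ i, γ i • Pi.evalAddMonoidHom (fun _ : Fin n => UnitAddCircle) i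

lemma torusHom_apply {n : ℕ} (γ : Fin n → ℤ) (x : Fin n → UnitAddCircle) :
    torusHom γ x = ∑ i, γ i • x i := by
  simp [torusHom]

lemma torusHom_continuous {n : ℕ} (γ : Fin n → ℤ) : Continuous (torusHom γ) := by
  have : (torusHom γ : (Fin n → UnitAddCircle) → UnitAddCircle) = fun x => ∑ i, γ i • x i := by
    ext x; exact torusHom_apply γ x
  rw [this]
  fun_prop

lemma torusHom_surjective {n : ℕ} (γ : Fin n → ℤ) (hγ : γ ≠ 0) :
    Function.Surjective (torusHom γ) := by
  obtain ⟨i, hi⟩ := Function.ne_iff.mp hγ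
  intro y
  obtain ⟨t, rfl⟩ := QuotientAddGroup.mk_surjective y
  refine ⟨Pi.single i (((t / γ i : ℝ)) : UnitAddCircle), ?_⟩
  rw [torusHom_apply, Finset.sum_eq_single i]
  · rw [Pi.single_eq_same, ← AddCircle.coe_zsmul, zsmul_eq_mul, mul_div_cancel₀]
    exact_mod_cast hi
  · intro j _ hj
    simp [Pi.single_eq_of_ne hj]
  · simp

lemma torus_measure_univ (n : ℕ) :
    (volume : Measure (Fin n → UnitAddCircle)) Set.univ = 1 := by
  rw [volume_pi, Measure.pi_univ]
  simp

lemma torusHom_mp {n : ℕ} (γ : Fin n → ℤ) (hγ : γ ≠ 0) :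
    MeasurePreserving (torusHom γ) volume volume := by
  apply AddMonoidHom.measurePreserving (torusHom_continuous γ) (torusHom_surjective γ hγ)
  rw [torus_measure_univ, UnitAddCircle.measure_univ]

/-- the character as a complex-valued function -/
noncomputable def chr {n : ℕ} (γ : Fin n → ℤ) (x : Fin n → UnitAddCircle) : ℂ :=
  (AddCircle.toCircle (torusHom γ x) : ℂ)

lemma chr_continuous {n : ℕ} (γ : Fin n → ℤ) : Continuous (chr γ) := by
  unfold chr
  exact continuous_subtype_val.comp (AddCircle.continuous_toCircle.comp (torusHom_continuous γ))

lemma chr_norm {n : ℕ} (γ : Fin n → ℤ) (x) : ‖chr γ x‖ = 1 := by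
  exact Circle.norm_coe _

lemma chr_add {n : ℕ} (γ δ : Fin n → ℤ) (x) : chr (γ + δ) x = chr γ x * chr δ x := by
  unfold chr
  rw [← Circle.coe_mul, ← AddCircle.toCircle_add, torusHom_apply, torusHom_apply, torusHom_apply,
    ← Finset.sum_add_distrib]
  simp [add_smul]

lemma chr_neg {n : ℕ} (γ : Fin n → ℤ) (x) : chr (-γ) x = (starRingEnd ℂ) (chr γ x) := by
  unfold chr
  rw [← Circle.coe_inv_eq_conj, ← AddCircle.toCircle_neg, torusHom_apply, torusHom_apply,
    ← Finset.sum_neg_distrib]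
  simp

lemma torus_integral_comp {E : Type*} [NormedAddCommGroup E] [NormedSpace ℝ E] {n : ℕ}
    (γ : Fin n → ℤ) (hγ : γ ≠ 0) (F : UnitAddCircle → E) (hF : Continuous F) :
    ∫ x, F (torusHom γ x) = ∫ y, F y := by
  have h := torusHom_mp γ hγ
  rw [← h.map_eq, integral_map h.measurable.aemeasurable]
  rw [h.map_eq]
  exact hF.aestronglyMeasurable

lemma chr_integral {n : ℕ} (γ : Fin n → ℤ) :
    ∫ x, chr γ x = if γ = 0 then 1 else 0 := by
  split_ifs with h
  · subst h
    have : ∀ x : Fin n → UnitAddCircle, chr 0 x = 1 := by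
      intro x; simp [chr, torusHom_apply]
    simp only [this, integral_const, Measure.real, torus_measure_univ]
    simp
  · unfold chr
    rw [torus_integral_comp γ h (fun y => (AddCircle.toCircle y : ℂ))
      (continuous_subtype_val.comp AddCircle.continuous_toCircle)]
    have h2 := fun x => fourier_add_half_inv_index (T := (1 : ℝ)) (n := 1) one_ne_zero
      zero_lt_one x
    simp only [fourier_one] at h2
    exact integral_eq_zero_of_add_right_eq_neg h2

lemma circle_integral_bound (u v : ℂ) (hu : ‖u‖ = 1) (hv : ‖v‖ = 1) :
    ∫ y : UnitAddCircle, ‖u * (starRingEnd ℂ) (AddCircle.toCircle y : ℂ) + v * AddCircle.toCircle y‖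
      = 4 / Real.pi := by
  obtain ⟨s, rfl⟩ := (Complex.norm_eq_one_iff u).mp hu
  obtain ⟨t, rfl⟩ := (Complex.norm_eq_one_iff v).mp hv
  set c : ℝ := (t - s) / 2 with hc
  rw [← UnitAddCircle.intervalIntegral_preimage 0]
  have h1 : ∀ x : ℝ, ‖Complex.exp (s * Complex.I) *
      (starRingEnd ℂ) (AddCircle.toCircle (x : UnitAddCircle) : ℂ) +
      Complex.exp (t * Complex.I) * AddCircle.toCircle (x : UnitAddCircle)‖ =
      2 * |Real.cos (2 * Real.pi * x + c)| := by
    intro x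
    have e1 : ((AddCircle.toCircle (x : UnitAddCircle) : Circle) : ℂ) =
        Complex.exp ((2 * Real.pi * x : ℝ) * Complex.I) := by
      rw [AddCircle.toCircle_apply_mk, Circle.coe_exp]
      simp
    rw [e1, ← Complex.exp_conj]
    have e2 : Complex.exp (s * Complex.I) *
        Complex.exp ((starRingEnd ℂ) ((2 * Real.pi * x : ℝ) * Complex.I)) +
        Complex.exp (t * Complex.I) * Complex.exp ((2 * Real.pi * x : ℝ) * Complex.I) =
        Complex.exp (((s + t) / 2 : ℝ) * Complex.I) *
          ((2 * Real.cos (2 * Real.pi * x + c) : ℝ) : ℂ) := by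
      rw [Complex.ofReal_mul 2, Complex.ofReal_cos]
      have := Complex.two_cos ((2 * Real.pi * x + c : ℝ) : ℂ)
      rw [Complex.ofReal_ofNat, this, mul_add, ← Complex.exp_add, ← Complex.exp_add,
        ← Complex.exp_add, ← Complex.exp_add, map_mul, Complex.conj_ofReal, Complex.conj_I, add_comm]
      congr 2 <;> (rw [hc]; push_cast; ring)
    rw [e2, norm_mul, Complex.norm_exp_ofReal_mul_I, one_mul, Complex.norm_real, Real.norm_eq_abs,
      abs_mul, abs_two]
  simp only [h1]
  rw [intervalIntegral.integral_const_mul,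
    intervalIntegral.integral_comp_mul_add (fun y => |Real.cos y|)
      (by positivity : (2 * Real.pi : ℝ) ≠ 0) c]
  have hper : Function.Periodic (fun y => |Real.cos y|) Real.pi := by
    intro y; simp [Real.cos_add_pi]
  have hint : ∀ a b : ℝ, IntervalIntegrable (fun y => |Real.cos y|) volume a b := fun a b =>
    (Real.continuous_cos.abs).intervalIntegrable a b
  have h3 : ∀ w : ℝ, ∫ y in w..w + Real.pi, |Real.cos y| = 2 := by
    intro w
    rw [hper.intervalIntegral_add_eq w (-(Real.pi / 2))]
    have : ∫ y in (-(Real.pi / 2))..(-(Real.pi / 2) + Real.pi), |Real.cos y| =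
        ∫ y in (-(Real.pi / 2))..(-(Real.pi / 2) + Real.pi), Real.cos y := by
      apply intervalIntegral.integral_congr
      intro y hy
      rw [Set.uIcc_of_le (by linarith [Real.pi_pos])] at hy
      exact abs_of_nonneg (Real.cos_nonneg_of_mem_Icc ⟨hy.1, by linarith [hy.2]⟩)
    rw [this, integral_cos]
    have : -(Real.pi / 2) + Real.pi = Real.pi / 2 := by ring
    rw [this, Real.sin_neg, Real.sin_pi_div_two]; norm_num
  have h4 : ∫ y in (2 * Real.pi * 0 + c)..(2 * Real.pi * (0 + 1) + c), |Real.cos y| = 4 := by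
    rw [← intervalIntegral.integral_add_adjacent_intervals (hint _ (c + Real.pi)) (hint _ _)]
    have e1 : 2 * Real.pi * 0 + c = c := by ring
    have e2 : 2 * Real.pi * (0 + 1) + c = (c + Real.pi) + Real.pi := by ring
    rw [e1, e2, h3, h3]; norm_num
  rw [h4, smul_eq_mul]
  field_simp

/-- Fourier coefficients of a power series on a torus. -/
lemma torus_coeff {n : ℕ} (r : Fin n → ℝ) (hr : ∀ k, 0 ≤ r k)
    (h : (Fin n → ℂ) → ℂ) (a : (Fin n → ℕ) → ℂ)
    (hha : ∀ z : Fin n → ℂ, (∀ k, ‖z k‖ = r k) →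
      HasSum (fun α : Fin n → ℕ => a α * ∏ k, z k ^ α k) (h z)) :
    Continuous (fun x : Fin n → UnitAddCircle => h (fun k => r k * AddCircle.toCircle (x k))) ∧
    ∀ γ : Fin n → ℤ, HasSum (fun β : Fin n → ℕ => a β * (∏ k, (r k : ℂ) ^ β k) *
        (if (fun k => (β k : ℤ)) + γ = 0 then 1 else 0))
      (∫ x : Fin n → UnitAddCircle, h (fun k => r k * AddCircle.toCircle (x k)) * chr γ x) := by
  have hz : ∀ (x : Fin n → UnitAddCircle) k, ‖(r k : ℂ) * (AddCircle.toCircle (x k) : ℂ)‖ = r k := by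
    intro x k
    rw [norm_mul, Circle.norm_coe, mul_one, Complex.norm_real, Real.norm_of_nonneg (hr k)]
  have hmon : ∀ (x : Fin n → UnitAddCircle) (β : Fin n → ℕ),
      a β * ∏ k, ((r k : ℂ) * (AddCircle.toCircle (x k) : ℂ)) ^ β k =
      a β * (∏ k, (r k : ℂ) ^ β k) * chr (fun k => (β k : ℤ)) x := by
    intro x β
    have : chr (fun k => (β k : ℤ)) x = ∏ k, (AddCircle.toCircle (x k) : ℂ) ^ β k := by
      unfold chr
      rw [torusHom_apply]
      have : ∀ s : Finset (Fin n), ((AddCircle.toCircle (∑ i ∈ s, ((β i : ℤ)) • x i) : Circle) : ℂ) =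
          ∏ k ∈ s, (AddCircle.toCircle (x k) : ℂ) ^ β k := by
        intro s
        induction s using Finset.induction_on with
        | empty => simp
        | insert i s hi ih =>
          rw [Finset.sum_insert hi, Finset.prod_insert hi, AddCircle.toCircle_add, Circle.coe_mul,
            ih, AddCircle.toCircle_zsmul]
          simp
      exact this _
    rw [this, mul_assoc, ← Finset.prod_mul_distrib]
    simp only [mul_pow]
  have hS : Summable (fun β : Fin n → ℕ => ‖a β * (∏ k, (r k : ℂ) ^ β k)‖) := by
    have := (hha (fun k => (r k : ℂ) * (AddCircle.toCircle (0 : UnitAddCircle) : ℂ))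
      (hz 0)).summable.norm
    simpa using this
  have hsum : ∀ x : Fin n → UnitAddCircle, HasSum
      (fun β : Fin n → ℕ => a β * (∏ k, (r k : ℂ) ^ β k) * chr (fun k => (β k : ℤ)) x)
      (h (fun k => r k * AddCircle.toCircle (x k))) := by
    intro x
    have := hha _ (hz x)
    simpa only [hmon] using this
  refine ⟨?_, ?_⟩
  · have : (fun x : Fin n → UnitAddCircle => h (fun k => r k * AddCircle.toCircle (x k))) =
        fun x => ∑' β : Fin n → ℕ, a β * (∏ k, (r k : ℂ) ^ β k) * chr (fun k => (β k : ℤ)) x := by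
      ext x; exact (hsum x).tsum_eq.symm
    rw [this]
    refine continuous_tsum (fun β => continuous_const.mul (chr_continuous _)) hS ?_
    intro β x
    rw [norm_mul, chr_norm, mul_one]
  · intro γ
    have key := hasSum_integral_of_summable_integral_norm
      (μ := (volume : Measure (Fin n → UnitAddCircle)))
      (F := fun (β : Fin n → ℕ) x => a β * (∏ k, (r k : ℂ) ^ β k) *
        chr ((fun k => (β k : ℤ)) + γ) x)
      (fun β => (continuous_const.mul (chr_continuous _)).integrable_of_hasCompactSupport
        (HasCompactSupport.of_compactSpace _))
      (by
        simp only [norm_mul _ (chr _ _), chr_norm, mul_one, integral_const, Measure.real,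
          torus_measure_univ]
        simpa using hS)
    simp only [integral_const_mul, chr_integral] at key
    have e : ∀ x : Fin n → UnitAddCircle,
        ∑' β : Fin n → ℕ, a β * (∏ k, (r k : ℂ) ^ β k) * chr ((fun k => (β k : ℤ)) + γ) x =
        h (fun k => r k * AddCircle.toCircle (x k)) * chr γ x := by
      intro x
      simp only [chr_add, ← mul_assoc]
      rw [tsum_mul_right, (hsum x).tsum_eq]
    simp only [e] at key
    exact key

lemma torus_bound {n : ℕ} (r : Fin n → ℝ) (hr : ∀ k, 0 ≤ r k)
    (f h g : (Fin n → ℂ) → ℂ) (a b : (Fin n → ℕ) → ℂ)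
    (hfd : ∀ z : Fin n → ℂ, (∀ k, ‖z k‖ = r k) → f z = h z + (starRingEnd ℂ) (g z))
    (hha : ∀ z : Fin n → ℂ, (∀ k, ‖z k‖ = r k) →
      HasSum (fun α : Fin n → ℕ => a α * ∏ k, z k ^ α k) (h z))
    (hgb : ∀ z : Fin n → ℂ, (∀ k, ‖z k‖ = r k) →
      HasSum (fun α : Fin n → ℕ => b α * ∏ k, z k ^ α k) (g z))
    (hmap : ∀ z : Fin n → ℂ, (∀ k, ‖z k‖ = r k) → ‖f z‖ ≤ 1)
    (α : Fin n → ℕ) (hα : α ≠ 0) :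
    (‖a α‖ + ‖b α‖) * ∏ k, r k ^ α k ≤ 4 / Real.pi := by
  have hz : ∀ (x : Fin n → UnitAddCircle) k, ‖(r k : ℂ) * (AddCircle.toCircle (x k) : ℂ)‖ = r k := by
    intro x k
    rw [norm_mul, Circle.norm_coe, mul_one, Complex.norm_real, Real.norm_of_nonneg (hr k)]
  set γ : Fin n → ℤ := fun k => (α k : ℤ) with hγ
  have hγ0 : γ ≠ 0 := by
    intro h0
    apply hα
    ext k
    have := congrFun h0 k
    simpa [hγ] using this
  set ρ : ℂ := ∏ k, (r k : ℂ) ^ α k with hρ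
  have pos : ∀ c : (Fin n → ℕ) → ℂ, ∀ I : ℂ,
      HasSum (fun β : Fin n → ℕ => c β * (∏ k, (r k : ℂ) ^ β k) *
        (if (fun k => (β k : ℤ)) + γ = 0 then 1 else 0)) I → I = 0 := by
    intro c I hI
    have : ∀ β : Fin n → ℕ, ¬ ((fun k => (β k : ℤ)) + γ = 0) := by
      intro β hβ
      apply hα
      ext k
      have := congrFun hβ k
      simp only [hγ, Pi.add_apply, Pi.zero_apply] at this ⊢
      omega
    simp only [this, if_false, mul_zero] at hI
    exact hI.unique hasSum_zero
  have neg : ∀ c : (Fin n → ℕ) → ℂ, ∀ I : ℂ,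
      HasSum (fun β : Fin n → ℕ => c β * (∏ k, (r k : ℂ) ^ β k) *
        (if (fun k => (β k : ℤ)) + -γ = 0 then 1 else 0)) I → I = c α * ρ := by
    intro c I hI
    have h1 := hasSum_single (f := fun β : Fin n → ℕ => c β * (∏ k, (r k : ℂ) ^ β k) *
        (if (fun k => (β k : ℤ)) + -γ = 0 then 1 else 0)) α (by
      intro β hβ
      rw [if_neg, mul_zero]
      intro h0
      apply hβ
      ext k
      have := congrFun h0 k
      simp only [hγ, Pi.add_apply, Pi.neg_apply, Pi.zero_apply] at this
      omega)
    have h2 := hI.unique h1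
    rw [h2, if_pos, mul_one]
    simp [hγ]
  obtain ⟨hc, hI⟩ := torus_coeff r hr h a hha
  obtain ⟨gc, gI⟩ := torus_coeff r hr g b hgb
  set H : (Fin n → UnitAddCircle) → ℂ := fun x => h (fun k => r k * AddCircle.toCircle (x k)) with hH
  set G : (Fin n → UnitAddCircle) → ℂ := fun x => g (fun k => r k * AddCircle.toCircle (x k)) with hG
  have h1 := pos a _ (hI γ)
  have h2 := neg a _ (hI (-γ))
  have h3 := pos b _ (gI γ)
  have h4 := neg b _ (gI (-γ))
  have int : ∀ F : (Fin n → UnitAddCircle) → ℂ, Continuous F → Integrable F := fun F hF =>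
    hF.integrable_of_hasCompactSupport (HasCompactSupport.of_compactSpace _)
  have h5 : ∫ x, (starRingEnd ℂ) (G x) * chr (-γ) x = 0 := by
    have : ∀ x, (starRingEnd ℂ) (G x) * chr (-γ) x = (starRingEnd ℂ) (G x * chr γ x) := by
      intro x; rw [chr_neg, map_mul]
    simp only [this]
    rw [integral_conj]
    exact (congrArg _ h3).trans (map_zero _)
  have h6 : ∫ x, (starRingEnd ℂ) (G x) * chr γ x = (starRingEnd ℂ) (b α * ρ) := by
    have : ∀ x, (starRingEnd ℂ) (G x) * chr γ x = (starRingEnd ℂ) (G x * chr (-γ) x) := by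
      intro x; rw [chr_neg, map_mul, Complex.conj_conj]
    simp only [this]
    rw [integral_conj]
    exact congrArg _ h4
  have hρ' : ρ = ((∏ k, r k ^ α k : ℝ) : ℂ) := by simp [hρ]
  have hun : ∀ w : ℂ, ∃ u : ℂ, ‖u‖ = 1 ∧ u * w = ‖w‖ := by
    intro w
    refine ⟨Complex.exp ((-w.arg : ℝ) * Complex.I), Complex.norm_exp_ofReal_mul_I _, ?_⟩
    conv_lhs => rw [← Complex.norm_mul_exp_arg_mul_I w]
    rw [mul_left_comm, ← Complex.exp_add]
    simp
  obtain ⟨u, hu, hua⟩ := hun (a α)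
  obtain ⟨v, hv, hvb⟩ := hun ((starRingEnd ℂ) (b α))
  have total : ∫ x, (H x + (starRingEnd ℂ) (G x)) * (u * chr (-γ) x + v * chr γ x) =
      (((‖a α‖ + ‖b α‖) * ∏ k, r k ^ α k : ℝ) : ℂ) := by
    have cn := chr_continuous (-γ)
    have cp := chr_continuous γ
    have gc' : Continuous (fun x => (starRingEnd ℂ) (G x)) := Complex.continuous_conj.comp gc
    have e : ∀ x, (H x + (starRingEnd ℂ) (G x)) * (u * chr (-γ) x + v * chr γ x) =
      (u * (H x * chr (-γ) x) + v * (H x * chr γ x)) +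
      (u * ((starRingEnd ℂ) (G x) * chr (-γ) x) + v * ((starRingEnd ℂ) (G x) * chr γ x)) := by
      intro x; ring
    simp only [e]
    rw [integral_add (int _ (by fun_prop)) (int _ (by fun_prop)),
      integral_add (int _ (by fun_prop)) (int _ (by fun_prop)),
      integral_add (int _ (by fun_prop)) (int _ (by fun_prop)),
      integral_const_mul, integral_const_mul, integral_const_mul, integral_const_mul,
      h1, h2, h5, h6, map_mul, hρ', Complex.conj_ofReal]
    rw [RCLike.norm_conj] at hvb
    rw [mul_zero, mul_zero, add_zero, zero_add, ← mul_assoc, ← mul_assoc, hua, hvb]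
    push_cast
    ring
  have bd : ‖∫ x, (H x + (starRingEnd ℂ) (G x)) * (u * chr (-γ) x + v * chr γ x)‖ ≤
      ∫ x, ‖u * chr (-γ) x + v * chr γ x‖ := by
    apply norm_integral_le_of_norm_le
    · have cn := chr_continuous (-γ)
      have cp := chr_continuous γ
      exact (int _ (by fun_prop)).norm
    · filter_upwards with x
      rw [norm_mul]
      have h1 := hmap _ (hz x)
      rw [hfd _ (hz x)] at h1
      exact mul_le_of_le_one_left (norm_nonneg _) h1
  have val : ∫ x : Fin n → UnitAddCircle, ‖u * chr (-γ) x + v * chr γ x‖ = 4 / Real.pi := by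
    rw [← circle_integral_bound u v hu hv]
    simp only [chr_neg]
    have ct : Continuous (fun y : UnitAddCircle => (AddCircle.toCircle y : ℂ)) :=
      continuous_subtype_val.comp AddCircle.continuous_toCircle
    have ct' := Complex.continuous_conj.comp ct
    exact torus_integral_comp γ hγ0 (fun y : UnitAddCircle =>
      ‖u * (starRingEnd ℂ) (AddCircle.toCircle y : ℂ) + v * AddCircle.toCircle y‖)
      ((continuous_const.mul ct').add (continuous_const.mul ct)).norm
  rw [total, val, Complex.norm_real] at bd
  exact (le_abs_self _).trans bd

theorem stmt6 (n : ℕ) (hn : 1 ≤ n) (p : ℝ≥0∞) (hp : 1 ≤ p)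
    (f h g : (Fin n → ℂ) → ℂ) (a b : (Fin n → ℕ) → ℂ) (hb0 : b 0 = 0)
    (hh : DifferentiableOn ℂ h {z | pnormE p z < 1})
    (hg : DifferentiableOn ℂ g {z | pnormE p z < 1})
    (hg0 : g 0 = 0)
    (hfd : ∀ z : Fin n → ℂ, pnormE p z < 1 → f z = h z + (starRingEnd ℂ) (g z))
    (hha : ∀ z : Fin n → ℂ, pnormE p z < 1 →
      HasSum (fun α : Fin n → ℕ => a α * ∏ k, z k ^ α k) (h z))
    (hgb : ∀ z : Fin n → ℂ, pnormE p z < 1 →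
      HasSum (fun α : Fin n → ℕ => b α * ∏ k, z k ^ α k) (g z))
    (hmap : ∀ z : Fin n → ℂ, pnormE p z < 1 → ‖f z‖ < 1)
    (α : Fin n → ℕ) (hα : 1 ≤ ∑ k, α k) :
    ‖a α‖ + ‖b α‖ ≤ (4 / Real.pi) *
      (((((∑ k, α k : ℕ) : ℝ) ^ (∑ k, α k)) / ∏ k, ((α k : ℝ) ^ (α k))) ^ (p.toReal)⁻¹) := by
  have hpt : p ≠ ∞ → 1 ≤ p.toReal := fun h => by
    have := ENNReal.toReal_mono h hp
    simpa using this
  obtain ⟨k0, hk0⟩ : ∃ k, α k ≠ 0 := by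
    by_contra hcon
    push Not at hcon
    simp [hcon] at hα
  haveI : Nonempty (Fin n) := ⟨k0⟩
  set m : ℕ := ∑ k, α k with hm
  have hmpos : (0 : ℝ) < m := by exact_mod_cast hα
  set q : ℝ := (p.toReal)⁻¹ with hq
  set Q : ℝ := ∏ k, ((α k : ℝ) ^ (α k)) with hQ
  have hQpos : 0 < Q := by
    apply Finset.prod_pos
    intro k _
    rcases Nat.eq_zero_or_pos (α k) with h0 | h0
    · simp [h0]
    · have : (0 : ℝ) < α k := by exact_mod_cast h0
      positivity
  -- the key estimate at radius s
  have key : ∀ s : ℝ, 0 < s → s < 1 →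
      (‖a α‖ + ‖b α‖) * (s ^ m * (Q / (m : ℝ) ^ m) ^ q) ≤ 4 / Real.pi := by
    intro s hs0 hs1
    set r : Fin n → ℝ := fun k => s * ((α k : ℝ) / m) ^ q with hr
    have hr0 : ∀ k, 0 ≤ r k := fun k => by positivity
    have hrn : ∀ z : Fin n → ℂ, (∀ k, ‖z k‖ = r k) → pnormE p z < 1 := by
      intro z hz
      unfold pnormE
      by_cases hptop : p = ∞
      · have : q = 0 := by simp [hq, hptop]
        simp only [hptop, if_true, hz, hr, this, Real.rpow_zero, mul_one, ciSup_const]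
        exact hs1
      · have h1 := hpt hptop
        have hne : p.toReal ≠ 0 := by positivity
        rw [if_neg hptop]
        have : ∑ j, ‖z j‖ ^ p.toReal = s ^ p.toReal := by
          simp only [hz, hr]
          have : ∀ k, (s * ((α k : ℝ) / m) ^ q) ^ p.toReal = s ^ p.toReal * ((α k : ℝ) / m) := by
            intro k
            rw [Real.mul_rpow hs0.le (by positivity), hq, Real.rpow_inv_rpow (by positivity) hne]
          simp only [this]
          rw [← Finset.mul_sum, ← Finset.sum_div, ← Nat.cast_sum, ← hm, div_self hmpos.ne', mul_one]
        rw [this, one_div, Real.rpow_rpow_inv hs0.le hne]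
        exact hs1
    have hprod : ∏ k, r k ^ α k = s ^ m * (Q / (m : ℝ) ^ m) ^ q := by
      simp only [hr, mul_pow]
      rw [Finset.prod_mul_distrib, Finset.prod_pow_eq_pow_sum, ← hm]
      congr 1
      have : ∀ k, (((α k : ℝ) / m) ^ q) ^ α k = (((α k : ℝ) / m) ^ α k) ^ q := by
        intro k
        rw [← Real.rpow_natCast, ← Real.rpow_mul (by positivity), mul_comm,
          Real.rpow_mul (by positivity), Real.rpow_natCast]
      simp only [this]
      rw [Real.finsetProd_rpow _ _ (fun k _ => by positivity)]
      simp only [div_pow]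
      rw [Finset.prod_div_distrib, Finset.prod_pow_eq_pow_sum]
    rw [← hprod]
    have hα0 : α ≠ 0 := fun h => hk0 (by simp [h])
    refine torus_bound r hr0 f h g a b ?_ ?_ ?_ ?_ α hα0
    · exact fun z hz => hfd z (hrn z hz)
    · exact fun z hz => hha z (hrn z hz)
    · exact fun z hz => hgb z (hrn z hz)
    · exact fun z hz => (hmap z (hrn z hz)).le
  have lim : (‖a α‖ + ‖b α‖) * (1 ^ m * (Q / (m : ℝ) ^ m) ^ q) ≤ 4 / Real.pi := by
    have hc : Filter.Tendsto (fun s : ℝ => (‖a α‖ + ‖b α‖) * (s ^ m * (Q / (m : ℝ) ^ m) ^ q))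
        (nhdsWithin 1 (Set.Iio 1)) (nhds ((‖a α‖ + ‖b α‖) * (1 ^ m * (Q / (m : ℝ) ^ m) ^ q))) := by
      apply Filter.Tendsto.mono_left _ nhdsWithin_le_nhds
      exact Continuous.tendsto (by fun_prop) 1
    refine le_of_tendsto hc ?_
    have : Set.Ioo (0 : ℝ) 1 ∈ nhdsWithin (1 : ℝ) (Set.Iio 1) :=
      Ioo_mem_nhdsLT (by norm_num)
    filter_upwards [this] with s hs using key s hs.1 hs.2
  rw [one_pow, one_mul, ← inv_div, Real.inv_rpow (by positivity), ← div_eq_mul_inv,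
    div_le_iff₀ (by positivity)] at lim
  exact lim
end

section
/- Let f be a (pluri)harmonic function of the unit disk 𝔻 into 𝔻. Then for every z ∈ 𝔻 and every integer m ≥ 1, |∂^m f(z)/∂z^m| + |∂^m f(z)/∂z̄^m| ≤ (4/π) m! (1 + |z|)^{m−1} / (1 − |z|²)^m. -/
open Complex Metric MeasureTheory intervalIntegral

lemma aux_pascal (n : ℕ) (T : ℕ → ℂ) :
    ∑ j ∈ Finset.range (n + 2), ((n + 1).choose j : ℂ) * T j =
      ∑ j ∈ Finset.range (n + 1), (n.choose j : ℂ) * (T j + T (j + 1)) := by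
  rw [Finset.sum_range_succ']
  simp only [Nat.choose_succ_succ, Nat.cast_add, add_mul, mul_add, Finset.sum_add_distrib]
  have h1 : ∑ j ∈ Finset.range (n + 1), (n.choose j : ℂ) * T j =
      ∑ j ∈ Finset.range (n + 1), (n.choose (j + 1) : ℂ) * T (j + 1) + T 0 := by
    have := Finset.sum_range_succ' (fun j => (n.choose j : ℂ) * T j) (n + 1)
    rw [Finset.sum_range_succ] at this
    simpa using this
  rw [h1]
  simp
  ring

lemma aux_comb (n : ℕ) (T : ℕ → ℂ) :
    ∑ j ∈ Finset.range (n + 1), (n.choose j : ℂ) *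
        (((j : ℂ) + 2) * T (j + 1) + ((n : ℂ) + j + 2) * T j) =
      ((n : ℂ) + 2) * ∑ j ∈ Finset.range (n + 2), ((n + 1).choose j : ℂ) * T j := by
  rw [aux_pascal, Finset.mul_sum, ← sub_eq_zero, ← Finset.sum_sub_distrib]
  have h := Finset.sum_range_sub' (fun j => (j : ℂ) * (n.choose j : ℂ) * T j) (n + 1)
  simp only [Nat.choose_succ_self, Nat.cast_zero, zero_mul, mul_zero, sub_zero] at h
  rw [← h]
  refine Finset.sum_congr rfl fun j hj => ?_
  have hj' : j ≤ n := by simpa [Nat.lt_succ_iff] using hj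
  have hc := Nat.choose_succ_right_eq n j
  have hc' : (n.choose (j + 1) : ℂ) * (j + 1) = n.choose j * ((n : ℂ) - j) := by
    rw [← Nat.cast_sub hj']; exact_mod_cast hc
  push_cast
  linear_combination T (j + 1) * hc'

lemma aux_den {z w : ℂ} (hz : ‖z‖ < 1) (hw : ‖w‖ < 1) : 1 - (starRingEnd ℂ) z * w ≠ 0 := by
  intro h
  have h1 : (starRingEnd ℂ) z * w = 1 := by linear_combination -h
  have h2 : ‖z‖ * ‖w‖ = 1 := by
    have := congrArg norm h1
    simpa using this
  nlinarith [norm_nonneg z, norm_nonneg w]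

lemma aux_map {z w : ℂ} (hz : ‖z‖ < 1) (hw : ‖w‖ < 1) :
    ‖(w - z) / (1 - (starRingEnd ℂ) z * w)‖ < 1 := by
  rw [norm_div, div_lt_one (norm_pos_iff.2 (aux_den hz hw))]
  refine lt_of_pow_lt_pow_left₀ 2 (norm_nonneg _) ?_
  have hz2 : ‖z‖ ^ 2 < 1 := by nlinarith [norm_nonneg z]
  have hw2 : ‖w‖ ^ 2 < 1 := by nlinarith [norm_nonneg w]
  rw [← Complex.normSq_eq_norm_sq, Complex.normSq_apply] at *
  rw [← Complex.normSq_eq_norm_sq, Complex.normSq_apply] at *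
  simp at *
  nlinarith

lemma aux_deriv (H h : ℂ → ℂ) (hH : DifferentiableOn ℂ H (ball 0 1)) (z : ℂ) (hz : ‖z‖ < 1)
    (hh : ∀ w ∈ ball (0 : ℂ) 1, h w = H ((w - z) / (1 - (starRingEnd ℂ) z * w))) (n : ℕ) :
    ∀ w ∈ ball (0 : ℂ) 1, iteratedDeriv (n + 1) h w = ((n + 1).factorial : ℂ) *
      ∑ j ∈ Finset.range (n + 1), (n.choose j : ℂ) *
        ((1 - z * (starRingEnd ℂ) z) ^ (j + 1) * (starRingEnd ℂ) z ^ (n - j) *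
        (iteratedDeriv (j + 1) H ((w - z) / (1 - (starRingEnd ℂ) z * w)) / (j + 1).factorial) *
        ((1 - (starRingEnd ℂ) z * w)⁻¹) ^ (n + j + 2)) := by
  set c := (starRingEnd ℂ) z with hc
  have hφ : ∀ w ∈ ball (0 : ℂ) 1, HasDerivAt (fun w => (w - z) / (1 - c * w))
      ((1 - z * c) * ((1 - c * w)⁻¹) ^ 2) w := by
    intro w hw
    have hd : 1 - c * w ≠ 0 := aux_den hz (by simpa using hw)
    have h1 : HasDerivAt (fun w : ℂ => w - z) 1 w := (hasDerivAt_id w).sub_const z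
    have h2 : HasDerivAt (fun w : ℂ => 1 - c * w) (-c) w := by
      simpa using ((hasDerivAt_id w).const_mul c).const_sub 1
    refine (h1.fun_div h2 hd).congr_deriv (Eq.symm ?_)
    rw [inv_pow, ← div_eq_mul_inv]
    congr 1
    ring
  have hD : ∀ w ∈ ball (0 : ℂ) 1, HasDerivAt (fun w => (1 - c * w)⁻¹)
      (c * ((1 - c * w)⁻¹) ^ 2) w := by
    intro w hw
    have hd : 1 - c * w ≠ 0 := aux_den hz (by simpa using hw)
    have h2 : HasDerivAt (fun w : ℂ => 1 - c * w) (-c) w := by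
      simpa using ((hasDerivAt_id w).const_mul c).const_sub 1
    refine (h2.fun_inv hd).congr_deriv (Eq.symm ?_)
    rw [inv_pow, ← div_eq_mul_inv, neg_neg]
  have hHk : ∀ k : ℕ, ∀ w ∈ ball (0 : ℂ) 1, HasDerivAt
      (fun w => iteratedDeriv k H ((w - z) / (1 - c * w)))
      (iteratedDeriv (k + 1) H ((w - z) / (1 - c * w)) *
        ((1 - z * c) * ((1 - c * w)⁻¹) ^ 2)) w := by
    intro k w hw
    have hm : (w - z) / (1 - c * w) ∈ ball (0 : ℂ) 1 := by
      simpa using aux_map hz (by simpa using hw)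
    have ha : AnalyticAt ℂ H ((w - z) / (1 - c * w)) :=
      hH.analyticAt (isOpen_ball.mem_nhds hm)
    have hb : DifferentiableAt ℂ (iteratedDeriv k H) ((w - z) / (1 - c * w)) := by
      rw [iteratedDeriv_eq_iterate]
      exact (AnalyticAt.iterated_deriv ha k).differentiableAt
    have := hb.hasDerivAt
    rw [← iteratedDeriv_succ] at this
    exact this.comp w (hφ w hw)
  induction n with
  | zero =>
    intro w hw
    have he : h =ᶠ[nhds w] fun w => iteratedDeriv 0 H ((w - z) / (1 - c * w)) := by
      filter_upwards [isOpen_ball.mem_nhds hw] with y hy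
      simpa using hh y hy
    rw [iteratedDeriv_succ, iteratedDeriv_zero, he.deriv_eq, (hHk 0 w hw).deriv]
    simp
    ring
  | succ n ih =>
    intro w hw
    have he := Filter.eventuallyEq_of_mem (isOpen_ball.mem_nhds hw) ih
    rw [iteratedDeriv_succ, he.deriv_eq]
    have key := aux_comb n (fun i => (1 - z * c) ^ (i + 1) * c ^ (n + 1 - i) *
        (iteratedDeriv (i + 1) H ((w - z) / (1 - c * w)) / (i + 1).factorial) *
        ((1 - c * w)⁻¹) ^ (n + 1 + i + 2))
    rw [Nat.factorial_succ (n + 1)]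
    push_cast
    rw [show ((n : ℂ) + 1 + 1) = n + 2 by ring, mul_comm ((n : ℂ) + 2), mul_assoc]
    refine HasDerivAt.deriv ?_
    refine HasDerivAt.const_mul _ ?_
    rw [← key]
    refine HasDerivAt.fun_sum fun j hj => ?_
    have hj' : j ≤ n := by simpa [Nat.lt_succ_iff] using hj
    refine HasDerivAt.const_mul _ ?_
    have h1 := (((hHk (j + 1) w hw).div_const ((j + 1).factorial : ℂ)).const_mul
      ((1 - z * c) ^ (j + 1) * c ^ (n - j))).fun_mul ((hD w hw).fun_pow (n + j + 2))
    convert h1 using 1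
    rw [show n + 1 - (j + 1) = n - j by omega, show n + 1 - j = n - j + 1 by omega,
      show n + j + 2 - 1 = n + j + 1 by omega, Nat.factorial_succ (j + 1)]
    have hf : ((j + 1).factorial : ℂ) ≠ 0 := by exact_mod_cast Nat.factorial_ne_zero _
    have hj2 : (j : ℂ) + 2 ≠ 0 := by exact_mod_cast (Nat.succ_ne_zero (j + 1))
    have hj3 : (j : ℂ) + 1 + 1 ≠ 0 := by exact_mod_cast (Nat.succ_ne_zero (j + 1))
    generalize (1 - c * w)⁻¹ = D
    push_cast
    generalize iteratedDeriv (j + 1 + 1) H ((w - z) / (1 - c * w)) = X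
    generalize iteratedDeriv (j + 1) H ((w - z) / (1 - c * w)) = Y
    field_simp
    ring


lemma aux_cauchy (H : ℂ → ℂ) (hH : DifferentiableOn ℂ H (ball 0 1)) (R : ℝ) (hR : 0 < R)
    (hR1 : R < 1) (k : ℕ) :
    ∫ t in (0 : ℝ)..2 * Real.pi, H (circleMap 0 R t) * exp (-(k * t * I)) =
      2 * Real.pi * R ^ k * (iteratedDeriv k H 0 / k.factorial) := by
  have hd : DiffContOnCl ℂ H (ball 0 R) :=
    (hH.mono (closedBall_subset_ball hR1)).diffContOnCl_ball subset_rfl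
  have h := hd.circleIntegral_one_div_sub_center_pow_smul hR k
  have hRc : (R : ℂ) ≠ 0 := by exact_mod_cast hR.ne'
  have e : (∮ z in C(0, R), (1 / (z - 0) ^ (k + 1)) • H z) = (I / R ^ k) *
      ∫ t in (0 : ℝ)..2 * Real.pi, H (circleMap 0 R t) * exp (-(k * t * I)) := by
    rw [circleIntegral, ← intervalIntegral.integral_const_mul]
    congr 1
    ext t
    rw [deriv_circleMap, circleMap_zero, exp_neg, show (k * t * I : ℂ) = k * (t * I) by ring,
      exp_nat_mul]
    have := exp_ne_zero (t * I)
    simp only [smul_eq_mul, sub_zero]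
    field_simp
    ring
  rw [e] at h
  have hI := I_ne_zero
  simp only [smul_eq_mul] at h
  have : (I / R ^ k) * (∫ t in (0 : ℝ)..2 * Real.pi, H (circleMap 0 R t) * exp (-(k * t * I))) =
    (I / R ^ k) * (2 * Real.pi * R ^ k * (iteratedDeriv k H 0 / k.factorial)) := by
    rw [h]; field_simp
  exact mul_left_cancel₀ (by positivity) this

lemma aux_cauchy0 (H : ℂ → ℂ) (hH : DifferentiableOn ℂ H (ball 0 1)) (R : ℝ) (hR : 0 < R)
    (hR1 : R < 1) (n : ℕ) :
    ∫ t in (0 : ℝ)..2 * Real.pi, H (circleMap 0 R t) * exp (((n + 1 : ℕ) : ℂ) * t * I) = 0 := by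
  have hd : DiffContOnCl ℂ (fun w => w ^ n * H w) (ball 0 R) := by
    refine DifferentiableOn.diffContOnCl_ball (U := ball 0 1) ?_ (closedBall_subset_ball hR1)
    exact (differentiable_id.pow n).differentiableOn.mul hH
  have h := hd.circleIntegral_eq_zero hR.le
  have hRc : (R : ℂ) ≠ 0 := by exact_mod_cast hR.ne'
  have e : (∮ z in C(0, R), z ^ n * H z) = (I * R ^ (n + 1)) *
      ∫ t in (0 : ℝ)..2 * Real.pi, H (circleMap 0 R t) * exp (((n + 1 : ℕ) : ℂ) * t * I) := by
    rw [circleIntegral, ← intervalIntegral.integral_const_mul]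
    congr 1
    ext t
    rw [deriv_circleMap, circleMap_zero,
      show (((n + 1 : ℕ) : ℂ) * t * I : ℂ) = ((n + 1 : ℕ) : ℂ) * (t * I) by ring,
      exp_nat_mul]
    simp only [smul_eq_mul]
    ring
  rw [e] at h
  have hI := I_ne_zero
  exact (mul_eq_zero.1 h).resolve_left (by positivity)

lemma aux_cos (n : ℕ) (a : ℝ) :
    ∫ t in (0 : ℝ)..2 * Real.pi, 2 * |Real.cos ((n + 1 : ℕ) * t + a)| = 8 := by
  have hp : Function.Periodic (fun x => |Real.cos x|) Real.pi := by
    intro x; simp [Real.cos_add_pi]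
  have hi : ∀ t₁ t₂, IntervalIntegrable (fun x => |Real.cos x|) volume t₁ t₂ := fun _ _ =>
    (Real.continuous_cos.abs).intervalIntegrable _ _
  have h0 : ∫ x in (-(Real.pi / 2))..(-(Real.pi / 2) + Real.pi), |Real.cos x| = 2 := by
    have : ∫ x in (-(Real.pi / 2))..(-(Real.pi / 2) + Real.pi), |Real.cos x| =
        ∫ x in (-(Real.pi / 2))..(-(Real.pi / 2) + Real.pi), Real.cos x := by
      refine integral_congr fun x hx => ?_
      rw [Set.uIcc_of_le (by linarith [Real.pi_pos])] at hx
      exact abs_of_nonneg (Real.cos_nonneg_of_mem_Icc ⟨hx.1, by linarith [hx.2]⟩)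
    rw [this, integral_cos, show -(Real.pi / 2) + Real.pi = Real.pi / 2 by ring]
    simp; norm_num
  rw [intervalIntegral.integral_const_mul,
    intervalIntegral.integral_comp_mul_add (fun x => |Real.cos x|) (by positivity) a]
  have h1 := hp.intervalIntegral_add_zsmul_eq (2 * (n + 1 : ℕ)) a hi
  rw [hp.intervalIntegral_add_eq a (-(Real.pi / 2)), h0] at h1
  have e1 : ((n + 1 : ℕ) : ℝ) * 0 + a = a := by ring
  have e2 : ((n + 1 : ℕ) : ℝ) * (2 * Real.pi) + a =
      a + (2 * ((n + 1 : ℕ) : ℤ)) • Real.pi := by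
    simp; ring
  rw [e1, e2, h1]
  have : ((n : ℝ) + 1) ≠ 0 := by positivity
  simp
  field_simp
  norm_num

lemma aux_norm (a b s : ℝ) :
    ‖exp (-(a * I)) * exp (-(s * I)) + exp (b * I) * exp (s * I)‖ =
      2 * |Real.cos (s + (a + b) / 2)| := by
  have : exp (-(a * I)) * exp (-(s * I)) + exp (b * I) * exp (s * I) =
      exp (((b - a) / 2 : ℝ) * I) * (2 * Complex.cos ((s + (a + b) / 2 : ℝ))) := by
    rw [Complex.two_cos, mul_add, ← exp_add, ← exp_add, ← exp_add, ← exp_add, add_comm]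
    congr 2 <;> push_cast <;> ring
  rw [this, norm_mul, norm_exp_ofReal_mul_I, ← ofReal_cos, norm_mul, norm_real]
  simp only [one_mul, Complex.norm_ofNat, Real.norm_eq_abs]

lemma aux_coeff (H G : ℂ → ℂ) (hH : DifferentiableOn ℂ H (ball 0 1))
    (hG : DifferentiableOn ℂ G (ball 0 1))
    (hF : ∀ w ∈ ball (0 : ℂ) 1, ‖H w + (starRingEnd ℂ) (G w)‖ < 1) (n : ℕ) :
    ‖iteratedDeriv (n + 1) H 0 / (n + 1).factorial‖ +
      ‖iteratedDeriv (n + 1) G 0 / (n + 1).factorial‖ ≤ 4 / Real.pi := by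
  set A := iteratedDeriv (n + 1) H 0 / (n + 1).factorial with hA
  set B := iteratedDeriv (n + 1) G 0 / (n + 1).factorial with hB
  have key : ∀ R : ℝ, 0 < R → R < 1 → R ^ (n + 1) * (‖A‖ + ‖B‖) ≤ 4 / Real.pi := by
    intro R hR hR1
    have hA1 := aux_cauchy H hH R hR hR1 (n + 1)
    have hB1 := aux_cauchy G hG R hR hR1 (n + 1)
    have hA0 := aux_cauchy0 H hH R hR hR1 n
    have hB0 := aux_cauchy0 G hG R hR hR1 n
    rw [← hA] at hA1
    rw [← hB] at hB1
    have hmem : ∀ t, circleMap 0 R t ∈ ball (0 : ℂ) 1 := fun t => by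
      simp [abs_of_pos hR, hR1]
    have cH : Continuous fun t => H (circleMap 0 R t) :=
      hH.continuousOn.comp_continuous (continuous_circleMap 0 R) hmem
    have cG : Continuous fun t => G (circleMap 0 R t) :=
      hG.continuousOn.comp_continuous (continuous_circleMap 0 R) hmem
    set P := fun t : ℝ => H (circleMap 0 R t) with hP
    set Q := fun t : ℝ => G (circleMap 0 R t) with hQ
    set s := fun t : ℝ => ((n + 1 : ℕ) : ℝ) * t with hs
    have cs : Continuous s := by fun_prop
    -- the weight
    set a := A.arg
    set b := B.arg
    have hAn : exp (-(a * I)) * A = ‖A‖ := by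
      conv_lhs => rw [← norm_mul_exp_arg_mul_I A]
      rw [mul_comm, mul_assoc, ← exp_add]; simp [a]
    have hBn : exp (-(b * I)) * B = ‖B‖ := by
      conv_lhs => rw [← norm_mul_exp_arg_mul_I B]
      rw [mul_comm, mul_assoc, ← exp_add]; simp [b]
    have conjint : ∀ φ : ℝ → ℂ, ∫ t in (0 : ℝ)..2 * Real.pi, (starRingEnd ℂ) (φ t) =
        (starRingEnd ℂ) (∫ t in (0 : ℝ)..2 * Real.pi, φ t) := by
      intro φ
      rw [intervalIntegral.integral_of_le (by positivity),
        intervalIntegral.integral_of_le (by positivity)]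
      exact integral_conj
    have iH1 : ∫ t in (0 : ℝ)..2 * Real.pi, P t * exp (-(s t * I)) =
        2 * Real.pi * R ^ (n + 1) * A := by
      rw [← hA1]; simp [P, s]
    have iH0 : ∫ t in (0 : ℝ)..2 * Real.pi, P t * exp (s t * I) = 0 := by
      rw [← hA0]; simp [P, s]
    have iG1 : ∫ t in (0 : ℝ)..2 * Real.pi, (starRingEnd ℂ) (Q t) * exp (s t * I) =
        (starRingEnd ℂ) (2 * Real.pi * R ^ (n + 1) * B) := by
      rw [← hB1, ← conjint]; simp [Q, s, ← exp_conj]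
    have iG0 : ∫ t in (0 : ℝ)..2 * Real.pi, (starRingEnd ℂ) (Q t) * exp (-(s t * I)) = 0 := by
      rw [← map_zero (starRingEnd ℂ), ← hB0, ← conjint]; simp [Q, s, ← exp_conj]
    have cQ : Continuous fun t => (starRingEnd ℂ) (Q t) := continuous_conj.comp cG
    have c1 : Continuous fun t => exp (-(s t * I)) := by fun_prop
    have c2 : Continuous fun t => exp (s t * I) := by fun_prop
    have total : ∫ t in (0 : ℝ)..2 * Real.pi, (P t + (starRingEnd ℂ) (Q t)) *
        (exp (-(a * I)) * exp (-(s t * I)) + exp (b * I) * exp (s t * I)) =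
        ((2 * Real.pi * (R ^ (n + 1) * (‖A‖ + ‖B‖)) : ℝ) : ℂ) := by
      have e : ∀ t, (P t + (starRingEnd ℂ) (Q t)) *
        (exp (-(a * I)) * exp (-(s t * I)) + exp (b * I) * exp (s t * I)) =
        exp (-(a * I)) * (P t * exp (-(s t * I))) +
        exp (-(a * I)) * ((starRingEnd ℂ) (Q t) * exp (-(s t * I))) +
        exp (b * I) * (P t * exp (s t * I)) +
        exp (b * I) * ((starRingEnd ℂ) (Q t) * exp (s t * I)) := fun t => by ring
      have hBn' : exp (b * I) * (starRingEnd ℂ) B = ‖B‖ := by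
        have := congrArg (starRingEnd ℂ) hBn
        simpa [← exp_conj] using this
      simp_rw [e]
      rw [intervalIntegral.integral_add (Continuous.intervalIntegrable (by fun_prop) _ _)
          (Continuous.intervalIntegrable (by fun_prop) _ _),
        intervalIntegral.integral_add (Continuous.intervalIntegrable (by fun_prop) _ _)
          (Continuous.intervalIntegrable (by fun_prop) _ _),
        intervalIntegral.integral_add (Continuous.intervalIntegrable (by fun_prop) _ _)
          (Continuous.intervalIntegrable (by fun_prop) _ _)]
      simp only [intervalIntegral.integral_const_mul]
      rw [iH1, iH0, iG0, iG1]
      simp only [map_mul, map_pow, conj_ofReal, map_ofNat]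
      push_cast
      linear_combination (2 * Real.pi * R ^ (n + 1) : ℂ) * hAn +
        (2 * Real.pi * R ^ (n + 1) : ℂ) * hBn'
    have bound : ‖∫ t in (0 : ℝ)..2 * Real.pi, (P t + (starRingEnd ℂ) (Q t)) *
        (exp (-(a * I)) * exp (-(s t * I)) + exp (b * I) * exp (s t * I))‖ ≤ 8 := by
      rw [← aux_cos n ((a + b) / 2)]
      refine intervalIntegral.norm_integral_le_of_norm_le (by positivity) ?_
        (Continuous.intervalIntegrable (by fun_prop) _ _)
      refine Filter.Eventually.of_forall fun t _ => ?_
      rw [norm_mul, aux_norm]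
      exact mul_le_of_le_one_left (by positivity) (hF _ (hmem t)).le
    rw [total, norm_real, Real.norm_of_nonneg (by positivity)] at bound
    rw [le_div_iff₀ Real.pi_pos]
    linarith
  have ht : Filter.Tendsto (fun R : ℝ => R ^ (n + 1) * (‖A‖ + ‖B‖)) (nhdsWithin 1 (Set.Iio 1))
      (nhds (1 ^ (n + 1) * (‖A‖ + ‖B‖))) :=
    (Continuous.tendsto (by fun_prop) 1).mono_left nhdsWithin_le_nhds
  rw [one_pow, one_mul] at ht
  refine le_of_tendsto ht ?_
  filter_upwards [Ioo_mem_nhdsLT (zero_lt_one' ℝ)] with R hR using key R hR.1 hR.2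

lemma aux_at (H h : ℂ → ℂ) (hH : DifferentiableOn ℂ H (ball 0 1)) (z : ℂ) (hz : ‖z‖ < 1)
    (hh : ∀ w ∈ ball (0 : ℂ) 1, h w = H ((w - z) / (1 - (starRingEnd ℂ) z * w))) (n : ℕ) :
    ‖iteratedDeriv (n + 1) h z‖ ≤ ((n + 1).factorial : ℝ) *
      ∑ j ∈ Finset.range (n + 1), (n.choose j : ℝ) * ‖z‖ ^ (n - j) *
        ‖iteratedDeriv (j + 1) H 0 / (j + 1).factorial‖ / (1 - ‖z‖ ^ 2) ^ (n + 1) := by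
  rw [aux_deriv H h hH z hz hh n z (by simpa using hz)]
  have hs : 0 < 1 - ‖z‖ ^ 2 := by nlinarith [norm_nonneg z]
  have e1 : 1 - z * (starRingEnd ℂ) z = ((1 - ‖z‖ ^ 2 : ℝ) : ℂ) := by
    rw [mul_conj, normSq_eq_norm_sq]; push_cast; ring
  have e2 : 1 - (starRingEnd ℂ) z * z = ((1 - ‖z‖ ^ 2 : ℝ) : ℂ) := by
    rw [mul_comm, e1]
  rw [norm_mul, Complex.norm_natCast]
  refine mul_le_mul_of_nonneg_left ?_ (by positivity)
  refine (norm_sum_le _ _).trans (Finset.sum_le_sum fun j hj => le_of_eq ?_)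
  rw [e1, e2, sub_self, zero_div]
  generalize iteratedDeriv (j + 1) H 0 / ((j + 1).factorial : ℂ) = X
  rw [norm_mul, norm_mul, norm_mul, norm_mul, norm_pow, norm_pow, norm_pow, norm_inv, norm_real,
    Real.norm_of_nonneg hs.le, Complex.norm_natCast, RCLike.norm_conj,
    show n + j + 2 = (n + 1) + (j + 1) by ring, pow_add _ (n + 1) (j + 1), inv_pow, inv_pow]
  generalize 1 - ‖z‖ ^ 2 = s at hs
  have := hs.ne'
  field_simp

theorem stmt9 (f h g : ℂ → ℂ)
    (hh : DifferentiableOn ℂ h (Metric.ball 0 1))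
    (hg : DifferentiableOn ℂ g (Metric.ball 0 1))
    (hg0 : g 0 = 0)
    (hfd : ∀ z ∈ Metric.ball (0 : ℂ) 1, f z = h z + (starRingEnd ℂ) (g z))
    (hmap : ∀ z ∈ Metric.ball (0 : ℂ) 1, ‖f z‖ < 1)
    (z : ℂ) (hz : ‖z‖ < 1) (m : ℕ) (hm : 1 ≤ m) :
    -- `∂^m f/∂z^m = h^{(m)}` and `|∂^m f/∂z̄^m| = |g^{(m)}|`
    ‖iteratedDeriv m h z‖ + ‖iteratedDeriv m g z‖ ≤
      (4 / Real.pi) * (m.factorial : ℝ) * (1 + ‖z‖) ^ (m - 1) / (1 - ‖z‖ ^ 2) ^ m := by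
  obtain ⟨n, rfl⟩ : ∃ n, m = n + 1 := ⟨m - 1, by omega⟩
  have hs : 0 < 1 - ‖z‖ ^ 2 := by nlinarith [norm_nonneg z]
  have hz' : ‖-z‖ < 1 := by simpa using hz
  set ψ : ℂ → ℂ := fun w => (w - -z) / (1 - (starRingEnd ℂ) (-z) * w) with hψ
  have hψm : Set.MapsTo ψ (ball 0 1) (ball 0 1) := fun w hw => by
    simpa [ψ] using aux_map hz' (by simpa using hw : ‖w‖ < 1)
  have hψd : DifferentiableOn ℂ ψ (ball 0 1) := fun w hw => by
    have hd := aux_den hz' (by simpa using hw : ‖w‖ < 1)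
    refine DifferentiableAt.differentiableWithinAt ?_
    exact DifferentiableAt.fun_div (by fun_prop) (by fun_prop) hd
  have hinv : ∀ w ∈ ball (0 : ℂ) 1, ψ ((w - z) / (1 - (starRingEnd ℂ) z * w)) = w := by
    intro w hw
    have hw' : ‖w‖ < 1 := by simpa using hw
    have h1 := aux_den hz hw'
    have h2 := aux_den hz' (aux_map hz hw')
    simp only [ψ]
    rw [div_eq_iff h2]
    simp only [map_neg]
    rw [sub_neg_eq_add, neg_mul, sub_neg_eq_add, div_add' _ _ _ h1, mul_div_assoc',
      one_add_div h1, mul_div_assoc']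
    congr 1
    ring
  have hHd : DifferentiableOn ℂ (h ∘ ψ) (ball 0 1) := hh.comp hψd hψm
  have hGd : DifferentiableOn ℂ (g ∘ ψ) (ball 0 1) := hg.comp hψd hψm
  have b1 := aux_at (h ∘ ψ) h hHd z hz (fun w hw => by simp [hinv w hw]) n
  have b2 := aux_at (g ∘ ψ) g hGd z hz (fun w hw => by simp [hinv w hw]) n
  have hc := aux_coeff (h ∘ ψ) (g ∘ ψ) hHd hGd (fun w hw => by
    have := hmap _ (hψm hw)
    rwa [hfd _ (hψm hw)] at this)
  refine (add_le_add b1 b2).trans ?_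
  rw [← mul_add, ← Finset.sum_add_distrib]
  have hbin : (1 + ‖z‖) ^ n = ∑ j ∈ Finset.range (n + 1), (n.choose j : ℝ) * ‖z‖ ^ (n - j) := by
    rw [add_pow]
    exact Finset.sum_congr rfl fun j _ => by rw [one_pow]; ring
  rw [Nat.add_sub_cancel, hbin, mul_comm (4 / Real.pi), mul_assoc, mul_div_assoc]
  refine mul_le_mul_of_nonneg_left ?_ (by positivity)
  rw [Finset.mul_sum, Finset.sum_div]
  refine Finset.sum_le_sum fun j _ => ?_
  rw [← add_div, ← mul_add, mul_comm (4 / Real.pi)]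
  gcongr
  exact hc j
end

section
/- Let n ≥ 2 and let f be a pluriharmonic function of 𝔹_{ℓ₂ⁿ} into the unit disk 𝔻. Then for every z ∈ 𝔹_{ℓ₂ⁿ} and every nonzero multi-index m = (m₁,…,m_n), |∂^{|m|} f(z)/∂z₁^{m₁}⋯∂z_n^{m_n}| + |∂^{|m|} f(z)/∂z̄₁^{m₁}⋯∂z̄_n^{m_n}| ≤ (4/π) n^{|m|/2} · C(n+|m|−1, n−1) · |m|! · ∏_{j=1}^{n} (1 + |z_j|)^{m_j} / (1 − ‖z‖₂²)^{|m|}, where C(·,·) is the binomial coefficient. -/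
open scoped BigOperators

/-- The Wirtinger partial derivative `∂/∂z_k` of a holomorphic function
on a domain in `ℂ^n` (with the Euclidean norm). -/
noncomputable def wpderiv {n : ℕ} (k : Fin n) (h : EuclideanSpace ℂ (Fin n) → ℂ) :
    EuclideanSpace ℂ (Fin n) → ℂ :=
  fun z => fderiv ℂ h z (EuclideanSpace.single k 1)

/-- The iterated Wirtinger derivative `∂^{|m|}/∂z₁^{m₁}⋯∂z_n^{m_n}`. -/
noncomputable def wpderivMulti {n : ℕ} (m : Fin n → ℕ)
    (h : EuclideanSpace ℂ (Fin n) → ℂ) : EuclideanSpace ℂ (Fin n) → ℂ :=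
  Fin.foldr n (fun k F => (wpderiv k)^[m k] F) h

lemma aux_fact (m k : ℕ) : m.factorial * m ^ k ≤ m ^ m * k.factorial := by
  rcases le_total m k with h | h
  · have := Nat.factorial_mul_pow_sub_le_factorial h
    calc m.factorial * m ^ k = m ^ m * (m.factorial * m ^ (k - m)) := by
          rw [← Nat.add_sub_cancel' h, pow_add]; simp; ring
      _ ≤ _ := Nat.mul_le_mul_left _ this
  · obtain ⟨d, rfl⟩ := Nat.exists_eq_add_of_le h
    have : (k + d).factorial ≤ k.factorial * (k + d) ^ d := by
      have h1 := Nat.factorial_mul_ascFactorial k d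
      rw [← h1]
      refine Nat.mul_le_mul_left _ ?_
      rw [Nat.ascFactorial_eq_prod_range]
      calc _ ≤ ∏ _i ∈ Finset.range d, (k + d) := by
            refine Finset.prod_le_prod' fun i hi => ?_
            have := Finset.mem_range.1 hi
            omega
        _ = _ := by simp
    calc _ ≤ (k.factorial * (k + d) ^ d) * (k + d) ^ k := Nat.mul_le_mul_right _ this
      _ = _ := by rw [pow_add]; ring

lemma aux_comb_s10 (n : ℕ) (hn : 1 ≤ n) (m : Fin n → ℕ) :
    (∑ j, m j) ^ (∑ j, m j) * ∏ j, (m j).factorial ≤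
      Nat.choose (n + (∑ j, m j) - 1) (n - 1) * (∑ j, m j).factorial * ∏ j, m j ^ m j := by
  set N := ∑ j, m j with hN
  have h1 : N ^ N = ∑ k ∈ Finset.piAntidiag Finset.univ N,
      Nat.multinomial Finset.univ k * ∏ i, m i ^ k i := by
    have := Finset.sum_pow_eq_sum_piAntidiag (R := ℕ) Finset.univ m N
    simpa [← hN] using this
  have hcard : (Finset.piAntidiag (Finset.univ : Finset (Fin n)) N).card
      = Nat.choose (n + N - 1) (n - 1) := by
    have h2 := Finset.card_finsuppAntidiag_nat_eq_choose (s := (Finset.univ : Finset (Fin n))) N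
    have h3 : (Finset.finsuppAntidiag (Finset.univ : Finset (Fin n)) N).card
      = (Finset.piAntidiag (Finset.univ : Finset (Fin n)) N).card := by
      refine Finset.card_bij (fun f _ => (f : Fin n → ℕ)) ?_ ?_ ?_
      · intro f hf; simpa [Finset.mem_finsuppAntidiag] using hf
      · intro f _ g _ h; exact DFunLike.coe_injective h
      · intro f hf
        refine ⟨Finsupp.equivFunOnFinite.symm f, ?_, by simp⟩
        simpa [Finset.mem_finsuppAntidiag] using hf
    rw [← h3, h2]
    simp only [Finset.card_univ, Fintype.card_fin]
    rw [← Nat.choose_symm (by omega)]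
    congr 1; omega
  rw [h1, Finset.sum_mul, ← hcard, mul_assoc, ← smul_eq_mul (Finset.card _)]
  refine Finset.sum_le_card_nsmul _ _ _ ?_
  intro k hk
  have hk' : ∑ i, k i = N := by simpa using hk
  have h4 := Nat.multinomial_spec (Finset.univ) k
  rw [hk'] at h4
  calc _ = Nat.multinomial Finset.univ k * ∏ i, ((m i).factorial * m i ^ k i) := by
        rw [Finset.prod_mul_distrib]; ring
    _ ≤ Nat.multinomial Finset.univ k * ∏ i, (m i ^ m i * (k i).factorial) := by
        exact Nat.mul_le_mul_left _ (Finset.prod_le_prod' fun i _ => aux_fact _ _)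
    _ = _ := by rw [Finset.prod_mul_distrib, ← h4]; ring

lemma aux_cos_s10 (k : ℕ) (hk : k ≠ 0) (α : ℝ) :
    ∫ θ in (0:ℝ)..2 * Real.pi, |Real.cos (k * θ - α)| = 4 := by
  have hk' : (k : ℝ) ≠ 0 := by exact_mod_cast hk
  have hper : Function.Periodic (fun x : ℝ => |Real.cos x|) Real.pi := by
    intro x; simp [Real.cos_add_pi]
  have hint : ∀ a b : ℝ, IntervalIntegrable (fun x : ℝ => |Real.cos x|) MeasureTheory.volume a b :=
    fun a b => (Continuous.intervalIntegrable (by fun_prop) a b)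
  have h1 := intervalIntegral.integral_comp_mul_sub (a := 0) (b := 2 * Real.pi)
    (fun x : ℝ => |Real.cos x|) hk' α
  rw [h1]
  have h2 := hper.intervalIntegral_add_zsmul_eq (2 * k : ℤ) (-α) hint
  have e1 : (k : ℝ) * 0 - α = -α := by ring
  have e2 : (k : ℝ) * (2 * Real.pi) - α = -α + (2 * k : ℤ) • Real.pi := by
    rw [zsmul_eq_mul]; push_cast; ring
  rw [e1, e2, h2]
  have h3 : ∫ x in (-α)..(-α + Real.pi), |Real.cos x| = 2 := by
    rw [hper.intervalIntegral_add_eq (-α) (-(Real.pi / 2))]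
    have : ∫ x in (-(Real.pi / 2))..(-(Real.pi / 2) + Real.pi), |Real.cos x|
        = ∫ x in (-(Real.pi / 2))..(-(Real.pi / 2) + Real.pi), Real.cos x := by
      refine intervalIntegral.integral_congr ?_
      intro x hx
      rw [Set.uIcc_of_le (by linarith [Real.pi_pos])] at hx
      exact abs_of_nonneg (Real.cos_nonneg_of_mem_Icc ⟨by linarith [hx.1], by linarith [hx.2]⟩)
    rw [this, integral_cos]
    have : -(Real.pi / 2) + Real.pi = Real.pi / 2 := by ring
    rw [this, Real.sin_neg, Real.sin_pi_div_two]; norm_num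
  rw [h3, zsmul_eq_mul, smul_eq_mul]; push_cast; field_simp; norm_num

open Complex in
/-- One-dimensional estimate: bounded real part. -/
lemma aux_one (φ : ℂ → ℂ) (c : ℂ) (r : ℝ) (hr : 0 < r)
    (hφ : DifferentiableOn ℂ φ (Metric.closedBall c r))
    (hb : ∀ w ∈ Metric.closedBall c r, |(φ w).re| ≤ 1) (k : ℕ) (hk : k ≠ 0) :
    ‖iteratedDeriv k φ c‖ ≤ k.factorial * (4 / Real.pi) / r ^ k := by
  have hI1 := hφ.circleIntegral_one_div_sub_center_pow_smul hr k
  have hI2 : ∮ z in C(c, r), (z - c) ^ (k - 1) * φ z = 0 := by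
    refine DiffContOnCl.circleIntegral_eq_zero hr.le ?_
    refine DifferentiableOn.diffContOnCl ?_
    refine (DifferentiableOn.mul (by fun_prop) hφ).mono Metric.closure_ball_subset_closedBall
  simp only [circleIntegral, deriv_circleMap, smul_eq_mul, circleMap_sub_center] at hI1 hI2
  have hrc : (r : ℂ) ≠ 0 := by exact_mod_cast hr.ne'
  have hmem : ∀ θ, circleMap c r θ ∈ Metric.closedBall c r :=
    fun θ => circleMap_mem_closedBall c hr.le θ
  have hcont : Continuous (fun θ : ℝ => φ (circleMap c r θ)) :=
    hφ.continuousOn.comp_continuous (continuous_circleMap c r) hmem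
  set a := iteratedDeriv k φ c with ha
  have hJ1 : ∫ θ in (0:ℝ)..2 * Real.pi, cexp (-(k * θ * I)) * φ (circleMap c r θ)
      = 2 * Real.pi * (a * r ^ k / k.factorial) := by
    have : ∀ θ : ℝ, circleMap 0 r θ * I * (1 / circleMap 0 r θ ^ (k + 1) * φ (circleMap c r θ))
        = (I / r ^ k) * (cexp (-(k * θ * I)) * φ (circleMap c r θ)) := by
      intro θ
      have h0 : circleMap 0 r θ = r * cexp (θ * I) := by simp [circleMap]
      rw [h0, Complex.exp_neg, show (k : ℂ) * θ * I = k * (θ * I) by ring, Complex.exp_nat_mul]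
      have := Complex.exp_ne_zero (θ * I)
      rw [mul_pow, pow_succ, pow_succ]
      field_simp
    simp_rw [this] at hI1
    rw [intervalIntegral.integral_const_mul] at hI1
    have hf : (k.factorial : ℂ) ≠ 0 := by exact_mod_cast k.factorial_ne_zero
    have hI := Complex.I_ne_zero
    field_simp at hI1 ⊢
    linear_combination hI1
  have hJ2 : ∫ θ in (0:ℝ)..2 * Real.pi, cexp (k * θ * I) * φ (circleMap c r θ) = 0 := by
    have : ∀ θ : ℝ, circleMap 0 r θ * I * (circleMap 0 r θ ^ (k - 1) * φ (circleMap c r θ))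
        = (I * r ^ k) * (cexp (k * θ * I) * φ (circleMap c r θ)) := by
      intro θ
      have h0 : circleMap 0 r θ = r * cexp (θ * I) := by simp [circleMap]
      obtain ⟨l, rfl⟩ := Nat.exists_eq_succ_of_ne_zero hk
      rw [h0, show ((l.succ : ℕ) : ℂ) * θ * I = (l.succ : ℕ) * (θ * I) by ring,
        Complex.exp_nat_mul]
      simp only [Nat.succ_eq_add_one, Nat.add_sub_cancel]
      ring
    simp_rw [this] at hI2
    rw [intervalIntegral.integral_const_mul] at hI2
    have hI := Complex.I_ne_zero
    simpa [hI, hrc] using hI2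
  -- phase
  set α : ℝ := -arg a with hα
  have hK : ∫ θ in (0:ℝ)..2 * Real.pi, ((2 * Real.cos (k * θ - α) : ℝ) : ℂ) * φ (circleMap c r θ)
      = ((2 * Real.pi * (‖a‖ * r ^ k / k.factorial) : ℝ) : ℂ) := by
    have : ∀ θ : ℝ, ((2 * Real.cos (k * θ - α) : ℝ) : ℂ) * φ (circleMap c r θ)
       = cexp (α * I) * (cexp (-(k * θ * I)) * φ (circleMap c r θ))
        + cexp (-(α * I)) * (cexp (k * θ * I) * φ (circleMap c r θ)) := by
      intro θ
      push_cast
      rw [Complex.two_cos, ← mul_assoc, ← mul_assoc, ← Complex.exp_add, ← Complex.exp_add, ← add_mul,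
        add_comm]
      congr 2 <;> congr 1 <;> ring
    simp_rw [this]
    rw [intervalIntegral.integral_add, intervalIntegral.integral_const_mul,
      intervalIntegral.integral_const_mul, hJ1, hJ2]
    · have : cexp (α * I) * a = ‖a‖ := by
        conv_lhs => rw [← Complex.norm_mul_exp_arg_mul_I a]
        rw [mul_left_comm, ← Complex.exp_add, hα]; simp
      push_cast
      linear_combination (2 * (Real.pi : ℂ) * r ^ k / k.factorial) * this
    · exact (Continuous.intervalIntegrable
        (continuous_const.mul (Continuous.mul (by fun_prop) hcont)) _ _)
    · exact (Continuous.intervalIntegrable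
        (continuous_const.mul (Continuous.mul (by fun_prop) hcont)) _ _)
  have hre : 2 * Real.pi * (‖a‖ * r ^ k / k.factorial)
      = ∫ θ in (0:ℝ)..2 * Real.pi, (2 * Real.cos (k * θ - α)) * (φ (circleMap c r θ)).re := by
    have h5 := Complex.reCLM.intervalIntegral_comp_comm (μ := MeasureTheory.volume)
      (a := 0) (b := 2 * Real.pi)
      (f := fun θ : ℝ => ((2 * Real.cos (k * θ - α) : ℝ) : ℂ) * φ (circleMap c r θ))
      (Continuous.intervalIntegrable (Continuous.mul (by fun_prop) hcont) _ _)
    rw [hK] at h5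
    simp only [Complex.reCLM_apply, Complex.re_ofReal_mul, Complex.ofReal_re] at h5
    exact h5.symm
  have hle : ∫ θ in (0:ℝ)..2 * Real.pi, (2 * Real.cos (k * θ - α)) * (φ (circleMap c r θ)).re
      ≤ ∫ θ in (0:ℝ)..2 * Real.pi, 2 * |Real.cos (k * θ - α)| := by
    refine intervalIntegral.integral_mono (by positivity) ?_ ?_ ?_
    · exact (Continuous.intervalIntegrable
        (Continuous.mul (by fun_prop) (Complex.continuous_re.comp hcont)) _ _)
    · exact (Continuous.intervalIntegrable (by fun_prop) _ _)
    · intro θ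
      have := hb _ (hmem θ)
      calc _ ≤ |(2 * Real.cos (k * θ - α)) * (φ (circleMap c r θ)).re| := le_abs_self _
        _ = 2 * |Real.cos (k * θ - α)| * |(φ (circleMap c r θ)).re| := by
            rw [abs_mul, abs_mul]; simp
        _ ≤ 2 * |Real.cos (k * θ - α)| * 1 := by gcongr
        _ = _ := by simp
  rw [intervalIntegral.integral_const_mul, aux_cos_s10 k hk, ← hre] at hle
  have hfp : (0:ℝ) < k.factorial := by exact_mod_cast k.factorial_pos
  have hpi := Real.pi_pos
  have hrk : 0 < r ^ k := by positivity
  rw [le_div_iff₀ hrk]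
  have : ‖a‖ * r ^ k / k.factorial ≤ 4 / Real.pi := by
    rw [le_div_iff₀ hpi]; linarith
  rwa [div_le_iff₀' hfp] at this

lemma aux_diff {E : Type*} [NormedAddCommGroup E] [NormedSpace ℂ E] [FiniteDimensional ℂ E]
    [MeasurableSpace E] [BorelSpace E]
    (U : Set E) (hU : IsOpen U) (F : E → ℂ) (hF : DifferentiableOn ℂ F U) (v : E) (hv : ‖v‖ = 1) :
    DifferentiableOn ℂ (fun x => fderiv ℂ F x v) U := by
  have : ProperSpace E := FiniteDimensional.proper ℂ E
  intro x hx
  refine DifferentiableAt.differentiableWithinAt ?_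
  obtain ⟨R, hR, hRU⟩ := Metric.nhds_basis_closedBall.mem_iff.1 (hU.mem_nhds hx)
  obtain ⟨M, hM⟩ := (isCompact_closedBall x R).exists_bound_of_continuousOn (hF.mono hRU).continuousOn
  have hMnn : 0 ≤ M := (norm_nonneg _).trans (hM x (Metric.mem_closedBall_self hR.le))
  have hat : ∀ y ∈ Metric.closedBall x R, DifferentiableAt ℂ F y := fun y hy =>
    hF.differentiableAt (hU.mem_nhds (hRU hy))
  set K := (2 * M) / (R / 2) with hK
  have hKnn : 0 ≤ K := by positivity
  have hder : ∀ y ∈ Metric.ball x (R / 2), ‖fderiv ℂ F y‖ ≤ K := by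
    intro y hy
    have hsub : Metric.ball y (R / 2) ⊆ Metric.closedBall x R := by
      refine (Metric.ball_subset_ball' ?_).trans Metric.ball_subset_closedBall
      have := Metric.mem_ball.1 hy
      linarith
    refine Complex.norm_fderiv_le_div_of_mapsTo_ball ((hF.mono hRU).mono hsub) ?_ (by positivity)
    intro w hw
    have h1 := hM w (hsub hw)
    have h2 := hM y (hsub (Metric.mem_ball_self (by positivity)))
    rw [mem_closedBall_iff_norm]
    linarith [norm_sub_le (F w) (F y)]
  have hlip : LipschitzOnWith ⟨K, hKnn⟩ F (Metric.ball x (R / 2)) := by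
    refine Convex.lipschitzOnWith_of_nnnorm_fderiv_le (𝕜 := ℂ)  ?_ ?_ (convex_ball _ _)
    · intro y hy
      exact hat y (Metric.ball_subset_closedBall (Metric.ball_subset_ball (by linarith) hy))
    · intro y hy
      exact hder y hy
  set ρ := R / 8 with hρ
  have hρ0 : 0 < ρ := by positivity
  set s := Metric.ball x (R / 8) with hs
  have hmem : ∀ y ∈ s, ∀ ζ ∈ Metric.closedBall (0:ℂ) ρ, y + ζ • v ∈ Metric.ball x (R / 2) := by
    intro y hy ζ hζ
    rw [mem_ball_iff_norm] at hy ⊢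
    rw [mem_closedBall_zero_iff] at hζ
    calc ‖y + ζ • v - x‖ = ‖(y - x) + ζ • v‖ := by congr 1; abel
      _ ≤ ‖y - x‖ + ‖ζ • v‖ := norm_add_le _ _
      _ < R / 2 := by rw [norm_smul, hv]; linarith
  have hin : Metric.ball x (R / 2) ⊆ Metric.closedBall x R :=
    Metric.ball_subset_closedBall.trans (Metric.closedBall_subset_closedBall (by linarith))
  set c : ℝ → ℂ := fun θ => (2 * Real.pi * Complex.I)⁻¹ *
    (deriv (circleMap 0 ρ) θ * (1 / (circleMap 0 ρ θ) ^ 2)) with hc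
  have hcc : Continuous c := by
    have h0 : ∀ θ, circleMap 0 ρ θ ≠ 0 := fun θ => circleMap_ne_center hρ0.ne'
    simp only [hc, deriv_circleMap]
    refine continuous_const.mul (((continuous_circleMap 0 ρ).mul continuous_const).mul ?_)
    exact continuous_const.div ((continuous_circleMap 0 ρ).pow 2) (fun θ => pow_ne_zero _ (h0 θ))
  have hcirc : ∀ θ, circleMap 0 ρ θ ∈ Metric.closedBall (0:ℂ) ρ :=
    fun θ => circleMap_mem_closedBall 0 hρ0.le θ
  have hcauchy : ∀ y ∈ s, fderiv ℂ F y v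
      = ∫ θ in (0:ℝ)..2 * Real.pi, c θ * F (y + circleMap 0 ρ θ • v) := by
    intro y hy
    have hd : DifferentiableOn ℂ (fun ζ : ℂ => F (y + ζ • v)) (Metric.closedBall 0 ρ) := by
      intro ζ hζ
      refine DifferentiableAt.differentiableWithinAt ?_
      refine DifferentiableAt.comp (f := fun ζ : ℂ => y + ζ • v) ζ
        (hat _ (hin (hmem y hy ζ hζ))) (by fun_prop)
    have h1 := hd.deriv_eq_smul_circleIntegral hρ0
    have h2 : deriv (fun ζ : ℂ => F (y + ζ • v)) 0 = fderiv ℂ F y v := by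
      have h3 : HasDerivAt (fun ζ : ℂ => y + ζ • v) v 0 := by
        simpa using ((hasDerivAt_id (0:ℂ)).smul_const v).const_add y
      have h4 : HasFDerivAt F (fderiv ℂ F y) (y + (0:ℂ) • v) := by
        have := (hat y (by simpa using hin (hmem y hy 0 (by simp [hρ0.le])))).hasFDerivAt
        simpa using this
      exact (h4.comp_hasDerivAt (0:ℂ) h3).deriv
    rw [h2] at h1
    simp only [circleIntegral, smul_eq_mul, sub_zero] at h1
    have : ∀ θ, c θ * F (y + circleMap 0 ρ θ • v) = (2 * Real.pi * Complex.I)⁻¹ *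
       (deriv (circleMap 0 ρ) θ * (1 / circleMap 0 ρ θ ^ 2 * F (y + circleMap 0 ρ θ • v))) := by
      intro θ; simp only [hc]; ring
    simp_rw [this]
    rw [intervalIntegral.integral_const_mul, h1, inv_mul_cancel_left₀ Complex.two_pi_I_ne_zero]
  have hsn : s ∈ nhds x := Metric.ball_mem_nhds _ (by positivity)
  have hxs : x ∈ s := mem_of_mem_nhds hsn
  have hcontF : ∀ y ∈ s, Continuous (fun θ : ℝ => c θ * F (y + circleMap 0 ρ θ • v)) := by
    intro y hy
    refine hcc.mul ?_
    refine hlip.continuousOn.comp_continuous (by fun_prop) (fun θ => hmem y hy _ (hcirc θ))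
  have main := intervalIntegral.hasFDerivAt_integral_of_dominated_loc_of_lip (𝕜 := ℂ)
    (μ := MeasureTheory.volume) (a := 0) (b := 2 * Real.pi)
    (F := fun y θ => c θ * F (y + circleMap 0 ρ θ • v))
    (F' := fun θ => c θ • fderiv ℂ F (x + circleMap 0 ρ θ • v)) (x₀ := x) (s := s)
    (bound := fun θ => ‖c θ‖ * K) hsn
    (by filter_upwards [hsn] with y hy
        exact (hcontF y hy).aestronglyMeasurable)
    ((hcontF x hxs).intervalIntegrable _ _)
    (by
      refine hcc.aestronglyMeasurable.smul ?_
      have hm : Measurable (fun θ : ℝ => x + circleMap 0 ρ θ • v) :=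
        Continuous.measurable (by fun_prop)
      exact ((measurable_fderiv ℂ F).comp hm).aestronglyMeasurable)
    (by
      refine Filter.Eventually.of_forall (fun θ _ => ?_)
      refine LipschitzOnWith.of_dist_le_mul ?_
      intro y hy w hw
      have := hlip.dist_le_mul _ (hmem y hy _ (hcirc θ)) _ (hmem w hw _ (hcirc θ))
      rw [dist_add_right, dist_eq_norm (F _)] at this
      rw [dist_eq_norm, ← mul_sub, norm_mul, Real.coe_nnabs, abs_of_nonneg (by positivity), mul_assoc]
      exact mul_le_mul_of_nonneg_left this (norm_nonneg _))
    (Continuous.intervalIntegrable (by fun_prop) _ _)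
    (by
      refine Filter.Eventually.of_forall (fun θ _ => ?_)
      have h1 := (hat _ (hin (hmem x hxs _ (hcirc θ)))).hasFDerivAt
      have h2 := ((hasFDerivAt_comp_add_right (circleMap 0 ρ θ • v)).2 h1).const_mul (c θ)
      exact h2)
  refine main.2.differentiableAt.congr_of_eventuallyEq ?_
  filter_upwards [hsn] with y hy using hcauchy y hy

section polydisc

variable {n : ℕ}

lemma wp_diff (U : Set (EuclideanSpace ℂ (Fin n))) (hU : IsOpen U)
    (F : EuclideanSpace ℂ (Fin n) → ℂ) (hF : DifferentiableOn ℂ F U) (k : Fin n) :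
    DifferentiableOn ℂ (wpderiv k F) U :=
  aux_diff U hU F hF (EuclideanSpace.single k 1) (by simp)

lemma wp_iter_diff (U : Set (EuclideanSpace ℂ (Fin n))) (hU : IsOpen U)
    (F : EuclideanSpace ℂ (Fin n) → ℂ) (hF : DifferentiableOn ℂ F U) (k : Fin n) (p : ℕ) :
    DifferentiableOn ℂ ((wpderiv k)^[p] F) U := by
  induction p with
  | zero => simpa using hF
  | succ p ih =>
    rw [Function.iterate_succ_apply']
    exact wp_diff U hU _ ih k

lemma wp_fold_diff (U : Set (EuclideanSpace ℂ (Fin n))) (hU : IsOpen U)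
    (F : EuclideanSpace ℂ (Fin n) → ℂ) (hF : DifferentiableOn ℂ F U) (m : Fin n → ℕ)
    (l : List (Fin n)) :
    DifferentiableOn ℂ (l.foldr (fun k F => (wpderiv k)^[m k] F) F) U := by
  induction l with
  | nil => simpa using hF
  | cons k l ih => exact wp_iter_diff U hU _ ih k (m k)

lemma wp_lin (U : Set (EuclideanSpace ℂ (Fin n))) (hU : IsOpen U)
    (F G H : EuclideanSpace ℂ (Fin n) → ℂ) (hF : DifferentiableOn ℂ F U)
    (hG : DifferentiableOn ℂ G U) (a b : ℂ) (hH : ∀ x ∈ U, H x = a * F x + b * G x) (k : Fin n) :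
    ∀ x ∈ U, wpderiv k H x = a * wpderiv k F x + b * wpderiv k G x := by
  intro x hx
  have h1 : HasFDerivAt (fun x => a * F x + b * G x) (a • fderiv ℂ F x + b • fderiv ℂ G x) x :=
    ((hF.differentiableAt (hU.mem_nhds hx)).hasFDerivAt.const_mul a).add
      ((hG.differentiableAt (hU.mem_nhds hx)).hasFDerivAt.const_mul b)
  have h2 : H =ᶠ[nhds x] (fun x => a * F x + b * G x) := by
    filter_upwards [hU.mem_nhds hx] with y hy using hH y hy
  simp only [wpderiv]
  rw [h2.fderiv_eq, h1.fderiv]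
  simp

lemma wp_iter_lin (U : Set (EuclideanSpace ℂ (Fin n))) (hU : IsOpen U)
    (F G H : EuclideanSpace ℂ (Fin n) → ℂ) (hF : DifferentiableOn ℂ F U)
    (hG : DifferentiableOn ℂ G U) (a b : ℂ) (hH : ∀ x ∈ U, H x = a * F x + b * G x) (k : Fin n)
    (p : ℕ) :
    ∀ x ∈ U, (wpderiv k)^[p] H x = a * (wpderiv k)^[p] F x + b * (wpderiv k)^[p] G x := by
  induction p with
  | zero => simpa using hH
  | succ p ih =>
    simp only [Function.iterate_succ_apply']
    exact wp_lin U hU _ _ _ (wp_iter_diff U hU F hF k p) (wp_iter_diff U hU G hG k p) a b ih k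

lemma wp_fold_lin (U : Set (EuclideanSpace ℂ (Fin n))) (hU : IsOpen U)
    (F G H : EuclideanSpace ℂ (Fin n) → ℂ) (hF : DifferentiableOn ℂ F U)
    (hG : DifferentiableOn ℂ G U) (a b : ℂ) (hH : ∀ x ∈ U, H x = a * F x + b * G x)
    (m : Fin n → ℕ) (l : List (Fin n)) :
    ∀ x ∈ U, l.foldr (fun k F => (wpderiv k)^[m k] F) H x =
      a * l.foldr (fun k F => (wpderiv k)^[m k] F) F x +
      b * l.foldr (fun k F => (wpderiv k)^[m k] F) G x := by
  induction l with
  | nil => simpa using hH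
  | cons k l ih =>
    exact wp_iter_lin U hU _ _ _ (wp_fold_diff U hU F hF m l) (wp_fold_diff U hU G hG m l)
      a b ih k (m k)

lemma wp_slice_diff (U : Set (EuclideanSpace ℂ (Fin n))) (hU : IsOpen U)
    (F : EuclideanSpace ℂ (Fin n) → ℂ) (hF : DifferentiableOn ℂ F U) (k : Fin n)
    (y : EuclideanSpace ℂ (Fin n)) (ζ : ℂ)
    (hζ : y + ζ • EuclideanSpace.single k (1:ℂ) ∈ U) :
    HasDerivAt (fun ζ : ℂ => F (y + ζ • EuclideanSpace.single k (1:ℂ)))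
      (wpderiv k F (y + ζ • EuclideanSpace.single k (1:ℂ))) ζ := by
  have h3 : HasDerivAt (fun ζ : ℂ => y + ζ • EuclideanSpace.single k (1:ℂ))
      (EuclideanSpace.single k (1:ℂ)) ζ := by
    simpa using ((hasDerivAt_id ζ).smul_const (EuclideanSpace.single k (1:ℂ))).const_add y
  exact (hF.differentiableAt (hU.mem_nhds hζ)).hasFDerivAt.comp_hasDerivAt ζ h3

lemma wp_slice (U : Set (EuclideanSpace ℂ (Fin n))) (hU : IsOpen U)
    (F : EuclideanSpace ℂ (Fin n) → ℂ) (hF : DifferentiableOn ℂ F U) (k : Fin n)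
    (y : EuclideanSpace ℂ (Fin n)) (p : ℕ) :
    ∀ ζ : ℂ, y + ζ • EuclideanSpace.single k (1:ℂ) ∈ U →
    iteratedDeriv p (fun ζ : ℂ => F (y + ζ • EuclideanSpace.single k (1:ℂ))) ζ =
      (wpderiv k)^[p] F (y + ζ • EuclideanSpace.single k (1:ℂ)) := by
  induction p with
  | zero => intro ζ _; simp
  | succ p ih =>
    intro ζ hζ
    rw [iteratedDeriv_succ, Function.iterate_succ_apply']
    have hop : IsOpen {ζ : ℂ | y + ζ • EuclideanSpace.single k (1:ℂ) ∈ U} :=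
      hU.preimage (by fun_prop)
    have : iteratedDeriv p (fun ζ : ℂ => F (y + ζ • EuclideanSpace.single k (1:ℂ))) =ᶠ[nhds ζ]
        (fun ζ => (wpderiv k)^[p] F (y + ζ • EuclideanSpace.single k (1:ℂ))) := by
      filter_upwards [hop.mem_nhds hζ] with w hw using ih w hw
    rw [this.deriv_eq]
    exact (wp_slice_diff U hU _ (wp_iter_diff U hU F hF k p) k y ζ hζ).deriv

lemma wp_bound (U : Set (EuclideanSpace ℂ (Fin n))) (hU : IsOpen U)
    (H : EuclideanSpace ℂ (Fin n) → ℂ) (hH : DifferentiableOn ℂ H U)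
    (hre : ∀ x ∈ U, |(H x).re| ≤ 1)
    (m : Fin n → ℕ) (r : Fin n → ℝ) (hr : ∀ j, m j ≠ 0 → 0 < r j)
    (z : EuclideanSpace ℂ (Fin n)) (P : Set (EuclideanSpace ℂ (Fin n)))
    (hP : P = {w | ∀ j, ‖w j - z j‖ ≤ r j}) (hPU : P ⊆ U)
    (l : List (Fin n)) (hl : l.Nodup) :
    ((∀ j ∈ l, m j = 0) ∧ l.foldr (fun k F => (wpderiv k)^[m k] F) H = H) ∨
    ∀ w ∈ P, (∀ j ∈ l, w j = z j) → ‖l.foldr (fun k F => (wpderiv k)^[m k] F) H w‖ ≤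
      (4 / Real.pi) * (l.map (fun j => ((m j).factorial : ℝ) / r j ^ m j)).prod := by
  induction l with
  | nil => left; simp
  | cons k l ih =>
    have hkl : k ∉ l := (List.nodup_cons.1 hl).1
    specialize ih (List.nodup_cons.1 hl).2
    by_cases hk : m k = 0
    · rcases ih with ⟨h1, h2⟩ | h
      · left
        refine ⟨?_, ?_⟩
        · intro j hj
          rcases List.mem_cons.1 hj with rfl | hj
          · exact hk
          · exact h1 j hj
        · simp only [List.foldr_cons, hk, Function.iterate_zero, id, h2]
      · right
        intro w hw hwz
        simp only [List.foldr_cons, hk, Function.iterate_zero, id, List.map_cons, List.prod_cons]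
        simpa using h w hw (fun j hj => hwz j (List.mem_cons_of_mem _ hj))
    · right
      intro w hw hwz
      have hrk := hr k hk
      set G := l.foldr (fun k F => (wpderiv k)^[m k] F) H with hG
      have hGd : DifferentiableOn ℂ G U := wp_fold_diff U hU H hH m l
      have hsl : ∀ ζ ∈ Metric.closedBall (0:ℂ) (r k),
          w + ζ • EuclideanSpace.single k (1:ℂ) ∈ P := by
        intro ζ hζ
        rw [hP] at hw ⊢
        intro j
        by_cases hj : j = k
        · subst hj
          have := hwz j (by simp)
          simpa [this] using hζ
        · have := hw j
          simpa [hj] using this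
      have hslz : ∀ ζ : ℂ, ∀ j ∈ l, (w + ζ • EuclideanSpace.single k (1:ℂ)) j = z j := by
        intro ζ j hj
        have hjk : j ≠ k := fun h => hkl (h ▸ hj)
        simpa [hjk] using hwz j (List.mem_cons_of_mem _ hj)
      have hwU : w + (0:ℂ) • EuclideanSpace.single k (1:ℂ) ∈ U := by simpa using hPU hw
      have hit := wp_slice U hU G hGd k w (m k) 0 hwU
      have hdiff : DifferentiableOn ℂ (fun ζ : ℂ => G (w + ζ • EuclideanSpace.single k (1:ℂ)))
          (Metric.closedBall 0 (r k)) := fun ζ hζ =>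
        (wp_slice_diff U hU G hGd k w ζ (hPU (hsl ζ hζ))).differentiableAt.differentiableWithinAt
      simp only [zero_smul, add_zero] at hit
      simp only [List.foldr_cons, List.map_cons, List.prod_cons]
      rw [← hG, ← hit]
      rcases ih with ⟨h1, h2⟩ | h
      · have hprod : (l.map (fun j => ((m j).factorial : ℝ) / r j ^ m j)).prod = 1 := by
          apply List.prod_eq_one
          intro x hx
          obtain ⟨j, hj, rfl⟩ := List.mem_map.1 hx
          simp [h1 j hj]
        rw [hprod]
        refine (aux_one _ 0 (r k) hrk hdiff ?_ (m k) hk).trans (le_of_eq (by ring))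
        intro ζ hζ
        rw [h2]
        exact hre _ (hPU (hsl ζ hζ))
      · refine (Complex.norm_iteratedDeriv_le_of_forall_mem_sphere_norm_le (m k) hrk
          ((hdiff.mono Metric.closure_ball_subset_closedBall).diffContOnCl)
          (C := (4 / Real.pi) * (l.map (fun j => ((m j).factorial : ℝ) / r j ^ m j)).prod)
          ?_).trans (le_of_eq (by ring))
        intro ζ hζ
        exact h _ (hsl ζ (Metric.sphere_subset_closedBall hζ)) (hslz ζ)

end polydisc

lemma exists_phase (A B : ℂ) : ∃ u : ℂ, ‖u‖ = 1 ∧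
    ‖u * A + (starRingEnd ℂ) u * B‖ = ‖A‖ + ‖B‖ := by
  refine ⟨Complex.exp (((B.arg - A.arg) / 2 : ℝ) * Complex.I), Complex.norm_exp_ofReal_mul_I _, ?_⟩
  have e1 : (starRingEnd ℂ) (Complex.exp (((B.arg - A.arg) / 2 : ℝ) * Complex.I))
      = Complex.exp (-((((B.arg - A.arg) / 2 : ℝ) : ℂ) * Complex.I)) := by
    rw [← Complex.exp_conj, map_mul, Complex.conj_ofReal, Complex.conj_I, mul_neg]
  have key : Complex.exp (((B.arg - A.arg) / 2 : ℝ) * Complex.I) * A +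
      Complex.exp (-((((B.arg - A.arg) / 2 : ℝ) : ℂ) * Complex.I)) * B =
      ((‖A‖ + ‖B‖ : ℝ) : ℂ) * Complex.exp (((B.arg + A.arg) / 2 : ℝ) * Complex.I) := by
    have hA := Complex.norm_mul_exp_arg_mul_I A
    have hB := Complex.norm_mul_exp_arg_mul_I B
    have h1 : Complex.exp (((B.arg - A.arg) / 2 : ℝ) * Complex.I) * Complex.exp (A.arg * Complex.I)
        = Complex.exp (((B.arg + A.arg) / 2 : ℝ) * Complex.I) := by
      rw [← Complex.exp_add]; congr 1; push_cast; ring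
    have h2 : Complex.exp (-((((B.arg - A.arg) / 2 : ℝ) : ℂ) * Complex.I)) *
        Complex.exp (B.arg * Complex.I) = Complex.exp (((B.arg + A.arg) / 2 : ℝ) * Complex.I) := by
      rw [← Complex.exp_add]; congr 1; push_cast; ring
    rw [Complex.ofReal_add, add_mul]
    linear_combination (‖A‖ : ℂ) * h1 + (‖B‖ : ℂ) * h2 - (Complex.exp (((B.arg - A.arg) / 2 : ℝ) * Complex.I)) * hA -
      Complex.exp (-((((B.arg - A.arg) / 2 : ℝ) : ℂ) * Complex.I)) * hB
  rw [e1, key, norm_mul, Complex.norm_exp_ofReal_mul_I, mul_one, Complex.norm_real,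
    Real.norm_of_nonneg (by positivity)]

theorem stmt10 (n : ℕ) (hn : 2 ≤ n)
    (f h g : EuclideanSpace ℂ (Fin n) → ℂ)
    (hh : DifferentiableOn ℂ h (Metric.ball 0 1))
    (hg : DifferentiableOn ℂ g (Metric.ball 0 1))
    (hg0 : g 0 = 0)
    (hfd : ∀ z ∈ Metric.ball (0 : EuclideanSpace ℂ (Fin n)) 1,
      f z = h z + (starRingEnd ℂ) (g z))
    (hmap : ∀ z ∈ Metric.ball (0 : EuclideanSpace ℂ (Fin n)) 1, ‖f z‖ < 1)
    (z : EuclideanSpace ℂ (Fin n)) (hz : ‖z‖ < 1)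
    (m : Fin n → ℕ) (hm : m ≠ 0) :
    ‖wpderivMulti m h z‖ + ‖wpderivMulti m g z‖ ≤
      (4 / Real.pi) * (n : ℝ) ^ (((∑ j, m j : ℕ) : ℝ) / 2) *
        (Nat.choose (n + (∑ j, m j) - 1) (n - 1) : ℝ) * ((∑ j, m j).factorial : ℝ) *
        (∏ j, (1 + ‖z j‖) ^ (m j)) / (1 - ‖z‖ ^ 2) ^ (∑ j, m j) := by
  have hnpos : (0:ℝ) < n := by exact_mod_cast (by omega : 0 < n)
  set N := ∑ j, m j with hN
  have hNpos : 0 < N := by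
    obtain ⟨j, hj⟩ := Function.ne_iff.1 hm
    have hj' : m j ≠ 0 := hj
    have := Finset.single_le_sum (f := m) (fun i _ => Nat.zero_le _) (Finset.mem_univ j)
    omega
  have hNR : (0:ℝ) < N := by exact_mod_cast hNpos
  set D := 1 - ‖z‖ ^ 2 with hD
  have hDpos : 0 < D := by nlinarith [norm_nonneg z]
  have hzsq : ‖z‖ ^ 2 = ∑ j, ‖z j‖ ^ 2 := EuclideanSpace.norm_sq_eq z
  set q := Real.sqrt n with hq
  have hq1 : 1 < q := by
    rw [hq, Real.lt_sqrt (by norm_num)]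
    have : (2:ℝ) ≤ n := by exact_mod_cast hn
    linarith
  have hq0 : 0 < q := by linarith
  set p : Fin n → ℝ := fun j => (m j : ℝ) / N with hp
  have hpsum : ∑ j, p j = 1 := by
    simp only [hp]
    rw [← Finset.sum_div, ← Nat.cast_sum, ← hN, div_self hNR.ne']
  have hp0 : ∀ j, 0 ≤ p j := fun j => by simp only [hp]; positivity
  have hp1 : ∀ j, p j ≤ 1 := fun j => by
    rw [← hpsum]; exact Finset.single_le_sum (fun i _ => hp0 i) (Finset.mem_univ j)
  set r : Fin n → ℝ := fun j => D * p j / (q * (1 + ‖z j‖)) with hr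
  have hr0 : ∀ j, 0 ≤ r j := fun j => by
    have := hp0 j
    simp only [hr]; positivity
  have hrpos : ∀ j, m j ≠ 0 → 0 < r j := by
    intro j hj
    have : (0:ℝ) < m j := by exact_mod_cast Nat.pos_of_ne_zero hj
    simp only [hr, hp]; positivity
  -- the polydisc lies in the ball
  have hPU : {w : EuclideanSpace ℂ (Fin n) | ∀ j, ‖w j - z j‖ ≤ r j} ⊆ Metric.ball 0 1 := by
    intro w hw
    rw [mem_ball_zero_iff]
    have hw2 : ‖w‖ ^ 2 < 1 := by
      rw [EuclideanSpace.norm_sq_eq w]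
      have hterm : ∀ j, ‖w j‖ ^ 2 ≤ ‖z j‖ ^ 2 + D / q * p j := by
        intro j
        have h1 : ‖w j‖ ≤ ‖z j‖ + r j := by
          have := hw j
          calc ‖w j‖ = ‖z j + (w j - z j)‖ := by congr 1; ring
            _ ≤ _ := (norm_add_le _ _).trans (by linarith)
        set a := ‖z j‖ with ha
        have ha0 : 0 ≤ a := norm_nonneg _
        have hDa : D ≤ 1 - a ^ 2 := by
          have := Finset.single_le_sum (f := fun j => ‖z j‖ ^ 2) (fun i _ => by positivity)
            (Finset.mem_univ j)
          simp only at this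
          rw [hD, hzsq]; linarith
        have h2 : ‖w j‖ ^ 2 ≤ (a + r j) ^ 2 := by gcongr
        have hrD : r j * (q * (1 + a)) = D * p j := by
          simp only [hr]; rw [← ha]; field_simp
        -- r ≤ (1 - a)
        have h3 : r j ≤ 1 - a := by
          have h4 : r j * (q * (1 + a)) ≤ (1 - a) * (1 + a) := by
            rw [hrD]
            nlinarith [hp0 j, hp1 j]
          have h5 : r j * (1 + a) ≤ r j * (q * (1 + a)) := by
            have : (1 + a) ≤ q * (1 + a) := by nlinarith
            exact mul_le_mul_of_nonneg_left this (hr0 j)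
          have h6 : r j * (1 + a) ≤ (1 - a) * (1 + a) := h5.trans h4
          exact le_of_mul_le_mul_right h6 (by linarith)
        have h7 : D / q * p j = r j * (1 + a) := by
          field_simp; linarith
        rw [h7]
        nlinarith [hr0 j]
      calc ∑ j, ‖w j‖ ^ 2 ≤ ∑ j, (‖z j‖ ^ 2 + D / q * p j) := Finset.sum_le_sum fun j _ => hterm j
        _ = ‖z‖ ^ 2 + D / q := by
            rw [Finset.sum_add_distrib, ← Finset.mul_sum, hpsum, ← hzsq, mul_one]
        _ < ‖z‖ ^ 2 + D := by
            have := div_lt_self hDpos hq1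
            linarith
        _ = 1 := by rw [hD]; ring
    nlinarith [norm_nonneg w]
  have hU : IsOpen (Metric.ball (0 : EuclideanSpace ℂ (Fin n)) 1) := Metric.isOpen_ball
  have hzU : z ∈ Metric.ball (0 : EuclideanSpace ℂ (Fin n)) 1 := by simpa using hz
  -- phase reduction
  obtain ⟨u, hu, hphase⟩ := exists_phase (wpderivMulti m h z) (wpderivMulti m g z)
  set H : EuclideanSpace ℂ (Fin n) → ℂ := fun x => u * h x + (starRingEnd ℂ) u * g x with hH
  have hHd : DifferentiableOn ℂ H (Metric.ball 0 1) := (hh.const_mul u).add (hg.const_mul _)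
  have hHre : ∀ x ∈ Metric.ball (0 : EuclideanSpace ℂ (Fin n)) 1, |(H x).re| ≤ 1 := by
    intro x hx
    have h1 : (H x).re = (u * f x).re := by
      rw [hfd x hx]
      simp [hH, Complex.add_re, Complex.mul_re]
      ring
    rw [h1]
    refine (Complex.abs_re_le_norm _).trans ?_
    rw [norm_mul, hu, one_mul]
    exact (hmap x hx).le
  have hlin := wp_fold_lin _ hU h g H hh hg u ((starRingEnd ℂ) u) (fun x _ => rfl) m
    (List.finRange n) z hzU
  have hbd := wp_bound _ hU H hHd hHre m r hrpos z _ rfl hPU (List.finRange n)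
    (List.nodup_finRange n)
  have hbd2 : ‖wpderivMulti m h z‖ + ‖wpderivMulti m g z‖ ≤
      (4 / Real.pi) * ∏ j, (((m j).factorial : ℝ) / r j ^ m j) := by
    rw [← hphase]
    simp only [wpderivMulti, Fin.foldr_eq_finRange_foldr]
    rw [← hlin, Fin.prod_univ_def]
    rcases hbd with ⟨h1, -⟩ | hb
    · exact absurd (funext fun j => h1 j (List.mem_finRange j)) hm
    · exact hb z (fun j => by simpa using hr0 j) (fun j _ => rfl)
  refine hbd2.trans ?_
  have hmm : ∀ j, (0:ℝ) < (m j : ℝ) ^ m j := by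
    intro j
    rcases Nat.eq_zero_or_pos (m j) with h0 | h0
    · simp [h0]
    · have : (0:ℝ) < m j := by exact_mod_cast h0
      positivity
  have hfac : ∀ j, ((m j).factorial : ℝ) / r j ^ m j =
      (m j).factorial * (q ^ m j * (N:ℝ) ^ m j * (1 + ‖z j‖) ^ m j) / (D ^ m j * (m j : ℝ) ^ m j) := by
    intro j
    have h1 := hmm j
    have h2 : (0:ℝ) < 1 + ‖z j‖ := by positivity
    simp only [hr, hp, div_pow, mul_pow]
    field_simp
  have hqN : q ^ N = (n:ℝ) ^ ((N:ℝ) / 2) := by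
    rw [hq, Real.sqrt_eq_rpow, ← Real.rpow_natCast, ← Real.rpow_mul hnpos.le]
    congr 1; ring
  simp_rw [hfac]
  rw [Finset.prod_div_distrib, Finset.prod_mul_distrib, Finset.prod_mul_distrib,
    Finset.prod_mul_distrib, Finset.prod_mul_distrib, Finset.prod_pow_eq_pow_sum,
    Finset.prod_pow_eq_pow_sum, Finset.prod_pow_eq_pow_sum, ← hN, hqN]
  have hcomb := aux_comb_s10 n (by omega) m
  rw [← hN] at hcomb
  have hcombR : (N:ℝ) ^ N * ∏ j, ((m j).factorial : ℝ) ≤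
      (Nat.choose (n + N - 1) (n - 1) : ℝ) * (N.factorial : ℝ) * ∏ j, (m j : ℝ) ^ m j := by
    exact_mod_cast hcomb
  have hMpos : 0 < ∏ j, (m j : ℝ) ^ m j := Finset.prod_pos fun j _ => hmm j
  have hZ : 0 ≤ ∏ j, (1 + ‖z j‖) ^ m j := Finset.prod_nonneg fun j _ => by positivity
  set M := ∏ j, (m j : ℝ) ^ m j
  set Z := ∏ j, (1 + ‖z j‖) ^ m j
  set S := (n:ℝ) ^ ((N:ℝ) / 2)
  have hS : 0 ≤ S := by positivity
  have hDN : 0 < D ^ N := by positivity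
  rw [le_div_iff₀ hDN]
  have hpi := Real.pi_pos
  calc _ = (4 / Real.pi) * S * Z * (((N:ℝ) ^ N * ∏ j, ((m j).factorial : ℝ)) / M) := by
        field_simp
    _ ≤ (4 / Real.pi) * S * Z *
        ((Nat.choose (n + N - 1) (n - 1) : ℝ) * (N.factorial : ℝ)) := by
        refine mul_le_mul_of_nonneg_left ?_ (by positivity)
        rwa [div_le_iff₀ hMpos]
    _ = _ := by ring
end

section
/- Let f be a pluriharmonic function on the unit polydisc 𝔹_{ℓ_∞ⁿ} with sup_{z ∈ 𝔹_{ℓ_∞ⁿ}} Re(f(z)) ≤ 1. Then for every z ∈ 𝔹_{ℓ_∞ⁿ} and every nonzero multi-index m = (m₁,…,m_n), | ∂^{|m|} f(z)/∂z₁^{m₁}⋯∂z_n^{m_n} + conj( ∂^{|m|} f(z)/∂z̄₁^{m₁}⋯∂z̄_n^{m_n} ) | ≤ 2 m! (1 − Re(f(z))) (1 + ‖z‖_∞)^{|m|−N} / (1 − ‖z‖_∞²)^{|m|}, where N is the number of indices j with m_j ≠ 0. -/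
open scoped BigOperators

/-- The Wirtinger partial derivative `∂/∂z_k` of a holomorphic function on a
domain in `ℂ^n` with the sup norm (so `Metric.ball 0 1` is the polydisc). -/
noncomputable def wpd {n : ℕ} (k : Fin n) (h : (Fin n → ℂ) → ℂ) : (Fin n → ℂ) → ℂ :=
  fun z => fderiv ℂ h z (Pi.single k 1)

/-- The iterated Wirtinger derivative `∂^{|m|}/∂z₁^{m₁}⋯∂z_n^{m_n}`. -/
noncomputable def wpdMulti {n : ℕ} (m : Fin n → ℕ) (h : (Fin n → ℂ) → ℂ) :
    (Fin n → ℂ) → ℂ :=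
  Fin.foldr n (fun k F => (wpd k)^[m k] F) h

section Helpers

open Metric Complex Real

lemma cauchy1 {z : ℂ} {R : ℝ} (hz : ‖z‖ < R) (hR : R < 1) (b : ℕ) : ∀ H : ℂ → ℂ,
    DifferentiableOn ℂ H (ball 0 1) →
    (2 * π * I) * iteratedDeriv b H z =
      (b.factorial : ℂ) * ∮ ζ in C(0, R), (1 / (ζ - z) ^ (b + 1)) * H ζ := by
  have hR0 : 0 < R := (norm_nonneg z).trans_lt hz
  have hsub : closedBall (0:ℂ) R ⊆ ball 0 1 := closedBall_subset_ball hR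
  have hne : ∀ ζ ∈ sphere (0:ℂ) R, ζ - z ≠ 0 := by
    intro ζ hζ h0
    rw [sub_eq_zero] at h0
    simp [h0] at hζ
    linarith
  induction b with
  | zero =>
    intro H hH
    have := (hH.mono hsub).circleIntegral_sub_inv_smul (w := z) (by simpa using hz)
    simpa using this.symm
  | succ b ih =>
    intro H hH
    have hH' : DifferentiableOn ℂ (deriv H) (ball 0 1) := hH.deriv isOpen_ball
    rw [iteratedDeriv_succ', ih _ hH']
    have hcH : ContinuousOn H (sphere 0 R) :=
      hH.continuousOn.mono (sphere_subset_closedBall.trans hsub)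
    have hcH' : ContinuousOn (deriv H) (sphere 0 R) :=
      hH'.continuousOn.mono (sphere_subset_closedBall.trans hsub)
    have key : (∮ ζ in C(0, R), (1 / (ζ - z) ^ (b + 1)) * deriv H ζ
        - (b + 1 : ℂ) * ((1 / (ζ - z) ^ (b + 1 + 1)) * H ζ)) = 0 := by
      refine circleIntegral.integral_eq_zero_of_hasDerivWithinAt
        (f := fun ζ => (1 / (ζ - z) ^ (b + 1)) * H ζ) hR0.le ?_
      intro ζ hζ
      have h1 := hne ζ hζ
      have h2 : HasDerivAt H (deriv H ζ) ζ :=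
        (hH.differentiableAt (isOpen_ball.mem_nhds (hsub (sphere_subset_closedBall hζ)))).hasDerivAt
      have h3 : HasDerivAt (fun ζ : ℂ => (ζ - z) ^ (b + 1)) (((b + 1 : ℕ) : ℂ) * (ζ - z) ^ b * 1) ζ :=
        ((hasDerivAt_id ζ).sub_const z).fun_pow (b+1)
      have h4 := ((hasDerivAt_const ζ (1:ℂ)).div h3 (pow_ne_zero _ h1)).mul h2
      refine HasDerivAt.hasDerivWithinAt ?_
      refine h4.congr_deriv ?_
      simp only [Pi.div_apply]
      push_cast
      field_simp
      ring
    rw [circleIntegral.integral_sub] at key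
    · rw [sub_eq_zero] at key
      rw [key, circleIntegral.integral_const_mul, Nat.factorial_succ]
      push_cast; ring
    · apply ContinuousOn.circleIntegrable hR0.le
      fun_prop (disch := intro x hx; exact pow_ne_zero _ (hne x hx))
    · apply ContinuousOn.circleIntegrable hR0.le
      fun_prop (disch := intro x hx; exact pow_ne_zero _ (hne x hx))

lemma cavg {z : ℂ} {R : ℝ} (hz : ‖z‖ < R) (hR : R < 1) (b : ℕ) (H : ℂ → ℂ)
    (hH : DifferentiableOn ℂ H (ball 0 1)) :
    iteratedDeriv b H z =
      (b.factorial : ℂ) * circleAverage (fun ζ => H ζ * (ζ / (ζ - z) ^ (b + 1))) 0 R := by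
  have hR0 : 0 < R := (norm_nonneg z).trans_lt hz
  have h := cauchy1 hz hR b H hH
  rw [circleAverage_eq_circleIntegral hR0.ne']
  have : (∮ ζ in C(0, R), (ζ - 0)⁻¹ • (H ζ * (ζ / (ζ - z) ^ (b + 1)))) =
      ∮ ζ in C(0, R), (1 / (ζ - z) ^ (b + 1)) * H ζ := by
    apply circleIntegral.integral_congr hR0.le
    intro ζ hζ
    have : ζ ≠ 0 := by rintro rfl; simp at hζ; linarith
    simp
    field_simp
  rw [this, smul_eq_mul, mul_left_comm, ← h, inv_mul_cancel_left₀ two_pi_I_ne_zero]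

lemma conjavg {z : ℂ} {R : ℝ} (hz : ‖z‖ < R) (hR : R < 1) (b : ℕ) (hb : b ≠ 0) (H : ℂ → ℂ)
    (hH : DifferentiableOn ℂ H (ball 0 1)) :
    circleAverage (fun ζ => (starRingEnd ℂ) (H ζ) * (ζ / (ζ - z) ^ (b + 1))) 0 R = 0 := by
  have hR0 : 0 < R := (norm_nonneg z).trans_lt hz
  have hsub : closedBall (0:ℂ) R ⊆ ball 0 1 := closedBall_subset_ball hR
  have hne : ∀ ζ ∈ closedBall (0:ℂ) R, (R:ℂ) ^ 2 - (starRingEnd ℂ) z * ζ ≠ 0 := by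
    intro ζ hζ h0
    rw [sub_eq_zero] at h0
    have := congrArg norm h0
    simp [abs_of_pos hR0] at this hζ
    nlinarith [norm_nonneg z, norm_nonneg ζ]
  set G : ℂ → ℂ := fun ζ => H ζ * ((R:ℂ) ^ 2 * ζ ^ b / ((R:ℂ) ^ 2 - (starRingEnd ℂ) z * ζ) ^ (b + 1))
    with hG
  have hGd : DifferentiableOn ℂ G (closedBall 0 R) := by
    have := hH.mono hsub
    fun_prop (disch := intro x hx; exact pow_ne_zero _ (hne x hx))
  have hG0 : circleAverage G 0 R = 0 := by
    have : DiffContOnCl ℂ G (ball 0 |R|) := by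
      rw [abs_of_pos hR0]
      exact (hGd.mono closure_ball_subset_closedBall).diffContOnCl
    rw [this.circleAverage]
    simp [hG, hb]
  have hGi : CircleIntegrable G 0 R :=
    (hGd.continuousOn.mono sphere_subset_closedBall).circleIntegrable hR0.le
  have := Complex.conjCLE.toContinuousLinearMap.circleAverage_comp_comm hGi
  rw [hG0, map_zero] at this
  refine Eq.trans ?_ this
  apply circleAverage_congr_sphere
  intro ζ hζ
  rw [abs_of_pos hR0] at hζ
  have h0 : ζ ≠ 0 := by rintro rfl; simp at hζ; linarith
  have h1 : ζ * (starRingEnd ℂ) ζ = (R:ℂ)^2 := by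
    rw [mul_conj, normSq_eq_norm_sq]; simp at hζ; simp [hζ]
  have hc : (starRingEnd ℂ) ζ ≠ 0 := by simpa using h0
  have h2 : (R:ℂ)^2 - z * (starRingEnd ℂ) ζ = (ζ - z) * (starRingEnd ℂ) ζ := by
    rw [← h1]; ring
  simp [hG, -div_eq_zero_iff, -mul_eq_mul_left_iff]
  rw [h2, mul_pow, ← h1]
  congr 1
  have h3 : ζ - z ≠ 0 := by
    intro h; rw [sub_eq_zero] at h; subst h; simp at hζ; linarith
  field_simp
  ring

lemma core {z : ℂ} {R : ℝ} (hz : ‖z‖ < R) (hR : R < 1) (b : ℕ) (Φ Q : ℂ → ℂ)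
    (hΦ : ContinuousOn Φ (ball 0 1))
    (hQ : DifferentiableOn ℂ Q (ball 0 1)) (hle : ∀ ζ ∈ ball (0:ℂ) 1, ‖Φ ζ‖ ≤ (Q ζ).re) :
    ‖circleAverage (fun ζ => Φ ζ * (ζ / (ζ - z) ^ (b + 1 + 1))) 0 R‖ ≤
      R / ((R - ‖z‖) ^ b * (R ^ 2 - ‖z‖ ^ 2)) * (Q z).re := by
  have hR0 : 0 < R := (norm_nonneg z).trans_lt hz
  have hsub : closedBall (0:ℂ) R ⊆ ball 0 1 := closedBall_subset_ball hR
  have hss : sphere (0:ℂ) R ⊆ ball 0 1 := sphere_subset_closedBall.trans hsub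
  have hne : ∀ ζ ∈ sphere (0:ℂ) R, ζ - z ≠ 0 := by
    intro ζ hζ h0
    rw [sub_eq_zero] at h0
    simp [h0] at hζ
    linarith
  have hcΦ := hΦ.mono hss
  have hcQ := hQ.continuousOn.mono hss
  set p : ℂ → ℝ := fun ζ => (R ^ 2 - ‖z‖ ^ 2) / ‖ζ - z‖ ^ 2 with hp
  have hpois : circleAverage (fun ζ => p ζ * (Q ζ).re) 0 R = (Q z).re := by
    have h := ((hQ.mono hsub).mono closure_ball_subset_closedBall).diffContOnCl.circleAverage_poissonKernel_smul' (w := z) (by simpa using hz)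
    have hi : CircleIntegrable (fun ζ => p ζ • Q ζ) 0 R := by
      apply ContinuousOn.circleIntegrable hR0.le
      fun_prop (disch := intro x hx; exact pow_ne_zero _ (norm_ne_zero_iff.2 (hne x hx)))
    have h2 := Complex.reCLM.circleAverage_comp_comm hi
    have h3 : circleAverage (fun ζ => p ζ • Q ζ) 0 R = Q z := by
      rw [← h]
      apply circleAverage_congr_sphere
      intro ζ hζ
      rw [abs_of_pos hR0] at hζ
      simp at hζ
      simp [hp, hζ]
    rw [h3] at h2
    simpa [Function.comp_def] using h2
  set K := R / ((R - ‖z‖) ^ b * (R ^ 2 - ‖z‖ ^ 2)) with hK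
  have hi1 : CircleIntegrable (fun ζ => ‖Φ ζ * (ζ / (ζ - z) ^ (b + 1 + 1))‖) 0 R := by
    apply ContinuousOn.circleIntegrable hR0.le
    fun_prop (disch := intro x hx; exact pow_ne_zero _ (hne x hx))
  have hi2 : CircleIntegrable (fun ζ => K • (p ζ * (Q ζ).re)) 0 R := by
    apply ContinuousOn.circleIntegrable hR0.le
    have : ContinuousOn (fun ζ => (Q ζ).re) (sphere 0 R) := Complex.continuous_re.comp_continuousOn hcQ
    fun_prop (disch := intro x hx; exact pow_ne_zero _ (norm_ne_zero_iff.2 (hne x hx)))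
  calc _ ≤ circleAverage (fun ζ => ‖Φ ζ * (ζ / (ζ - z) ^ (b + 1 + 1))‖) 0 R := by
        rw [circleAverage, circleAverage, norm_smul, Real.norm_of_nonneg (by positivity), smul_eq_mul]
        gcongr
        exact intervalIntegral.norm_integral_le_integral_norm Real.two_pi_pos.le
    _ ≤ circleAverage (fun ζ => K • (p ζ * (Q ζ).re)) 0 R := by
        apply circleAverage_mono hi1 hi2
        intro ζ hζ
        rw [abs_of_pos hR0] at hζ
        have h1 := hle ζ (hss hζ)
        have h2 : 0 < ‖ζ - z‖ := norm_pos_iff.2 (hne ζ hζ)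
        have h3 : R - ‖z‖ ≤ ‖ζ - z‖ := by
          have := norm_sub_norm_le ζ z
          simp at hζ; linarith
        have h4 : 0 < R ^ 2 - ‖z‖ ^ 2 := by nlinarith [norm_nonneg z]
        have h5 : ‖ζ‖ = R := by simpa using hζ
        have h6 : 0 < R - ‖z‖ := by linarith
        rw [norm_mul, norm_div, norm_pow, h5, smul_eq_mul]
        have : K * p ζ = R / ((R - ‖z‖) ^ b * ‖ζ - z‖ ^ 2) := by
          rw [hK, hp]; field_simp
        rw [← mul_assoc, this, mul_comm]
        apply mul_le_mul _ h1 (norm_nonneg _) (by positivity)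
        rw [add_assoc, pow_add]
        gcongr
    _ = K * (Q z).re := by
        rw [circleAverage_fun_smul, hpois, smul_eq_mul]

noncomputable def Cb (b : ℕ) (r : ℝ) : ℝ := (1 + r) ^ (b - 1) / (1 - r ^ 2) ^ b

lemma core' {z : ℂ} (hz : ‖z‖ < 1) (b : ℕ) (D q : ℝ)
    (h : ∀ R : ℝ, ‖z‖ < R → R < 1 → D ≤ R / ((R - ‖z‖) ^ b * (R ^ 2 - ‖z‖ ^ 2)) * q) :
    D ≤ Cb (b + 1) ‖z‖ * q := by
  have h4 : 0 < 1 - ‖z‖ := by linarith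
  have h5 : 0 < 1 + ‖z‖ := by linarith [norm_nonneg z]
  have h6 : 0 < (1:ℝ) ^ 2 - ‖z‖ ^ 2 := by nlinarith [norm_nonneg z]
  have hl : Filter.Tendsto (fun R : ℝ => R / ((R - ‖z‖) ^ b * (R ^ 2 - ‖z‖ ^ 2)) * q)
      (nhdsWithin 1 (Set.Iio 1)) (nhds (1 / ((1 - ‖z‖) ^ b * (1 ^ 2 - ‖z‖ ^ 2)) * q)) := by
    apply Filter.Tendsto.mono_left _ nhdsWithin_le_nhds
    apply ContinuousAt.tendsto (f := fun R : ℝ => R / ((R - ‖z‖) ^ b * (R ^ 2 - ‖z‖ ^ 2)) * q)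
    have : (1 - ‖z‖) ^ b * ((1:ℝ) ^ 2 - ‖z‖ ^ 2) ≠ 0 := by positivity
    fun_prop (disch := exact this)
  have he : Cb (b + 1) ‖z‖ = 1 / ((1 - ‖z‖) ^ b * (1 ^ 2 - ‖z‖ ^ 2)) := by
    have : 1 - ‖z‖ ^ 2 = (1 - ‖z‖) * (1 + ‖z‖) := by ring
    rw [Cb, one_pow, this, pow_succ, mul_pow]
    simp
    field_simp
  rw [he]
  apply ge_of_tendsto hl
  filter_upwards [Ioo_mem_nhdsLT hz] with R hR
  exact h R hR.1 hR.2

lemma lemA {z : ℂ} (hz : ‖z‖ < 1) (b : ℕ) (hb : b ≠ 0) (H Q : ℂ → ℂ)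
    (hH : DifferentiableOn ℂ H (ball 0 1))
    (hQ : DifferentiableOn ℂ Q (ball 0 1)) (hle : ∀ ζ ∈ ball (0:ℂ) 1, ‖H ζ‖ ≤ (Q ζ).re) :
    ‖iteratedDeriv b H z‖ ≤ b.factorial * Cb b ‖z‖ * (Q z).re := by
  obtain ⟨b, rfl⟩ := Nat.exists_eq_succ_of_ne_zero hb
  rw [mul_assoc, mul_comm, ← div_le_iff₀ (by positivity), mul_comm]
  rw [mul_comm]
  apply core' hz
  intro R h1 h2
  rw [cavg h1 h2 _ H hH, norm_mul, Complex.norm_natCast, mul_div_cancel_left₀ _ (by positivity)]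
  exact core h1 h2 b H Q hH.continuousOn hQ hle

lemma lemB {z : ℂ} (hz : ‖z‖ < 1) (b : ℕ) (hb : b ≠ 0) (F : ℂ → ℂ)
    (hF : DifferentiableOn ℂ F (ball 0 1)) (hle : ∀ ζ ∈ ball (0:ℂ) 1, (F ζ).re ≤ 1) :
    ‖iteratedDeriv b F z‖ ≤ b.factorial * Cb b ‖z‖ * (2 * (1 - (F z).re)) := by
  have hP : DifferentiableOn ℂ (fun ζ => 1 - F ζ) (ball 0 1) := by fun_prop
  have hit : ‖iteratedDeriv b F z‖ = ‖iteratedDeriv b (fun ζ => 1 - F ζ) z‖ := by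
    rw [iteratedDeriv_const_sub (Nat.pos_of_ne_zero hb)]
    rw [iteratedDeriv_neg, norm_neg]
  rw [hit]
  obtain ⟨b, rfl⟩ := Nat.exists_eq_succ_of_ne_zero hb
  rw [mul_assoc, mul_comm, ← div_le_iff₀ (by positivity)]
  apply core' hz
  intro R h1 h2
  have hR0 : 0 < R := (norm_nonneg z).trans_lt h1
  have hsub : closedBall (0:ℂ) R ⊆ ball 0 1 := closedBall_subset_ball h2
  have hss : sphere (0:ℂ) R ⊆ ball 0 1 := sphere_subset_closedBall.trans hsub
  have hne : ∀ ζ ∈ sphere (0:ℂ) R, ζ - z ≠ 0 := by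
    intro ζ hζ h0
    rw [sub_eq_zero] at h0
    simp [h0] at hζ
    linarith
  have hcP := hP.continuousOn.mono hss
  rw [cavg h1 h2 _ _ hP, norm_mul, Complex.norm_natCast, mul_div_cancel_left₀ _ (by positivity)]
  have hconj := conjavg h1 h2 (b+1) hb _ hP
  have hΦ : ContinuousOn (fun ζ => (1 - F ζ) + (starRingEnd ℂ) (1 - F ζ)) (ball 0 1) :=
    hP.continuousOn.add (Complex.continuous_conj.comp_continuousOn hP.continuousOn)
  have hcore := core h1 h2 b (fun ζ => (1 - F ζ) + (starRingEnd ℂ) (1 - F ζ))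
    (fun ζ => 2 * (1 - F ζ)) hΦ (by fun_prop) (by
      intro ζ hζ
      rw [Complex.add_conj]
      have := hle ζ hζ
      rw [norm_real, Real.norm_of_nonneg] <;> simp
      linarith)
  have hsum : circleAverage (fun ζ => ((1 - F ζ) + (starRingEnd ℂ) (1 - F ζ)) * (ζ / (ζ - z) ^ (b + 1 + 1))) 0 R
     = circleAverage (fun ζ => (1 - F ζ) * (ζ / (ζ - z) ^ (b + 1 + 1))) 0 R := by
    simp_rw [add_mul]
    rw [circleAverage_fun_add, hconj, add_zero]
    · apply ContinuousOn.circleIntegrable hR0.le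
      fun_prop (disch := intro x hx; exact pow_ne_zero _ (hne x hx))
    · apply ContinuousOn.circleIntegrable hR0.le
      have := Complex.continuous_conj.comp_continuousOn hcP
      simp only [Function.comp_def] at this
      refine this.mul ?_
      fun_prop (disch := intro x hx; exact pow_ne_zero _ (hne x hx))
  rw [hsum] at hcore
  simpa using hcore


lemma update_mem {n : ℕ} {w : Fin n → ℂ} (hw : w ∈ ball (0 : Fin n → ℂ) 1) (k : Fin n) {t : ℂ}
    (ht : t ∈ ball (0:ℂ) 1) : Function.update w k t ∈ ball (0 : Fin n → ℂ) 1 := by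
  simp only [mem_ball_zero_iff, pi_norm_lt_iff one_pos] at *
  intro i
  by_cases h : i = k
  · subst h; simpa using ht
  · simpa [h] using hw i

lemma wpd_update {n : ℕ} (k : Fin n) {H : (Fin n → ℂ) → ℂ} (hH : DifferentiableOn ℂ H (ball 0 1))
    {w : Fin n → ℂ} (hw : w ∈ ball (0 : Fin n → ℂ) 1) {t : ℂ} (ht : t ∈ ball (0:ℂ) 1) :
    HasDerivAt (fun s => H (Function.update w k s)) (wpd k H (Function.update w k t)) t := by
  have h1 := (hH.differentiableAt (isOpen_ball.mem_nhds (update_mem hw k ht))).hasFDerivAt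
  exact h1.comp_hasDerivAt t (hasDerivAt_update w k t)

lemma wpd_diff {n : ℕ} (k : Fin n) {H : (Fin n → ℂ) → ℂ} (hH : DifferentiableOn ℂ H (ball 0 1)) :
    DifferentiableOn ℂ (wpd k H) (ball 0 1) := by
  intro w₀ hw₀
  apply DifferentiableAt.differentiableWithinAt
  obtain ⟨r, hr, hrsub⟩ := Metric.isOpen_iff.1 isOpen_ball w₀ hw₀
  obtain ⟨ρ, hρ, hρr⟩ : ∃ ρ > 0, 3 * ρ < r := ⟨r / 4, by linarith, by linarith⟩
  have hc3 : closedBall w₀ (3 * ρ) ⊆ ball 0 1 := (closedBall_subset_ball hρr).trans hrsub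
  have hd : ∀ x ∈ closedBall w₀ (3 * ρ), DifferentiableAt ℂ H x := fun x hx =>
    hH.differentiableAt (isOpen_ball.mem_nhds (hc3 hx))
  obtain ⟨M, hM⟩ := (isCompact_closedBall w₀ (3 * ρ)).exists_bound_of_continuousOn
    (hH.continuousOn.mono hc3)
  have hM0 : 0 ≤ M := (norm_nonneg _).trans (hM w₀ (mem_closedBall_self (by positivity)))
  set C : NNReal := ⟨(2 * M) / ρ, by positivity⟩ with hC
  have hlip : LipschitzOnWith C H (ball w₀ (2 * ρ)) := by
    apply Convex.lipschitzOnWith_of_nnnorm_fderiv_le (𝕜 := ℂ)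
    · intro x hx
      exact hd x (closedBall_subset_closedBall (by linarith) (ball_subset_closedBall hx))
    · intro x hx
      have hs : ball x ρ ⊆ closedBall w₀ (3 * ρ) := by
        intro y hy
        rw [mem_ball] at hx hy
        rw [mem_closedBall]
        linarith [dist_triangle y x w₀]
      rw [← NNReal.coe_le_coe, coe_nnnorm]
      apply norm_fderiv_le_div_of_mapsTo_ball _ _ hρ
      · exact fun y hy => (hd y (hs hy)).differentiableWithinAt
      · intro y hy
        rw [mem_closedBall, dist_eq_norm]
        have := hM y (hs hy)
        have := hM x (hs (mem_ball_self hρ))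
        linarith [norm_sub_le (H y) (H x)]
    · exact convex_ball _ _
  -- the integral formula
  set e : ℝ → (Fin n → ℂ) := fun θ => circleMap 0 ρ θ • Pi.single k 1 with he
  have hec : Continuous e := by fun_prop
  have hen : ∀ θ, ‖e θ‖ ≤ ρ := by
    intro θ
    rw [he]
    simp only [norm_smul, norm_circleMap_zero, Pi.norm_single]
    simp [abs_of_pos hρ]
  have hmem : ∀ x ∈ ball w₀ ρ, ∀ θ, x + e θ ∈ ball w₀ (2 * ρ) := by
    intro x hx θ
    rw [mem_ball, dist_eq_norm] at hx ⊢
    have := norm_add_le (x - w₀) (e θ)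
    rw [show x + e θ - w₀ = x - w₀ + e θ by abel]
    linarith [hen θ]
  set κ : ℝ → ℂ := fun θ => (2 * π * I)⁻¹ * (deriv (circleMap 0 ρ) θ * (1 / (circleMap 0 ρ θ - 0) ^ 2))
    with hκ
  have hκc : Continuous κ := by
    have : ∀ θ, (circleMap 0 ρ θ - 0) ^ 2 ≠ 0 := by
      intro θ; simp [circleMap_eq_center_iff, hρ.ne']
    simp only [hκ, deriv_circleMap]
    fun_prop (disch := exact this _)
  have hform : ∀ x ∈ ball w₀ ρ, wpd k H x = ∫ θ in (0:ℝ)..2 * π, κ θ * H (x + e θ) := by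
    intro x hx
    have hline : ∀ s ∈ closedBall (0:ℂ) ρ, HasDerivAt (fun s : ℂ => H (x + s • Pi.single k 1))
        (fderiv ℂ H (x + s • Pi.single k 1) (Pi.single k 1)) s := by
      intro s hs
      have hxs : x + s • (Pi.single k 1 : Fin n → ℂ) ∈ closedBall w₀ (3 * ρ) := by
        rw [mem_ball, dist_eq_norm] at hx
        rw [mem_closedBall, dist_eq_norm]
        rw [show x + s • (Pi.single k 1 : Fin n → ℂ) - w₀ = x - w₀ + s • Pi.single k 1 by abel]
        have := norm_add_le (x - w₀) (s • (Pi.single k 1 : Fin n → ℂ))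
        rw [norm_smul, Pi.norm_single] at this
        simp at this hs
        linarith
      have h1 : HasDerivAt (fun s : ℂ => x + s • (Pi.single k 1 : Fin n → ℂ)) (Pi.single k 1) s := by
        simpa using ((hasDerivAt_id s).smul_const (Pi.single k 1 : Fin n → ℂ)).const_add x
      exact (hd _ hxs).hasFDerivAt.comp_hasDerivAt s h1
    have h2 := DifferentiableOn.deriv_eq_smul_circleIntegral (c := (0:ℂ)) hρ
      (f := fun s : ℂ => H (x + s • Pi.single k 1))
      (fun s hs => (hline s hs).differentiableAt.differentiableWithinAt)
    rw [(hline 0 (by simp [hρ.le])).deriv] at h2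
    simp only [zero_smul, add_zero, smul_eq_mul] at h2
    have h3 : wpd k H x = (2 * π * I)⁻¹ * ((2 * π * I) * fderiv ℂ H x (Pi.single k 1)) := by
      rw [inv_mul_cancel_left₀ two_pi_I_ne_zero]; rfl
    rw [h3, ← h2, circleIntegral, ← intervalIntegral.integral_const_mul]
    congr 1
    ext θ
    simp only [hκ, he, smul_eq_mul]
    ring
  have hcont : ∀ x ∈ ball w₀ ρ, Continuous (fun θ => κ θ * H (x + e θ)) := by
    intro x hx
    refine hκc.mul ?_
    refine hlip.continuousOn.comp_continuous (by fun_prop) (hmem x hx)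
  have hmain := intervalIntegral.hasFDerivAt_integral_of_dominated_loc_of_lip (𝕜 := ℂ)
    (μ := MeasureTheory.volume) (a := 0) (b := 2 * π)
    (F := fun x θ => κ θ * H (x + e θ)) (F' := fun θ => κ θ • fderiv ℂ H (w₀ + e θ))
    (bound := fun θ => ‖κ θ‖ * C) (x₀ := w₀) (s := ball w₀ ρ) (ball_mem_nhds _ hρ)
    (by
      filter_upwards [ball_mem_nhds w₀ hρ] with x hx
      exact (hcont x hx).aestronglyMeasurable)
    ((hcont w₀ (mem_ball_self hρ)).intervalIntegrable _ _)
    (by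
      refine hκc.aestronglyMeasurable.smul ?_
      have : Measurable (fun θ => fderiv ℂ H (w₀ + e θ)) :=
        (measurable_fderiv ℂ H).comp (by fun_prop : Continuous fun θ => w₀ + e θ).measurable
      exact this.aestronglyMeasurable)
    (by
      refine Filter.Eventually.of_forall fun θ _ => ?_
      refine LipschitzOnWith.of_dist_le_mul ?_
      intro x hx y hy
      have h1 := hlip.dist_le_mul (x + e θ) (hmem x hx θ) (y + e θ) (hmem y hy θ)
      rw [dist_add_right] at h1
      rw [dist_eq_norm, ← mul_sub, norm_mul, ← dist_eq_norm]
      have : (Real.nnabs (‖κ θ‖ * C) : ℝ) = ‖κ θ‖ * C := by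
        rw [Real.coe_nnabs, abs_of_nonneg (by positivity)]
      rw [this, mul_assoc]
      gcongr)
    (by
      apply Continuous.intervalIntegrable
      fun_prop)
    (by
      refine Filter.Eventually.of_forall fun θ _ => ?_
      have hm := hmem w₀ (mem_ball_self hρ) θ
      have h1 := (hd _ (closedBall_subset_closedBall (by linarith) (ball_subset_closedBall hm))).hasFDerivAt
      have h2 : HasFDerivAt (fun x => H (x + e θ)) (fderiv ℂ H (w₀ + e θ)) w₀ :=
        (hasFDerivAt_comp_add_right (e θ)).2 h1
      exact h2.const_mul (κ θ))
  refine hmain.2.differentiableAt.congr_of_eventuallyEq ?_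
  filter_upwards [ball_mem_nhds w₀ hρ] with x hx using hform x hx

lemma wpd_iter {n : ℕ} (k : Fin n) (a : ℕ) : ∀ {H : (Fin n → ℂ) → ℂ},
    DifferentiableOn ℂ H (ball 0 1) →
    DifferentiableOn ℂ ((wpd k)^[a] H) (ball 0 1) ∧
    ∀ w ∈ ball (0 : Fin n → ℂ) 1, ∀ t ∈ ball (0:ℂ) 1,
      (wpd k)^[a] H (Function.update w k t) =
        iteratedDeriv a (fun s => H (Function.update w k s)) t := by
  induction a with
  | zero => intro H hH; simpa using hH
  | succ a ih =>
    intro H hH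
    obtain ⟨h1, h2⟩ := ih (wpd_diff k hH)
    rw [Function.iterate_succ_apply]
    refine ⟨h1, fun w hw t ht => ?_⟩
    rw [h2 w hw t ht, iteratedDeriv_succ']
    apply Filter.EventuallyEq.iteratedDeriv_eq
    filter_upwards [isOpen_ball.mem_nhds ht] with s hs
    exact (wpd_update k hH hw hs).deriv.symm

lemma wpd_add {n : ℕ} (k : Fin n) {H G F : (Fin n → ℂ) → ℂ} (hH : DifferentiableOn ℂ H (ball 0 1))
    (hG : DifferentiableOn ℂ G (ball 0 1)) (hF : ∀ w ∈ ball (0 : Fin n → ℂ) 1, F w = H w + G w) :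
    ∀ w ∈ ball (0 : Fin n → ℂ) 1, wpd k F w = wpd k H w + wpd k G w := by
  intro w hw
  have hm := isOpen_ball.mem_nhds hw
  have : F =ᶠ[nhds w] (fun w => H w + G w) := by
    filter_upwards [hm] with x hx using hF x hx
  simp only [wpd]
  rw [this.fderiv_eq, fderiv_fun_add (hH.differentiableAt hm) (hG.differentiableAt hm)]
  rfl

lemma wpd_iter_add {n : ℕ} (k : Fin n) (a : ℕ) : ∀ {H G F : (Fin n → ℂ) → ℂ},
    DifferentiableOn ℂ H (ball 0 1) →
    DifferentiableOn ℂ G (ball 0 1) → (∀ w ∈ ball (0 : Fin n → ℂ) 1, F w = H w + G w) →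
    ∀ w ∈ ball (0 : Fin n → ℂ) 1, (wpd k)^[a] F w = (wpd k)^[a] H w + (wpd k)^[a] G w := by
  induction a with
  | zero => intro H G F _ _ h; simpa using h
  | succ a ih =>
    intro H G F hH hG hF
    simp only [Function.iterate_succ_apply]
    exact ih (wpd_diff k hH) (wpd_diff k hG) (wpd_add k hH hG hF)

noncomputable def DL {n : ℕ} (m : Fin n → ℕ) (l : List (Fin n)) (h : (Fin n → ℂ) → ℂ) :
    (Fin n → ℂ) → ℂ := l.foldr (fun k F => (wpd k)^[m k] F) h

lemma DL_diff {n : ℕ} (m : Fin n → ℕ) (l : List (Fin n)) {h : (Fin n → ℂ) → ℂ}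
    (hh : DifferentiableOn ℂ h (ball 0 1)) : DifferentiableOn ℂ (DL m l h) (ball 0 1) := by
  induction l with
  | nil => exact hh
  | cons k l ih => exact (wpd_iter k (m k) ih).1

lemma DL_add {n : ℕ} (m : Fin n → ℕ) (l : List (Fin n)) {H G : (Fin n → ℂ) → ℂ}
    (hH : DifferentiableOn ℂ H (ball 0 1)) (hG : DifferentiableOn ℂ G (ball 0 1)) :
    ∀ w ∈ ball (0 : Fin n → ℂ) 1, DL m l (fun w => H w + G w) w = DL m l H w + DL m l G w := by
  induction l with
  | nil => intro w _; rfl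
  | cons k l ih => exact wpd_iter_add k (m k) (DL_diff m l hH) (DL_diff m l hG) ih

lemma DL_zero {n : ℕ} (m : Fin n → ℕ) (l : List (Fin n)) (h : (Fin n → ℂ) → ℂ)
    (h0 : ∀ k ∈ l, m k = 0) : DL m l h = h := by
  induction l with
  | nil => rfl
  | cons k l ih =>
    have h1 := ih (fun j hj => h0 j (List.mem_cons_of_mem _ hj))
    have h2 := h0 k List.mem_cons_self
    change (wpd k)^[m k] (DL m l h) = h
    rw [h2, h1]; rfl

lemma DL_bound {n : ℕ} (m : Fin n → ℕ) {F : (Fin n → ℂ) → ℂ}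
    (hF : DifferentiableOn ℂ F (ball 0 1))
    (hre : ∀ w ∈ ball (0 : Fin n → ℂ) 1, (F w).re ≤ 1) (l : List (Fin n)) (hl : l.Nodup)
    (hne : ∃ k ∈ l, m k ≠ 0) :
    ∀ w ∈ ball (0 : Fin n → ℂ) 1, ‖DL m l F w‖ ≤
      (l.map fun k => ((m k).factorial * Cb (m k) ‖w k‖ : ℝ)).prod * (2 * (1 - (F w).re)) := by
  induction l with
  | nil => simp at hne
  | cons k l ih =>
    intro w hw
    have hkl : k ∉ l := (List.nodup_cons.1 hl).1
    have hl' := (List.nodup_cons.1 hl).2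
    change ‖(wpd k)^[m k] (DL m l F) w‖ ≤ _
    rw [List.map_cons, List.prod_cons]
    by_cases hk : m k = 0
    · have : ∃ k ∈ l, m k ≠ 0 := by
        obtain ⟨j, hj, hj0⟩ := hne
        rcases List.mem_cons.1 hj with rfl | h
        · exact absurd hk hj0
        · exact ⟨j, h, hj0⟩
      have := ih hl' this w hw
      simpa [hk, Cb] using this
    have hwk : ‖w k‖ < 1 := (norm_le_pi_norm w k).trans_lt (by simpa using hw)
    have hslice : ∀ {G : (Fin n → ℂ) → ℂ}, DifferentiableOn ℂ G (ball 0 1) →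
        DifferentiableOn ℂ (fun s => G (Function.update w k s)) (ball 0 1) :=
      fun hG t ht => (wpd_update k hG hw ht).differentiableAt.differentiableWithinAt
    have heq := (wpd_iter k (m k) (DL_diff m l hF)).2 w hw (w k) (by simpa using hwk)
    rw [Function.update_eq_self] at heq
    rw [heq]
    by_cases hz : ∃ k ∈ l, m k ≠ 0
    · have ih' := ih hl' hz
      set A := (l.map fun k => ((m k).factorial * Cb (m k) ‖w k‖ : ℝ)).prod with hA
      have := lemA hwk (m k) hk (fun s => DL m l F (Function.update w k s))
        (fun s => ((A * 2 : ℝ) : ℂ) * (1 - F (Function.update w k s))) (hslice (DL_diff m l hF))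
        (((hslice hF).const_sub 1).const_mul _)
        (by
          intro ζ hζ
          refine (ih' _ (update_mem hw k hζ)).trans_eq ?_
          rw [re_ofReal_mul, mul_assoc]
          congr 1
          rw [hA]
          congr 1
          apply List.map_congr_left
          intro j hj
          have : j ≠ k := by rintro rfl; exact hkl hj
          simp [this])
      refine this.trans_eq ?_
      rw [re_ofReal_mul, Function.update_eq_self]
      simp
      ring
    · push Not at hz
      rw [DL_zero m l F hz]
      have hone : (l.map fun k => ((m k).factorial * Cb (m k) ‖w k‖ : ℝ)).prod = 1 := by
        apply List.prod_eq_one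
        intro x hx
        obtain ⟨j, hj, rfl⟩ := List.mem_map.1 hx
        simp [hz j hj, Cb]
      rw [hone, mul_one]
      have := lemB hwk (m k) hk _ (hslice hF) (fun ζ hζ => hre _ (update_mem hw k hζ))
      simpa using this

lemma Cb_mono (b : ℕ) {r s : ℝ} (hr : 0 ≤ r) (hrs : r ≤ s) (hs : s < 1) : Cb b r ≤ Cb b s := by
  have h1 : 0 < 1 - s ^ 2 := by nlinarith
  have h2 : 1 - s ^ 2 ≤ 1 - r ^ 2 := by nlinarith
  have h3 : 0 ≤ 1 + s := by linarith
  unfold Cb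
  gcongr

lemma Cb_nonneg (b : ℕ) {r : ℝ} (hr : 0 ≤ r) (hs : r < 1) : 0 ≤ Cb b r := by
  have h1 : 0 < 1 - r ^ 2 := by nlinarith
  unfold Cb
  positivity

end Helpers

theorem stmt11 (n : ℕ) (hn : 1 ≤ n)
    (f h g : (Fin n → ℂ) → ℂ)
    (hh : DifferentiableOn ℂ h (Metric.ball 0 1))
    (hg : DifferentiableOn ℂ g (Metric.ball 0 1))
    (hg0 : g 0 = 0)
    (hfd : ∀ z ∈ Metric.ball (0 : Fin n → ℂ) 1, f z = h z + (starRingEnd ℂ) (g z))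
    (hre : ∀ z ∈ Metric.ball (0 : Fin n → ℂ) 1, (f z).re ≤ 1)
    (z : Fin n → ℂ) (hz : z ∈ Metric.ball (0 : Fin n → ℂ) 1)
    (m : Fin n → ℕ) (hm : m ≠ 0) :
    -- `∂^{|m|} f/∂z^m = D^m h` and `conj (∂^{|m|} f/∂z̄^m) = D^m g`
    ‖wpdMulti m h z + wpdMulti m g z‖ ≤
      2 * (∏ j, ((m j).factorial : ℝ)) * (1 - (f z).re) *
        (1 + ‖z‖) ^ ((∑ j, m j) - (Finset.univ.filter fun j => m j ≠ 0).card) /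
        (1 - ‖z‖ ^ 2) ^ (∑ j, m j) := by
  have hF : DifferentiableOn ℂ (fun w => h w + g w) (Metric.ball 0 1) := hh.add hg
  have hFre : ∀ w ∈ Metric.ball (0 : Fin n → ℂ) 1, (h w + g w).re = (f w).re := by
    intro w hw
    rw [hfd w hw]; simp
  have hDL : ∀ h : (Fin n → ℂ) → ℂ, wpdMulti m h = DL m (List.finRange n) h := by
    intro h
    rw [wpdMulti, Fin.foldr_eq_foldr_finRange, DL]
  rw [hDL, hDL, ← DL_add m _ hh hg z hz]
  have hb := DL_bound m hF (fun w hw => (hFre w hw).le.trans (hre w hw)) (List.finRange n)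
    (List.nodup_finRange n) (by
      obtain ⟨k, hk⟩ := Function.ne_iff.1 hm
      exact ⟨k, List.mem_finRange k, hk⟩) z hz
  refine hb.trans ?_
  have hz1 : ‖z‖ < 1 := by simpa using hz
  rw [hFre z hz, ← Fin.prod_univ_def, Finset.prod_mul_distrib]
  have hcount : (∑ j, m j) - (Finset.univ.filter fun j => m j ≠ 0).card = ∑ j, (m j - 1) := by
    have : (∑ j, m j) = ∑ j, (m j - 1) + (Finset.univ.filter fun j => m j ≠ 0).card := by
      rw [Finset.card_filter, ← Finset.sum_add_distrib]
      apply Finset.sum_congr rfl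
      intro j _
      split_ifs <;> omega
    omega
  have hprod : ∏ j, Cb (m j) ‖z j‖ ≤
      (1 + ‖z‖) ^ (∑ j, (m j - 1)) / (1 - ‖z‖ ^ 2) ^ (∑ j, m j) := by
    rw [← Finset.prod_pow_eq_pow_sum, ← Finset.prod_pow_eq_pow_sum, ← Finset.prod_div_distrib]
    apply Finset.prod_le_prod
    · intro j _
      exact Cb_nonneg _ (norm_nonneg _) ((norm_le_pi_norm z j).trans_lt hz1)
    · intro j _
      exact Cb_mono _ (norm_nonneg _) (norm_le_pi_norm z j) hz1
  have hnn : 0 ≤ 2 * (1 - (f z).re) := by linarith [hre z hz]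
  rw [hcount]
  calc _ ≤ ((∏ j, ((m j).factorial : ℝ)) *
        ((1 + ‖z‖) ^ (∑ j, (m j - 1)) / (1 - ‖z‖ ^ 2) ^ (∑ j, m j))) * (2 * (1 - (f z).re)) := by
        gcongr
    _ = _ := by ring
end

section
/- There is an absolute constant C₂ > 0 such that for every p ∈ [1,∞] and every integer n ≥ 2 the following holds: the Bohr radius ℛ*_P(𝔹_{ℓ_pⁿ}) — defined as the largest ρ ≥ 0 such that for every pluriharmonic f(z) = Σ_α a_α z^α + Σ_{|α|≥1} conj(b_α) conj(z)^α on 𝔹_{ℓ_pⁿ} with sup |f| ≤ 1 one has Σ_{k=1}^{∞} Σ_{|α|=k} (|a_α| + |b_α|) |z^α| ≤ 1 whenever ‖z‖_p < ρ — satisfies ℛ*_P(𝔹_{ℓ_pⁿ}) ≤ C₂ (log n / n)^{1 − 1/min{p,2}}. -/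
open scoped BigOperators ENNReal

/-- `ρ ≥ 0` witnesses the Bohr phenomenon on the `ℓ_p` unit ball of `ℂ^n`:
for every pluriharmonic `f = h + conj g` (with monomial expansions `a`, `b`,
`b 0 = 0`) bounded by `1` in modulus, the Bohr sum over multi-indices with
`|α| ≥ 1` is at most `1` whenever `‖z‖_p < ρ`
(every finite partial sum of the nonnegative-term Bohr sum is at most `1`). -/
def IsBohrBound (n : ℕ) (p : ℝ≥0∞) (ρ : ℝ) : Prop :=
  0 ≤ ρ ∧ ∀ f h g : (Fin n → ℂ) → ℂ, ∀ a b : (Fin n → ℕ) → ℂ,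
    b 0 = 0 →
    DifferentiableOn ℂ h {z | pnormE p z < 1} →
    DifferentiableOn ℂ g {z | pnormE p z < 1} →
    g 0 = 0 →
    (∀ z : Fin n → ℂ, pnormE p z < 1 → f z = h z + (starRingEnd ℂ) (g z)) →
    (∀ z : Fin n → ℂ, pnormE p z < 1 →
      HasSum (fun α : Fin n → ℕ => a α * ∏ k, z k ^ α k) (h z)) →
    (∀ z : Fin n → ℂ, pnormE p z < 1 →
      HasSum (fun α : Fin n → ℕ => b α * ∏ k, z k ^ α k) (g z)) →
    (∀ z : Fin n → ℂ, pnormE p z < 1 → ‖f z‖ ≤ 1) →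
    ∀ z : Fin n → ℂ, pnormE p z < ρ →
      ∀ s : Finset (Fin n → ℕ), 0 ∉ s →
        ∑ α ∈ s, (‖a α‖ + ‖b α‖) * ‖∏ k, z k ^ α k‖ ≤ 1

/-- The Bohr radius `ℛ*_P(𝔹_{ℓ_pⁿ})`: the largest `ρ` with the Bohr property. -/
noncomputable def bohrRadiusStar (n : ℕ) (p : ℝ≥0∞) : ℝ :=
  sSup {ρ : ℝ | IsBohrBound n p ρ}

theorem signs_real {I Y : Type*} [Fintype I] [DecidableEq I] (N : Finset Y) (c : Y → I → ℝ)
    (hc : ∀ y ∈ N, ∑ i, c y i ^ 2 ≤ 1) :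
    ∃ ε : I → ℝ, (∀ i, |ε i| = 1) ∧ ∀ y ∈ N, |∑ i, ε i * c y i| ≤ Real.log (2 * N.card) + 1 / 2 := by
  set P : Finset (I → ℝ) := Fintype.piFinset (fun _ : I => ({1, -1} : Finset ℝ)) with hP
  have hcardP : P.card = 2 ^ Fintype.card I := by
    rw [hP, Fintype.card_piFinset]
    have : ({1, -1} : Finset ℝ).card = 2 := Finset.card_pair (by norm_num)
    simp [this]
  have hne : P.Nonempty := by
    rw [← Finset.card_pos, hcardP]; positivity
  have key : ∀ d : I → ℝ, ∑ i, d i ^ 2 ≤ 1 →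
      ∑ ε ∈ P, Real.exp (∑ i, ε i * d i) ≤ ∑ ε ∈ P, Real.exp (1 / 2) := by
    intro d hd
    have h1 : ∑ ε ∈ P, Real.exp (∑ i, ε i * d i) = ∏ i, ∑ e ∈ ({1, -1} : Finset ℝ), Real.exp (e * d i) := by
      rw [Finset.prod_univ_sum]
      refine Finset.sum_congr rfl fun ε _ => ?_
      rw [Real.exp_sum]
    have h2 : ∀ i, ∑ e ∈ ({1, -1} : Finset ℝ), Real.exp (e * d i) = 2 * Real.cosh (d i) := by
      intro i
      rw [Finset.sum_pair (by norm_num), Real.cosh_eq]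
      simp; ring
    rw [h1]
    simp only [h2]
    calc ∏ i, 2 * Real.cosh (d i) ≤ ∏ i, 2 * Real.exp (d i ^ 2 / 2) := by
          refine Finset.prod_le_prod (fun i _ => ?_) (fun i _ => ?_)
          · have := Real.cosh_pos (d i); positivity
          · have := Real.cosh_le_exp_half_sq (d i); linarith
      _ = 2 ^ Fintype.card I * Real.exp ((∑ i, d i ^ 2) / 2) := by
          rw [Finset.prod_mul_distrib, ← Real.exp_sum, Finset.sum_div]; simp
      _ ≤ 2 ^ Fintype.card I * Real.exp (1 / 2) := by gcongr
      _ = _ := by rw [Finset.sum_const, hcardP]; simp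
  have tot : ∑ ε ∈ P, ∑ y ∈ N, (Real.exp (∑ i, ε i * c y i) + Real.exp (∑ i, ε i * (-c y i)))
      ≤ ∑ ε ∈ P, (2 * N.card * Real.exp (1 / 2)) := by
    rw [Finset.sum_comm]
    calc _ ≤ ∑ y ∈ N, (∑ ε ∈ P, Real.exp (1 / 2) + ∑ ε ∈ P, Real.exp (1 / 2)) := by
          refine Finset.sum_le_sum fun y hy => ?_
          rw [Finset.sum_add_distrib]
          exact add_le_add (key _ (hc y hy)) (key (fun i => - c y i) (by simpa using hc y hy))
      _ = _ := by simp; ring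
  obtain ⟨ε, hε, hle⟩ := Finset.exists_le_of_sum_le hne tot
  refine ⟨ε, fun i => ?_, fun y hy => ?_⟩
  · have := (Fintype.mem_piFinset.1 hε) i
    simp at this
    rcases this with h | h <;> simp [h]
  · have hNpos : 0 < (N.card : ℝ) := by exact_mod_cast Finset.card_pos.2 ⟨y, hy⟩
    have h1 : Real.exp (∑ i, ε i * c y i) + Real.exp (∑ i, ε i * (-c y i)) ≤ 2 * N.card * Real.exp (1 / 2) := by
      refine le_trans ?_ hle
      exact Finset.single_le_sum (f := fun y => Real.exp (∑ i, ε i * c y i) + Real.exp (∑ i, ε i * (-c y i)))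
        (fun z _ => by positivity) hy
    have h2 : 2 * N.card * Real.exp (1 / 2) = Real.exp (Real.log (2 * N.card) + 1 / 2) := by
      rw [Real.exp_add, Real.exp_log (by positivity)]
    rw [h2] at h1
    have e1 := Real.exp_pos (∑ i, ε i * c y i)
    have e2 := Real.exp_pos (∑ i, ε i * (-c y i))
    have a1 := Real.exp_le_exp.1 (show Real.exp (∑ i, ε i * c y i) ≤ _ by linarith)
    have a2 := Real.exp_le_exp.1 (show Real.exp (∑ i, ε i * (-c y i)) ≤ _ by linarith)
    simp only [mul_neg, Finset.sum_neg_distrib] at a2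
    rw [abs_le]; constructor <;> linarith

theorem signs_complex {I Y : Type*} [Fintype I] [DecidableEq I] (N : Finset Y) (c : Y → I → ℂ)
    (hc : ∀ y ∈ N, ∑ i, ‖c y i‖ ^ 2 ≤ 1) :
    ∃ ε : I → ℝ, (∀ i, |ε i| = 1) ∧ ∀ y ∈ N, ‖∑ i, (ε i : ℂ) * c y i‖ ≤ 2 * Real.log (4 * N.card) + 1 := by
  obtain ⟨ε, h1, h2⟩ := signs_real (N ×ˢ (Finset.univ : Finset Bool))
    (fun y i => if y.2 then (c y.1 i).re else (c y.1 i).im) (by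
      rintro ⟨y, b⟩ hy
      have hy' : y ∈ N := (Finset.mem_product.1 hy).1
      refine le_trans (Finset.sum_le_sum fun i _ => ?_) (hc y hy')
      have := Complex.sq_norm (c y i)
      rw [Complex.normSq_apply] at this
      cases b <;> simp <;> nlinarith [sq_nonneg (c y i).re, sq_nonneg (c y i).im])
  refine ⟨ε, h1, fun y hy => ?_⟩
  have a := h2 (y, true) (by simp [hy])
  have b := h2 (y, false) (by simp [hy])
  simp only [Finset.card_product, Finset.card_univ, Fintype.card_bool, Nat.cast_mul, Nat.cast_ofNat] at a b
  have e : (2 : ℝ) * (N.card * 2) = 4 * N.card := by ring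
  rw [e] at a b
  refine (Complex.norm_le_abs_re_add_abs_im _).trans ?_
  simp at a b ⊢
  linarith

theorem round_real (M : ℕ) (hM : 0 < M) (u : ℝ) (hu : |u| ≤ 1) :
    ∃ a ∈ Finset.Icc (-(M : ℤ)) M, |(a : ℝ) / M| ≤ |u| ∧ |u - a / M| ≤ 1 / M := by
  have hM' : (0 : ℝ) < M := by exact_mod_cast hM
  have main : ∀ v : ℝ, 0 ≤ v → v ≤ 1 → ∃ a : ℤ, 0 ≤ a ∧ a ≤ M ∧ (a : ℝ) / M ≤ v ∧ v - a / M ≤ 1 / M := by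
    intro v h0 h1
    have f1 := Int.floor_le (v * M)
    have f2 := Int.lt_floor_add_one (v * M)
    refine ⟨⌊v * M⌋, by positivity, ?_, ?_, ?_⟩
    · have : (⌊v * M⌋ : ℝ) ≤ M := by nlinarith
      exact_mod_cast this
    · rw [div_le_iff₀ hM']; exact f1
    · rw [sub_le_iff_le_add, ← add_div, le_div_iff₀ hM']; linarith
  rcases le_total 0 u with h | h
  · rw [abs_of_nonneg h] at hu ⊢
    obtain ⟨a, h0, h1, h2, h3⟩ := main u h hu
    have : (0 : ℝ) ≤ a := by exact_mod_cast h0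
    refine ⟨a, by simp; omega, ?_, ?_⟩
    · rwa [abs_of_nonneg (by positivity)]
    · rwa [abs_of_nonneg (by linarith)]
  · rw [abs_of_nonpos h] at hu ⊢
    obtain ⟨a, h0, h1, h2, h3⟩ := main (-u) (by linarith) hu
    have : (0 : ℝ) ≤ a := by exact_mod_cast h0
    refine ⟨-a, by simp; omega, ?_, ?_⟩
    · push_cast; rw [neg_div, abs_neg, abs_of_nonneg (by positivity)]; exact h2
    · push_cast; rw [neg_div, sub_neg_eq_add, abs_of_nonpos (by linarith)]; linarith

theorem grid (M : ℕ) (hM : 0 < M) : ∃ G : Finset ℂ, G.card ≤ (2 * M + 1) ^ 2 ∧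
    ∀ w : ℂ, ‖w‖ ≤ 1 → ∃ g ∈ G, ‖g‖ ≤ ‖w‖ ∧ ‖w - g‖ ≤ 2 / M := by
  classical
  refine ⟨((Finset.Icc (-(M : ℤ)) M) ×ˢ (Finset.Icc (-(M : ℤ)) M)).image
    (fun q => (⟨(q.1 : ℝ) / M, (q.2 : ℝ) / M⟩ : ℂ)), ?_, ?_⟩
  · refine Finset.card_image_le.trans ?_
    rw [Finset.card_product, Int.card_Icc]
    have : ((M : ℤ) + 1 - -(M : ℤ)).toNat = 2 * M + 1 := by omega
    rw [this, sq]
  · intro w hw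
    obtain ⟨a, ha, ha1, ha2⟩ := round_real M hM w.re ((Complex.abs_re_le_norm w).trans hw)
    obtain ⟨b, hb, hb1, hb2⟩ := round_real M hM w.im ((Complex.abs_im_le_norm w).trans hw)
    refine ⟨_, Finset.mem_image_of_mem _ (Finset.mem_product.2 ⟨ha, hb⟩ : (a, b) ∈ _), ?_, ?_⟩
    · rw [← sq_le_sq₀ (norm_nonneg _) (norm_nonneg _), Complex.sq_norm, Complex.sq_norm,
        Complex.normSq_apply, Complex.normSq_apply]
      have h1 := sq_le_sq.2 ha1
      have h2 := sq_le_sq.2 hb1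
      simp only
      nlinarith
    · refine (Complex.norm_le_abs_re_add_abs_im _).trans ?_
      simp only [Complex.sub_re, Complex.sub_im]
      have : (2 : ℝ) / M = 1 / M + 1 / M := by ring
      linarith

theorem prod_lip {J : Type*} (s : Finset J) (x y : J → ℂ) (hx : ∀ j, ‖x j‖ ≤ 1) (hy : ∀ j, ‖y j‖ ≤ 1) :
    ‖∏ j ∈ s, x j - ∏ j ∈ s, y j‖ ≤ ∑ j ∈ s, ‖x j - y j‖ := by
  classical
  induction s using Finset.induction_on with
  | empty => simp
  | insert a s ha ih =>
    rw [Finset.prod_insert ha, Finset.prod_insert ha, Finset.sum_insert ha]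
    have e : x a * ∏ j ∈ s, x j - y a * ∏ j ∈ s, y j
      = (x a - y a) * ∏ j ∈ s, x j + y a * (∏ j ∈ s, x j - ∏ j ∈ s, y j) := by ring
    rw [e]
    refine (norm_add_le _ _).trans (add_le_add ?_ ?_)
    · rw [norm_mul]
      refine mul_le_of_le_one_right (norm_nonneg _) ?_
      rw [norm_prod]
      exact Finset.prod_le_one (fun _ _ => norm_nonneg _) (fun j _ => hx j)
    · rw [norm_mul]
      exact (mul_le_of_le_one_left (norm_nonneg _) (hy a)).trans ih

theorem tensor (m k : ℕ) (hm : 0 < m) (hk : 0 < k) :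
    ∃ ε : (Fin m → Fin k) → ℝ, (∀ i, |ε i| = 1) ∧
      ∀ x : Fin m → Fin k → ℂ, (∀ j, ∑ i, ‖x j i‖ ^ 2 ≤ 1) →
        ‖∑ i : Fin m → Fin k, (ε i : ℂ) * ∏ j, x j (i j)‖ ≤ 34 * (m : ℝ) ^ 2 * k ^ 2 := by
  classical
  set M : ℕ := 2 * m * k ^ m with hM
  have hMpos : 0 < M := by positivity
  obtain ⟨G, hG, hG2⟩ := grid M hMpos
  set N : Finset (Fin m → Fin k → ℂ) :=
    (Fintype.piFinset fun _ : Fin m => Fintype.piFinset fun _ : Fin k => G).filter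
      (fun x => ∀ j, ∑ i, ‖x j i‖ ^ 2 ≤ 1) with hN
  have hNcard : N.card ≤ (2 * M + 1) ^ (2 * (m * k)) := by
    refine (Finset.card_filter_le _ _).trans ?_
    simp only [Fintype.card_piFinset, Finset.prod_const, Finset.card_univ, Fintype.card_fin]
    rw [← pow_mul, pow_mul (2 * M + 1), mul_comm k m]
    exact Nat.pow_le_pow_left hG _
  obtain ⟨ε, hε, hT⟩ := signs_complex N (fun x (i : Fin m → Fin k) => ∏ j, x j (i j)) (by
    intro y hy
    have hy2 := (Finset.mem_filter.1 hy).2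
    have : ∑ i : Fin m → Fin k, ‖∏ j, y j (i j)‖ ^ 2 = ∏ j, ∑ i, ‖y j i‖ ^ 2 := by
      rw [Finset.prod_univ_sum]
      simp [Finset.prod_pow]
    rw [this]
    exact Finset.prod_le_one (fun _ _ => by positivity) (fun j _ => hy2 j))
  refine ⟨ε, hε, fun x hx => ?_⟩
  have hx1 : ∀ j i, ‖x j i‖ ≤ 1 := by
    intro j i
    have h := Finset.single_le_sum (f := fun i => ‖x j i‖ ^ 2) (fun i _ => by positivity) (Finset.mem_univ i)
    have h' := h.trans (hx j)
    nlinarith [norm_nonneg (x j i)]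
  choose y hyG hyle hyd using fun j i => hG2 (x j i) (hx1 j i)
  have hyN : y ∈ N := by
    refine Finset.mem_filter.2 ⟨?_, fun j => ?_⟩
    · simp only [Fintype.mem_piFinset]; exact hyG
    · refine le_trans (Finset.sum_le_sum fun i _ => ?_) (hx j)
      gcongr; exact hyle j i
  have h1 := hT y hyN
  have hMr : (M : ℝ) = 2 * m * k ^ m := by rw [hM]; push_cast; ring
  have hm' : (1 : ℝ) ≤ m := by exact_mod_cast hm
  have hk' : (1 : ℝ) ≤ k := by exact_mod_cast hk
  have h2 : ‖∑ i : Fin m → Fin k, (ε i : ℂ) * ∏ j, x j (i j) - ∑ i : Fin m → Fin k, (ε i : ℂ) * ∏ j, y j (i j)‖ ≤ 1 := by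
    rw [← Finset.sum_sub_distrib]
    refine (norm_sum_le _ _).trans ?_
    calc _ ≤ ∑ i : Fin m → Fin k, (m * (2 / M) : ℝ) := by
          refine Finset.sum_le_sum fun i _ => ?_
          rw [← mul_sub, norm_mul, Complex.norm_real, Real.norm_eq_abs, hε, one_mul]
          refine (prod_lip _ _ _ (fun j => hx1 j _) (fun j => (hyle j _).trans (hx1 j _))).trans ?_
          refine (Finset.sum_le_sum fun j _ => hyd j (i j)).trans ?_
          simp
      _ = 1 := by
          simp only [Finset.sum_const, Finset.card_univ, Fintype.card_fun, Fintype.card_fin, nsmul_eq_mul]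
          rw [hMr]; push_cast
          field_simp
  have h3 : ‖∑ i : Fin m → Fin k, (ε i : ℂ) * ∏ j, x j (i j)‖ ≤ 2 * Real.log (4 * N.card) + 2 := by
    have := norm_sub_norm_le (∑ i : Fin m → Fin k, (ε i : ℂ) * ∏ j, x j (i j)) (∑ i : Fin m → Fin k, (ε i : ℂ) * ∏ j, y j (i j))
    linarith
  refine h3.trans ?_
  have hNpos : 0 < (N.card : ℝ) := by exact_mod_cast Finset.card_pos.2 ⟨y, hyN⟩
  have hNc : (N.card : ℝ) ≤ (2 * M + 1) ^ (2 * (m * k)) := by exact_mod_cast hNcard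
  have hkm : (1 : ℝ) ≤ k ^ m := one_le_pow₀ hk'
  have l1 : Real.log (4 * N.card) ≤ Real.log 4 + (2 * (m * k)) * Real.log (2 * M + 1) := by
    calc _ ≤ Real.log (4 * (2 * M + 1) ^ (2 * (m * k))) := Real.log_le_log (by positivity) (by linarith)
      _ = _ := by
        rw [Real.log_mul (by norm_num) (by positivity), Real.log_pow]; push_cast; ring
  have l2 : Real.log (2 * M + 1) ≤ 6 * (m * k) := by
    calc _ ≤ Real.log (5 * m * k ^ m) := by
          refine Real.log_le_log (by positivity) ?_
          rw [hMr]; nlinarith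
      _ = Real.log 5 + Real.log m + m * Real.log k := by
        rw [Real.log_mul (by positivity) (by positivity), Real.log_mul (by norm_num) (by positivity), Real.log_pow]
      _ ≤ 4 + (m - 1) + m * (k - 1) := by
        have a1 := Real.log_le_sub_one_of_pos (show (0 : ℝ) < 5 by norm_num)
        have a2 := Real.log_le_sub_one_of_pos (show (0 : ℝ) < m by linarith)
        have a3 := Real.log_le_sub_one_of_pos (show (0 : ℝ) < k by linarith)
        have := mul_le_mul_of_nonneg_left a3 (show (0 : ℝ) ≤ m by linarith)
        linarith
      _ ≤ _ := by nlinarith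
  have l3 := Real.log_le_sub_one_of_pos (show (0 : ℝ) < 4 by norm_num)
  have hmk : 1 ≤ (m : ℝ) * k := by nlinarith
  have l4 := mul_le_mul_of_nonneg_left l2 (show 0 ≤ 2 * ((m : ℝ) * k) by positivity)
  have : 34 * (m : ℝ) ^ 2 * k ^ 2 = 34 * ((m * k) * (m * k)) := by ring
  rw [this]
  nlinarith

theorem tensor_scaled (m k : ℕ) (hm : 0 < m) (hk : 0 < k) :
    ∃ ε : (Fin m → Fin k) → ℝ, (∀ i, |ε i| = 1) ∧
      ∀ x : Fin m → Fin k → ℂ,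
        ‖∑ i : Fin m → Fin k, (ε i : ℂ) * ∏ j, x j (i j)‖ ≤
          34 * (m : ℝ) ^ 2 * k ^ 2 * ∏ j, Real.sqrt (∑ i, ‖x j i‖ ^ 2) := by
  obtain ⟨ε, hε, hT⟩ := tensor m k hm hk
  refine ⟨ε, hε, fun x => ?_⟩
  set r : Fin m → ℝ := fun j => Real.sqrt (∑ i, ‖x j i‖ ^ 2) with hr
  have hr0 : ∀ j, 0 ≤ r j := fun j => Real.sqrt_nonneg _
  have hrsq : ∀ j, r j ^ 2 = ∑ i, ‖x j i‖ ^ 2 := fun j => Real.sq_sqrt (by positivity)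
  by_cases h : ∃ j, r j = 0
  · obtain ⟨j, hj⟩ := h
    have hz : ∀ i, x j i = 0 := by
      intro i
      have h1 := hrsq j
      rw [hj] at h1
      have h2 : ∑ i, ‖x j i‖ ^ 2 = 0 := by rw [← h1]; norm_num
      rw [Finset.sum_eq_zero_iff_of_nonneg (fun _ _ => by positivity)] at h2
      simpa using h2 i (Finset.mem_univ i)
    have : ∑ i : Fin m → Fin k, (ε i : ℂ) * ∏ j, x j (i j) = 0 := by
      refine Finset.sum_eq_zero fun i _ => ?_
      rw [Finset.prod_eq_zero (Finset.mem_univ j) (hz (i j)), mul_zero]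
    rw [this, norm_zero]
    have := Finset.prod_nonneg (s := Finset.univ) (fun j _ => hr0 j)
    positivity
  · push Not at h
    have hpos : ∀ j, 0 < r j := fun j => lt_of_le_of_ne (hr0 j) (Ne.symm (h j))
    have hP : 0 < ∏ j, r j := Finset.prod_pos fun j _ => hpos j
    have := hT (fun j i => x j i / (r j : ℂ)) (fun j => by
      have : ∀ i, ‖x j i / (r j : ℂ)‖ ^ 2 = ‖x j i‖ ^ 2 / r j ^ 2 := by
        intro i
        rw [norm_div, div_pow, Complex.norm_real, Real.norm_eq_abs, sq_abs]
      simp only [this]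
      rw [← Finset.sum_div, ← hrsq]
      exact (div_self (pow_pos (hpos j) 2).ne').le)
    have e : ∑ i : Fin m → Fin k, (ε i : ℂ) * ∏ j, x j (i j) / (r j : ℂ)
        = (∑ i : Fin m → Fin k, (ε i : ℂ) * ∏ j, x j (i j)) / ((∏ j, r j : ℝ) : ℂ) := by
      rw [Finset.sum_div]
      refine Finset.sum_congr rfl fun i _ => ?_
      rw [Finset.prod_div_distrib]; push_cast; ring
    rw [e, norm_div, Complex.norm_real, Real.norm_eq_abs, abs_of_pos hP, div_le_iff₀ hP] at this
    exact this

theorem l2_le_lq {ι : Type*} [Fintype ι] (a : ι → ℝ) (ha : ∀ i, 0 ≤ a i) (q : ℝ) (hq1 : 1 ≤ q) (hq2 : q ≤ 2) :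
    Real.sqrt (∑ i, a i ^ 2) ≤ (∑ i, a i ^ q) ^ (1 / q) := by
  have hq0 : 0 < q := by linarith
  set W := ∑ i, a i ^ q with hW
  have hW0 : 0 ≤ W := Finset.sum_nonneg fun i _ => Real.rpow_nonneg (ha i) _
  have hS0 : 0 ≤ W ^ (1 / q) := Real.rpow_nonneg hW0 _
  have hle : ∀ i, a i ≤ W ^ (1 / q) := by
    intro i
    have h1 : a i ^ q ≤ W := Finset.single_le_sum (f := fun i => a i ^ q)
      (fun i _ => Real.rpow_nonneg (ha i) _) (Finset.mem_univ i)
    have h2 := Real.rpow_le_rpow (Real.rpow_nonneg (ha i) _) h1 (show 0 ≤ 1 / q by positivity)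
    rwa [← Real.rpow_mul (ha i), mul_one_div_cancel hq0.ne', Real.rpow_one] at h2
  rw [Real.sqrt_le_left hS0]
  have hterm : ∀ i, a i ^ 2 ≤ a i ^ q * (W ^ (1 / q)) ^ (2 - q) := by
    intro i
    have : a i ^ 2 = a i ^ q * a i ^ (2 - q) := by
      rw [← Real.rpow_add_of_nonneg (ha i) (by linarith) (by linarith)]
      rw [show q + (2 - q) = ((2 : ℕ) : ℝ) by push_cast; ring, Real.rpow_natCast]
    rw [this]
    exact mul_le_mul_of_nonneg_left (Real.rpow_le_rpow (ha i) (hle i) (by linarith)) (Real.rpow_nonneg (ha i) _)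
  calc ∑ i, a i ^ 2 ≤ ∑ i, a i ^ q * (W ^ (1 / q)) ^ (2 - q) := Finset.sum_le_sum fun i _ => hterm i
    _ = W * (W ^ (1 / q)) ^ (2 - q) := by rw [← Finset.sum_mul]
    _ = (W ^ (1 / q)) ^ q * (W ^ (1 / q)) ^ (2 - q) := by
      rw [← Real.rpow_mul hW0 (1 / q) q, one_div_mul_cancel hq0.ne', Real.rpow_one]
    _ = (W ^ (1 / q)) ^ 2 := by
      rw [← Real.rpow_add_of_nonneg hS0 (by linarith) (by linarith)]
      rw [show q + (2 - q) = ((2 : ℕ) : ℝ) by push_cast; ring, Real.rpow_natCast]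

theorem amgm (m : ℕ) (hm : 0 < m) (w : Fin m → ℝ) (hw : ∀ j, 0 ≤ w j) :
    ∏ j, w j ≤ ((∑ j, w j) / m) ^ m := by
  have hm' : (0 : ℝ) < m := by exact_mod_cast hm
  have h := Real.geom_mean_le_arith_mean_weighted Finset.univ (fun _ : Fin m => (1 / m : ℝ)) w
    (fun _ _ => by positivity) (by simp; field_simp) (fun j _ => hw j)
  rw [Real.finsetProd_rpow _ _ (fun j _ => hw j), ← Finset.mul_sum] at h
  have hp : 0 ≤ ∏ j, w j := Finset.prod_nonneg fun j _ => hw j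
  have h2 := pow_le_pow_left₀ (Real.rpow_nonneg hp _) h m
  rw [← Real.rpow_natCast, ← Real.rpow_mul hp, one_div_mul_cancel hm'.ne', Real.rpow_one] at h2
  rwa [one_div_mul_eq_div] at h2

theorem block_bound (m k : ℕ) (hm : 0 < m) (q : ℝ) (hq1 : 1 ≤ q) (hq2 : q ≤ 2)
    (a : Fin m → Fin k → ℝ) (ha : ∀ j i, 0 ≤ a j i) (S : ℝ) (hS : ∑ j, ∑ i, a j i ^ q ≤ S) :
    ∏ j, Real.sqrt (∑ i, a j i ^ 2) ≤ ((S / m) ^ (1 / q)) ^ m := by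
  have hm' : (0 : ℝ) < m := by exact_mod_cast hm
  have hw : ∀ j, 0 ≤ ∑ i, a j i ^ q := fun j => Finset.sum_nonneg fun i _ => Real.rpow_nonneg (ha j i) _
  have hsum : 0 ≤ ∑ j, ∑ i, a j i ^ q := Finset.sum_nonneg fun j _ => hw j
  calc _ ≤ ∏ j, (∑ i, a j i ^ q) ^ (1 / q) :=
        Finset.prod_le_prod (fun _ _ => Real.sqrt_nonneg _) (fun j _ => l2_le_lq _ (ha j) q hq1 hq2)
    _ = (∏ j, ∑ i, a j i ^ q) ^ (1 / q) := Real.finsetProd_rpow _ _ (fun j _ => hw j) _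
    _ ≤ (((∑ j, ∑ i, a j i ^ q) / m) ^ m) ^ (1 / q) := by
        refine Real.rpow_le_rpow (Finset.prod_nonneg fun j _ => hw j) (amgm m hm _ hw) (by positivity)
    _ ≤ ((S / m) ^ m) ^ (1 / q) := by
        refine Real.rpow_le_rpow (by positivity) ?_ (by positivity)
        gcongr
    _ = _ := by
        have : 0 ≤ S / m := div_nonneg (hsum.trans hS) hm'.le
        rw [← Real.rpow_natCast, ← Real.rpow_natCast, ← Real.rpow_mul this, ← Real.rpow_mul this, mul_comm]

theorem pnorm_sum (n : ℕ) (p : ℝ≥0∞) (hp : 1 ≤ p) (z : Fin n → ℂ) (hn : 0 < n) (hz : pnormE p z < 1) :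
    ∑ v, ‖z v‖ ^ (min p 2).toReal ≤ (n : ℝ) ^ (1 - (min p 2).toReal * (p.toReal)⁻¹) := by
  have hn' : (0 : ℝ) < n := by exact_mod_cast hn
  unfold pnormE at hz
  by_cases hinf : p = ∞
  · subst hinf
    simp only [if_true] at hz
    have hle : ∀ v, ‖z v‖ ≤ 1 := fun v => (le_ciSup (f := fun j => ‖z j‖) (Set.finite_range _).bddAbove v).trans hz.le
    simp
    calc ∑ v, ‖z v‖ ^ 2 ≤ ∑ v : Fin n, (1 : ℝ) := Finset.sum_le_sum fun v _ => pow_le_one₀ (norm_nonneg _) (hle v)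
      _ = n := by simp
  · rw [if_neg hinf] at hz
    have hP1 : 1 ≤ p.toReal := by
      have := ENNReal.toReal_mono hinf hp
      simpa using this
    set P := p.toReal with hP
    have hP0 : 0 < P := by linarith
    have hSn : 0 ≤ ∑ v, ‖z v‖ ^ P := Finset.sum_nonneg fun v _ => Real.rpow_nonneg (norm_nonneg _) _
    have hS : ∑ v, ‖z v‖ ^ P ≤ 1 := by
      by_contra hcon
      push Not at hcon
      have := Real.one_lt_rpow hcon (show 0 < 1 / P by positivity)
      linarith
    rcases le_total p 2 with h2 | h2
    · rw [min_eq_left h2, ← hP, mul_inv_cancel₀ hP0.ne', sub_self, Real.rpow_zero]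
      exact hS
    · rw [min_eq_right h2]
      have hP2 : 2 ≤ P := by
        have := ENNReal.toReal_mono hinf h2
        simpa using this
      have key := Real.rpow_sum_le_const_mul_sum_rpow Finset.univ (fun v => ‖z v‖ ^ 2) (show 1 ≤ P / 2 by linarith)
      have e : ∀ v, |‖z v‖ ^ 2| ^ (P / 2) = ‖z v‖ ^ P := by
        intro v
        rw [abs_of_nonneg (by positivity), ← Real.rpow_natCast, ← Real.rpow_mul (norm_nonneg _)]
        congr 1; push_cast; ring
      simp only [e] at key
      simp only [abs_pow, abs_norm, Finset.card_univ, Fintype.card_fin] at key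
      have h3 : (∑ v, ‖z v‖ ^ 2) ^ (P / 2) ≤ (n : ℝ) ^ (P / 2 - 1) := by
        refine key.trans ?_
        exact mul_le_of_le_one_right (by positivity) hS
      have h4 := Real.rpow_le_rpow (by positivity) h3 (show 0 ≤ 2 / P by positivity)
      rw [← Real.rpow_mul (by positivity), ← Real.rpow_mul (by positivity)] at h4
      have e1 : P / 2 * (2 / P) = 1 := by field_simp
      have e2 : (P / 2 - 1) * (2 / P) = 1 - 2 * P⁻¹ := by field_simp
      rw [e1, e2, Real.rpow_one] at h4
      simpa using h4

theorem pnorm_const (n : ℕ) (p : ℝ≥0∞) (hp : 1 ≤ p) (hn : 0 < n) (t : ℝ) (ht : 0 ≤ t) :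
    pnormE p (fun _ : Fin n => (t : ℂ)) = t * (n : ℝ) ^ (p.toReal)⁻¹ := by
  have : Nonempty (Fin n) := ⟨⟨0, hn⟩⟩
  unfold pnormE
  by_cases hinf : p = ∞
  · subst hinf
    simp [abs_of_nonneg ht]
  · rw [if_neg hinf]
    have hP1 : 1 ≤ p.toReal := by
      have := ENNReal.toReal_mono hinf hp
      simpa using this
    have hP0 : 0 < p.toReal := by linarith
    simp only [Complex.norm_real, Real.norm_eq_abs, abs_of_nonneg ht, Finset.sum_const, Finset.card_univ, Fintype.card_fin, nsmul_eq_mul]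
    rw [Real.mul_rpow (by positivity) (by positivity), ← Real.rpow_mul ht, mul_one_div_cancel hP0.ne', Real.rpow_one, one_div, mul_comm]

theorem bohr_test (n m k : ℕ) (hm : 0 < m) (p : ℝ≥0∞) (ρ : ℝ) (hρ : IsBohrBound n p ρ)
    (e : Fin m × Fin k → Fin n) (he : Function.Injective e)
    (ε : (Fin m → Fin k) → ℝ) (hε : ∀ i, |ε i| = 1) (D : ℝ) (hD : 0 < D)
    (hT : ∀ z : Fin n → ℂ, pnormE p z < 1 → ‖∑ i : Fin m → Fin k, (ε i : ℂ) * ∏ j, z (e (j, i j))‖ ≤ D)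
    (t : ℝ) (ht : 0 ≤ t) (htρ : pnormE p (fun _ : Fin n => (t : ℂ)) < ρ) :
    (k * t) ^ m ≤ D := by
  classical
  set A : (Fin m → Fin k) → (Fin n → ℕ) := fun i v => ∑ j, if e (j, i j) = v then 1 else 0 with hA
  have hAinj : Function.Injective A := by
    intro i i' h
    funext j
    have h1 := congrFun h (e (j, i j))
    simp only [hA] at h1
    have h2 : 0 < ∑ j', if e (j', i j') = e (j, i j) then 1 else 0 :=
      lt_of_lt_of_le (by simp) (Finset.single_le_sum (f := fun j' => if e (j', i j') = e (j, i j) then 1 else 0)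
        (fun _ _ => Nat.zero_le _) (Finset.mem_univ j))
    rw [h1] at h2
    obtain ⟨j', -, hj'⟩ := Finset.exists_ne_zero_of_sum_ne_zero h2.ne'
    have h3 : e (j', i' j') = e (j, i j) := by
      by_contra hc
      simp [hc] at hj'
    have h4 := he h3
    simp only [Prod.mk.injEq] at h4
    obtain ⟨rfl, h5⟩ := h4
    exact h5.symm
  have hmon : ∀ (z : Fin n → ℂ) i, ∏ v, z v ^ A i v = ∏ j, z (e (j, i j)) := by
    intro z i
    simp only [hA, ← Finset.prod_pow_eq_pow_sum]
    rw [Finset.prod_comm]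
    refine Finset.prod_congr rfl fun j _ => ?_
    rw [Finset.prod_eq_single (e (j, i j))]
    · simp
    · intro v _ hv; simp [Ne.symm hv]
    · simp
  have hA0 : ∀ i, A i ≠ 0 := by
    intro i h
    have h1 := congrFun h (e (⟨0, hm⟩, i ⟨0, hm⟩))
    simp only [hA, Pi.zero_apply, Finset.sum_eq_zero_iff] at h1
    have := h1 ⟨0, hm⟩ (Finset.mem_univ _)
    simp at this
  set a : (Fin n → ℕ) → ℂ := fun α => ∑ i : Fin m → Fin k, if α = A i then (ε i : ℂ) / D else 0 with ha
  have haA : ∀ i, a (A i) = (ε i : ℂ) / D := by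
    intro i
    simp only [ha]
    rw [Finset.sum_eq_single i]
    · simp
    · intro i' _ hi'
      rw [if_neg]; intro h; exact hi' (hAinj h).symm
    · simp
  set h : (Fin n → ℂ) → ℂ := fun z => ∑ i : Fin m → Fin k, (ε i : ℂ) / D * ∏ j, z (e (j, i j)) with hh
  have hfin := hρ.2 h h 0 a 0 rfl (by
      refine Differentiable.differentiableOn ?_
      simp only [hh]
      fun_prop) (by exact differentiableOn_const 0) rfl (by intro z _; simp) (by
      intro z _
      have : (fun α : Fin n → ℕ => a α * ∏ v, z v ^ α v)
          = fun α => ∑ i : Fin m → Fin k, if α = A i then (ε i : ℂ) / D * ∏ j, z (e (j, i j)) else 0 := by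
        funext α
        simp only [ha, Finset.sum_mul]
        refine Finset.sum_congr rfl fun i _ => ?_
        split_ifs with hc
        · rw [hc, hmon]
        · simp
      rw [this]
      refine hasSum_sum fun i _ => ?_
      exact hasSum_ite_eq _ _) (by intro z _; simp) (by
      intro z hz
      have : h z = (∑ i : Fin m → Fin k, (ε i : ℂ) * ∏ j, z (e (j, i j))) / (D : ℂ) := by
        simp only [hh]
        rw [Finset.sum_div]
        exact Finset.sum_congr rfl fun i _ => by ring
      rw [this, norm_div, Complex.norm_real, Real.norm_eq_abs, abs_of_pos hD, div_le_one hD]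
      exact hT z hz) _ htρ (Finset.univ.image A) (by simp [hA0])
  rw [Finset.sum_image (fun i _ i' _ h => hAinj h)] at hfin
  simp only [haA, hmon, Pi.zero_apply, norm_zero, add_zero, norm_div, Complex.norm_real, Real.norm_eq_abs,
    hε, abs_of_pos hD, norm_pow, abs_of_nonneg ht, Finset.prod_const, Finset.sum_const, Finset.card_univ,
    Fintype.card_fun, Fintype.card_fin, nsmul_eq_mul] at hfin
  rw [mul_pow]
  push_cast at hfin
  have : (k : ℝ) ^ m * (1 / D * t ^ m) = (k : ℝ) ^ m * t ^ m / D := by ring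
  rw [this, div_le_one hD] at hfin
  exact hfin

theorem bohr_main (n : ℕ) (hn : 2 ≤ n) (p : ℝ≥0∞) (hp : 1 ≤ p) (ρ : ℝ) (hρ : IsBohrBound n p ρ)
    (τ : ℝ) (hτ0 : 0 ≤ τ) (hτ : τ < ρ) :
    τ ≤ 6 * (136 * Real.exp 2) * (Real.log n / n) ^ (1 - ((min p 2).toReal)⁻¹) := by
  set q := (min p 2).toReal with hq
  have hmintop : min p 2 ≠ ∞ := ne_top_of_le_ne_top (by simp) (min_le_right p 2)
  have hq1 : 1 ≤ q := by
    have := ENNReal.toReal_mono hmintop (le_min hp (by norm_num : (1 : ℝ≥0∞) ≤ 2))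
    simpa using this
  have hq2 : q ≤ 2 := by
    have := ENNReal.toReal_mono (by simp) (min_le_right p 2)
    simpa using this
  have hq0 : 0 < q := by linarith
  set s := (p.toReal)⁻¹ with hs
  have hn0 : 0 < n := by omega
  have hnr : (2 : ℝ) ≤ n := by exact_mod_cast hn
  have hnpos : (0 : ℝ) < n := by linarith
  have hlog2 : (0.69 : ℝ) < Real.log n := by
    have h1 := Real.log_two_gt_d9
    have h2 := Real.log_le_log (by norm_num) hnr
    linarith
  set m := ⌈Real.log n⌉₊ with hmdef
  have hm : 0 < m := Nat.ceil_pos.2 (by linarith)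
  have hm' : (0 : ℝ) < m := by exact_mod_cast hm
  have hm1 : (1 : ℝ) ≤ m := by exact_mod_cast hm
  have hmlog : Real.log n ≤ m := Nat.le_ceil _
  have hmlt : (m : ℝ) < Real.log n + 1 := Nat.ceil_lt_add_one (by linarith)
  have hm3 : (m : ℝ) ≤ 3 * Real.log n := by linarith
  have hmn : m ≤ n := by
    have := Real.log_le_sub_one_of_pos hnpos
    have h : (m : ℝ) ≤ n := by linarith
    exact_mod_cast h
  set k := n / m with hkdef
  have hk : 0 < k := Nat.div_pos hmn hm
  have hk' : (1 : ℝ) ≤ k := by exact_mod_cast hk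
  have hkpos : (0 : ℝ) < k := by linarith
  have hmk : m * k ≤ n := Nat.mul_div_le n m
  have hkn : (n : ℝ) ≤ 2 * m * k := by
    have h1 : n < m * k + m := by
      have h0 := Nat.div_add_mod n m
      rw [← hkdef] at h0
      have := Nat.mod_lt n hm
      omega
    have h2 : (n : ℝ) < m * k + m := by exact_mod_cast h1
    nlinarith
  obtain ⟨ε, hε, hT⟩ := tensor_scaled m k hm hk
  set e : Fin m × Fin k → Fin n := fun x => Fin.castLE hmk (finProdFinEquiv x) with he
  have heinj : Function.Injective e := (Fin.castLE_injective hmk).comp finProdFinEquiv.injective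
  set S : ℝ := (n : ℝ) ^ (1 - q * s) with hS
  have hSpos : 0 < S := by positivity
  set d : ℝ := (S / m) ^ (1 / q) with hd
  have hdpos : 0 < d := by positivity
  set B : ℝ := 34 * (m : ℝ) ^ 2 * k ^ 2 with hB
  have hBpos : 0 < B := by positivity
  have hbound : ∀ z : Fin n → ℂ, pnormE p z < 1 →
      ‖∑ i : Fin m → Fin k, (ε i : ℂ) * ∏ j, z (e (j, i j))‖ ≤ B * d ^ m := by
    intro z hz
    refine (hT (fun j i => z (e (j, i)))).trans ?_
    refine mul_le_mul_of_nonneg_left ?_ hBpos.le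
    refine block_bound m k hm q hq1 hq2 (fun j i => ‖z (e (j, i))‖) (fun _ _ => norm_nonneg _) S ?_
    refine le_trans ?_ (pnorm_sum n p hp z hn0 hz)
    rw [← Fintype.sum_prod_type' (f := fun j i => ‖z (e (j, i))‖ ^ q)]
    calc ∑ x : Fin m × Fin k, ‖z (e x)‖ ^ q = ∑ v ∈ Finset.univ.map ⟨e, heinj⟩, ‖z v‖ ^ q := by
          rw [Finset.sum_map]; rfl
      _ ≤ _ := Finset.sum_le_sum_of_subset_of_nonneg (Finset.subset_univ _)
          (fun _ _ _ => Real.rpow_nonneg (norm_nonneg _) _)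
  have hns : 0 < (n : ℝ) ^ s := by positivity
  set t : ℝ := τ / (n : ℝ) ^ s with htdef
  have ht : 0 ≤ t := by positivity
  have hts : t * (n : ℝ) ^ s = τ := div_mul_cancel₀ _ hns.ne'
  have h1 := bohr_test n m k hm p ρ hρ e heinj ε hε (B * d ^ m) (by positivity) hbound t ht (by
    rw [pnorm_const n p hp hn0 t ht, hts]; exact hτ)
  have hBK : B ≤ (136 * Real.exp 2) ^ m := by
    have a1 : (k : ℝ) ≤ Real.exp m := by
      have b1 : (k : ℝ) ≤ n := by exact_mod_cast Nat.div_le_self n m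
      have b2 : (n : ℝ) ≤ Real.exp m := by
        rw [← Real.log_le_iff_le_exp hnpos]; exact hmlog
      linarith
    have a2 : (k : ℝ) ^ 2 ≤ Real.exp 2 ^ m := by
      calc (k : ℝ) ^ 2 ≤ Real.exp m ^ 2 := by gcongr
        _ = Real.exp 2 ^ m := by rw [← Real.exp_nat_mul, ← Real.exp_nat_mul]; congr 1; push_cast; ring
    have a3 : (m : ℝ) ^ 2 ≤ 4 ^ m := by
      have : (m : ℝ) ≤ 2 ^ m := by exact_mod_cast Nat.lt_two_pow_self.le
      calc (m : ℝ) ^ 2 ≤ (2 ^ m) ^ 2 := by gcongr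
        _ = 4 ^ m := by rw [← pow_mul, mul_comm, pow_mul]; norm_num
    have a4 : (34 : ℝ) ≤ 34 ^ m := le_self_pow₀ (by norm_num) hm.ne'
    calc B ≤ 34 ^ m * 4 ^ m * Real.exp 2 ^ m := by rw [hB]; gcongr
      _ = _ := by rw [← mul_pow, ← mul_pow]; norm_num
  set K : ℝ := 136 * Real.exp 2 with hK
  have hKpos : 0 < K := by positivity
  have h2 : k * t ≤ K * d := by
    have : (k * t) ^ m ≤ (K * d) ^ m := by
      rw [mul_pow K]
      exact h1.trans (mul_le_mul_of_nonneg_right hBK (by positivity))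
    exact (pow_le_pow_iff_left₀ (by positivity) (by positivity) hm.ne').1 this
  have hdn : d * (n : ℝ) ^ s = (n / m : ℝ) ^ (1 / q) := by
    rw [hd, Real.div_rpow hSpos.le hm'.le, Real.div_rpow hnpos.le hm'.le, hS, ← Real.rpow_mul hnpos.le,
      div_mul_eq_mul_div, ← Real.rpow_add hnpos]
    congr 2
    field_simp
    ring
  have h3 : k * τ ≤ K * (n / m : ℝ) ^ (1 / q) := by
    rw [← hts, ← hdn, ← mul_assoc, ← mul_assoc]
    exact mul_le_mul_of_nonneg_right h2 hns.le
  have hnm : 0 < (n / m : ℝ) := by positivity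
  have h4 : (n / m : ℝ) * τ ≤ 2 * (K * (n / m : ℝ) ^ (1 / q)) := by
    have : (n / m : ℝ) ≤ 2 * k := by rw [div_le_iff₀ hm']; linarith
    have := mul_le_mul_of_nonneg_right this hτ0
    linarith
  have h5 : τ ≤ 2 * K * (m / n : ℝ) ^ (1 - q⁻¹) := by
    have e1 : (m / n : ℝ) ^ (1 - q⁻¹) = (n / m : ℝ) ^ (1 / q) / (n / m : ℝ) := by
      rw [← inv_div (n : ℝ) m, Real.inv_rpow hnm.le, ← Real.rpow_neg hnm.le, neg_sub, one_div, Real.rpow_sub hnm, Real.rpow_one]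
    rw [e1, ← mul_div_assoc, le_div_iff₀ hnm]
    linarith
  have hx0 : 0 ≤ 1 - q⁻¹ := by
    have := inv_le_one_of_one_le₀ hq1
    linarith
  have hx1 : 1 - q⁻¹ ≤ 1 := by
    have : 0 < q⁻¹ := by positivity
    linarith
  have hlpos : 0 < Real.log n / n := div_pos (by linarith) hnpos
  have h6 : (m / n : ℝ) ^ (1 - q⁻¹) ≤ 3 * (Real.log n / n) ^ (1 - q⁻¹) := by
    calc (m / n : ℝ) ^ (1 - q⁻¹) ≤ (3 * (Real.log n / n)) ^ (1 - q⁻¹) := by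
          refine Real.rpow_le_rpow (by positivity) ?_ hx0
          rw [← mul_div_assoc]; gcongr
      _ = 3 ^ (1 - q⁻¹) * (Real.log n / n) ^ (1 - q⁻¹) := Real.mul_rpow (by norm_num) hlpos.le
      _ ≤ _ := by
          refine mul_le_mul_of_nonneg_right ?_ (by positivity)
          calc (3 : ℝ) ^ (1 - q⁻¹) ≤ 3 ^ (1 : ℝ) := Real.rpow_le_rpow_of_exponent_le (by norm_num) hx1
            _ = 3 := Real.rpow_one 3
  calc τ ≤ 2 * K * (m / n : ℝ) ^ (1 - q⁻¹) := h5
    _ ≤ 2 * K * (3 * (Real.log n / n) ^ (1 - q⁻¹)) := by gcongr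
    _ = _ := by ring

theorem stmt14 :
    ∃ C₂ : ℝ, 0 < C₂ ∧ ∀ p : ℝ≥0∞, 1 ≤ p → ∀ n : ℕ, 2 ≤ n →
      bohrRadiusStar n p ≤
        C₂ * (Real.log n / n) ^ (1 - ((min p 2).toReal)⁻¹) := by
  refine ⟨6 * (136 * Real.exp 2), by positivity, fun p hp n hn => ?_⟩
  have h0 : 0 ≤ Real.log n / n := by positivity
  have hR : 0 ≤ 6 * (136 * Real.exp 2) * (Real.log n / n) ^ (1 - ((min p 2).toReal)⁻¹) := by
    have := Real.rpow_nonneg h0 (1 - ((min p 2).toReal)⁻¹)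
    positivity
  refine Real.sSup_le (fun ρ hρ => ?_) hR
  refine le_of_forall_lt_imp_le_of_dense fun τ hτ => ?_
  rcases le_total 0 τ with h | h
  · exact bohr_main n hn p hp ρ hρ τ h hτ
  · exact h.trans hR
end
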